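/- arXiv:2407.14610 — 2 statements merged into one kernel-verified Lean document; each statement's English description precedes it below -/
import Mathlib

section
/- Let r : Ĉ → Ĉ be a nonconstant rational map and let L_r = r⁻¹({w ∈ ℂ : |w| = 1}) be its lemniscate. Then L_r is a lemniscate graph, with vertex set V = {z ∈ L_r : r is not injective on any neighborhood of z} (the critical points of r lying on L_r). -/
open Set Metric Topology Filter Polynomial

noncomputable section

/-- A Jordan curve: a set homeomorphic to the unit circle. -/
def IsJordanCurve {X : Type*} [TopologicalSpace X] (E : Set X) : Prop :=
  Nonempty (E ≃ₜ (Metric.sphere (0 : ℂ) 1 : Set ℂ))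

/-- A simple arc: a set homeomorphic to the open unit interval `(0,1)`. -/
def IsSimpleArc {X : Type*} [TopologicalSpace X] (E : Set X) : Prop :=
  Nonempty (E ≃ₜ (Set.Ioo (0 : ℝ) 1 : Set ℝ))

/-- The connected components of a set. -/
def setComponents {X : Type*} [TopologicalSpace X] (A : Set X) : Set (Set X) :=
  {C | ∃ x ∈ A, C = connectedComponentIn A x}

/-- The edges of the pair `(G, V)`: the connected components of `G \ V`. -/
def graphEdges {X : Type*} [TopologicalSpace X] (G V : Set X) : Set (Set X) :=
  setComponents (G \ V)

/-- The degree of a vertex `v`: the number of edges `e` with `v ∈ closure e \ e`,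
where an edge is counted twice if `closure e \ e = {v}`. -/
def vertexDegree {X : Type*} [TopologicalSpace X] (G V : Set X) (v : X) : ℕ :=
  {e ∈ graphEdges G V | v ∈ closure e \ e}.ncard +
    {e ∈ graphEdges G V | closure e \ e = {v}}.ncard

/-- `G` is a lemniscate graph with (finite) vertex set `V`. -/
structure IsLemniscateGraphWith {X : Type*} [TopologicalSpace X] (G V : Set X) : Prop where
  vertex_subset : V ⊆ G
  vertex_finite : V.Finite
  edges_finite : (graphEdges G V).Finite
  edge_shape : ∀ e ∈ graphEdges G V, IsJordanCurve e ∨ (IsSimpleArc e ∧ closure e \ e ⊆ V)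
  degree_even : ∀ v ∈ V, Even (vertexDegree G V v)
  degree_ge_four : ∀ v ∈ V, 4 ≤ vertexDegree G V v

/-- `G` is a lemniscate graph (for some finite vertex set). -/
def IsLemniscateGraph {X : Type*} [TopologicalSpace X] (G : Set X) : Prop :=
  ∃ V, IsLemniscateGraphWith G V

/-- The faces of `G`: the connected components of the complement of `G`. -/
def graphFaces {X : Type*} [TopologicalSpace X] (G : Set X) : Set (Set X) :=
  setComponents Gᶜ

/-- A 2-coloring of the faces of `G`, recorded by the set `grey` of grey faces:
two distinct faces whose closures share a common edge get different colors. -/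
def IsTwoColoring {X : Type*} [TopologicalSpace X] (G V : Set X) (grey : Set (Set X)) : Prop :=
  grey ⊆ graphFaces G ∧
    ∀ F₁ ∈ graphFaces G, ∀ F₂ ∈ graphFaces G, F₁ ≠ F₂ →
      (∃ e ∈ graphEdges G V, e ⊆ closure F₁ ∧ e ⊆ closure F₂) →
      (F₁ ∈ grey ↔ F₂ ∉ grey)

/-- The distance function of a metric space structure on the Riemann sphere. -/
def mdist (m : MetricSpace (OnePoint ℂ)) : OnePoint ℂ → OnePoint ℂ → ℝ :=
  m.toPseudoMetricSpace.toDist.dist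

/-- The metric space structure `m` induces the standard topology of the Riemann sphere. -/
def InducesSphereTopology (m : MetricSpace (OnePoint ℂ)) : Prop :=
  m.toPseudoMetricSpace.toUniformSpace.toTopologicalSpace =
    (inferInstance : TopologicalSpace (OnePoint ℂ))

/-- `E` and `F` are `ε`-homeomorphic with respect to the metric `m`: there is a
homeomorphism of the sphere carrying `E` to `F` and moving points less than `ε`. -/
def EpsHomeomorphic (m : MetricSpace (OnePoint ℂ)) (ε : ℝ) (E F : Set (OnePoint ℂ)) : Prop :=
  ∃ φ : OnePoint ℂ ≃ₜ OnePoint ℂ, φ '' E = F ∧ ∃ c < ε, ∀ z, mdist m (φ z) z ≤ c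

/-- `r` is a rational map on the Riemann sphere: the continuous extension of `p/q`
for coprime polynomials `p`, `q`, not both constant. -/
def IsRationalMap (r : OnePoint ℂ → OnePoint ℂ) : Prop :=
  Continuous r ∧ ∃ p q : ℂ[X], IsCoprime p q ∧ ¬(p.natDegree = 0 ∧ q.natDegree = 0) ∧
    ∀ z : ℂ, q.eval z ≠ 0 → r (z : OnePoint ℂ) = ((p.eval z / q.eval z : ℂ) : OnePoint ℂ)

/-- The lemniscate of `r` : the preimage of the unit circle. -/
def lemniscate (r : OnePoint ℂ → OnePoint ℂ) : Set (OnePoint ℂ) :=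
  r ⁻¹' ((fun w : ℂ => (w : OnePoint ℂ)) '' {w : ℂ | ‖w‖ = 1})

/-- The copy of a planar set inside the Riemann sphere. -/
def toSphere (s : Set ℂ) : Set (OnePoint ℂ) := (fun z : ℂ => (z : OnePoint ℂ)) '' s

/-! Only the topology of the rational map `r` matters. It is continuous on a compact space, has
finite fibers and is a local homeomorphism off a finite set, and every point `w` of the unit
circle has arbitrarily small neighborhoods `B` with `B \ {w}` connected. As the number of
preimages near a given point is locally constant off the critical values, it is constant on
`B \ {w}`: near each point `x` of the lemniscate every value close to but different from `r x` is
taken exactly `n` times, where `n = 1` if and only if `r` is injective near `x`. So `r` restricts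
to an open finite branched cover `p : G → ℝ / ℤ` of the circle by the lemniscate `G`.

The cover is unrolled along `ℝ → ℝ / ℤ` into `{(x, t) | p x = t}`, with projections `base` to `G`
and `height` to `ℝ`. A connected component of the unrolling off the branch points, a leaf, is
mapped by the height homeomorphically onto an open interval: a locally injective open map from a
connected Hausdorff space to `ℝ` is injective. Each edge of `G` is the base of a leaf, and `ℤ`
acts on the leaves above it by shifts of the height. If a nonzero shift preserves the leaf, the
leaf is a line and the edge is the quotient circle; otherwise finiteness of the fibers bounds the
interval, the edge is an arc, and the ends of the leaf lie over branch points.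

At a branch point `v` over `θ`, the `n` points near `v` in a fiber slightly before `θ` lie on `n`
distinct edges, since two of them on one edge would give a leaf passing through `v`; the same
holds slightly after `θ`. These are the edges that end, respectively begin, at `v`, and the edges
of both kinds are the loops, so the degree of `v` is `2 * n ≥ 4`. -/

section FiberCount

variable {X Y : Type*} [TopologicalSpace X] [TopologicalSpace Y] {f : X → Y} {x : X} {y₀ : Y}
  {n : ℕ}

/-- `f` has local degree `n` at `x`: there are arbitrarily small neighborhoods of `x` in which
every value close to, but different from, `f x` is taken at exactly `n` points. Multiplicities
are not counted, so this matches the analytic notion only if `x` is isolated among the points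
where `f` is not locally injective. -/
def HasLocalDegree (f : X → Y) (x : X) (n : ℕ) : Prop :=
  ∀ W ∈ 𝓝 x, ∃ U ⊆ W, IsOpen U ∧ x ∈ U ∧ ∀ᶠ y in 𝓝[≠] f x, (U ∩ f ⁻¹' {y}).ncard = n

theorem eventually_inter_fiber_subset (hf : IsClosedMap f) {K U : Set X} (hK : IsClosed K)
    (hU : IsOpen U) (h : K ∩ f ⁻¹' {y₀} ⊆ U) : ∀ᶠ y in 𝓝 y₀, K ∩ f ⁻¹' {y} ⊆ U := by
  have hfiber : ∀ x ∈ f ⁻¹' {y₀}, ∀ᶠ x' in 𝓝 x, x' ∈ K → x' ∈ U := by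
    intro x hx
    by_cases hxK : x ∈ K
    · filter_upwards [hU.mem_nhds (h ⟨hxK, hx⟩)] with x' hx' _ using hx'
    · filter_upwards [hK.isOpen_compl.mem_nhds hxK] with x' hx' hx'K using absurd hx'K hx'
  filter_upwards [hf.eventually_nhds_fiber y₀ hfiber] with y hy x hx using hy x hx.2 hx.1

theorem eventually_ncard_inter_fiber_eq_one {U : Set X} (hU : U ∈ 𝓝 x) (hinj : InjOn f U)
    (hopen : 𝓝 (f x) ≤ map f (𝓝 x)) : ∀ᶠ y in 𝓝 (f x), (U ∩ f ⁻¹' {y}).ncard = 1 := by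
  filter_upwards [hopen (image_mem_map hU)] with _ ⟨z, hzU, hz⟩
  subst hz
  exact ncard_eq_one.2 ⟨z, subset_antisymm (fun w hw => hinj hw.1 hzU hw.2)
    (singleton_subset_iff.2 ⟨hzU, rfl⟩)⟩

theorem eventually_ncard_inter_fiber_eq [T2Space X] (hf : IsClosedMap f)
    (hfin : ∀ y, (f ⁻¹' {y}).Finite) {U : Set X} (hU : IsOpen U)
    (hcl : closure U ∩ f ⁻¹' {y₀} ⊆ U)
    (hloc : IsLocalHomeomorphOn f (U ∩ f ⁻¹' {y₀})) :
    ∀ᶠ y in 𝓝 y₀, (U ∩ f ⁻¹' {y}).ncard = (U ∩ f ⁻¹' {y₀}).ncard := by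
  set F := U ∩ f ⁻¹' {y₀} with hF
  have hFfin : F.Finite := (hfin y₀).subset inter_subset_right
  have hopen : ∀ x ∈ F, 𝓝 (f x) ≤ map f (𝓝 x) := fun x hx => (hloc.map_nhds_eq hx).ge
  obtain ⟨D, hD, hDdisj⟩ := hFfin.t2_separation
  have hN : ∀ x ∈ F, ∃ N, x ∈ N ∧ IsOpen N ∧ InjOn f N := by
    intro x hx
    obtain ⟨e, hxe, rfl⟩ := hloc x hx
    exact ⟨e.source, hxe, e.open_source, e.injOn⟩
  choose! N hxN hNo hNinj using hN
  let O : X → Set X := fun x => D x ∩ N x ∩ U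
  have hO : ∀ x ∈ F, IsOpen (O x) := fun x hx => ((hD x).2.inter (hNo x hx)).inter hU
  have hxO : ∀ x ∈ F, x ∈ O x := fun x hx => ⟨⟨(hD x).1, hxN x hx⟩, hx.1⟩
  have hOinj : ∀ x ∈ F, InjOn f (O x) := fun x hx => (hNinj x hx).mono fun z hz => hz.1.2
  have hOdisj : F.PairwiseDisjoint O :=
    hDdisj.mono_on fun x _ => inter_subset_left.trans inter_subset_left
  have hone : ∀ᶠ y in 𝓝 y₀, ∀ x ∈ F, (O x ∩ f ⁻¹' {y}).ncard = 1 :=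
    hFfin.eventually_all.2 fun x hx => hx.2 ▸ eventually_ncard_inter_fiber_eq_one
      ((hO x hx).mem_nhds (hxO x hx)) (hOinj x hx) (hopen x hx)
  have hcover : ∀ᶠ y in 𝓝 y₀, closure U ∩ f ⁻¹' {y} ⊆ ⋃ x ∈ F, O x :=
    eventually_inter_fiber_subset hf isClosed_closure (isOpen_biUnion hO)
      fun x hx => mem_biUnion ⟨hcl hx, hx.2⟩ (hxO x ⟨hcl hx, hx.2⟩)
  filter_upwards [hone, hcover] with y hy hyO
  have hsplit : U ∩ f ⁻¹' {y} = ⋃ x ∈ F, O x ∩ f ⁻¹' {y} := by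
    ext z
    simp only [mem_iUnion₂]
    refine ⟨fun hz => ?_, fun ⟨x, _, hz⟩ => ⟨hz.1.2, hz.2⟩⟩
    obtain ⟨x, hx, hzx⟩ := mem_iUnion₂.1 (hyO ⟨subset_closure hz.1, hz.2⟩)
    exact ⟨x, hx, hzx, hz.2⟩
  rw [hsplit, hFfin.ncard_biUnion (fun x _ => (hfin y).subset inter_subset_right)
    (hOdisj.mono fun x => inter_subset_left), finsum_mem_congr rfl hy,
    ← finsum_mem_congr rfl fun x _ => ncard_singleton x,
    ← hFfin.ncard_biUnion (fun x _ => finite_singleton x)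
      fun x _ y _ hxy => disjoint_singleton.2 hxy, biUnion_of_singleton]

theorem compl_sdiff_singleton_mem_nhds [T1Space X] {s : Set X} (hs : s.Finite) (x : X) :
    (s \ {x})ᶜ ∈ 𝓝 x :=
  hs.sdiff.isClosed.isOpen_compl.mem_nhds (by simp)

theorem exists_isOpen_closure_inter_subset [T3Space X] {s : Set X} (hs : s.Finite)
    (x : X) {W : Set X} (hW : W ∈ 𝓝 x) :
    ∃ U ⊆ W, IsOpen U ∧ x ∈ U ∧ closure U ∩ s ⊆ {x} := by
  obtain ⟨U, hU, hxU, hUs⟩ := isCompact_singleton.exists_isOpen_closure_subset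
    (nhdsSet_singleton (x := x) ▸ inter_mem hW (compl_sdiff_singleton_mem_nhds hs x))
  refine ⟨U, fun z hz => (hUs (subset_closure hz)).1, hU, hxU rfl, fun z hz => ?_⟩
  by_contra hne
  exact (hUs hz.1).2 ⟨hz.2, hne⟩

theorem exists_hasLocalDegree [T3Space X] (hf : IsClosedMap f)
    (hfin : ∀ y, (f ⁻¹' {y}).Finite) {S : Set X} (hS : S.Finite)
    (hloc : IsLocalHomeomorphOn f Sᶜ) (x : X)
    (hpunct : ∀ W ∈ 𝓝 (f x), ∃ B ∈ 𝓝 (f x), B ⊆ W ∧ IsPreconnected (B \ {f x})) :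
    ∃ n, HasLocalDegree f x n := by
  obtain ⟨U₀, -, hU₀, hxU₀, hiso⟩ :=
    exists_isOpen_closure_inter_subset (hS.union (hfin (f x))) x univ_mem
  have hfiber : closure U₀ ∩ f ⁻¹' {f x} ⊆ {x} := fun z hz => hiso ⟨hz.1, .inr hz.2⟩
  have htube : ∀ U ⊆ U₀, IsOpen U → x ∈ U →
      ∀ᶠ y in 𝓝 (f x), closure U₀ ∩ f ⁻¹' {y} ⊆ U := fun U _ hU hxU =>
    eventually_inter_fiber_subset hf isClosed_closure hU
      (hfiber.trans (singleton_subset_iff.2 hxU))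
  obtain ⟨B, hB, hBtube, hBconn⟩ := hpunct _ (htube U₀ subset_rfl hU₀ hxU₀)
  have hconst : ContinuousOn (fun y => (U₀ ∩ f ⁻¹' {y}).ncard) (B \ {f x}) := by
    intro y hy
    have hlocy : IsLocalHomeomorphOn f (U₀ ∩ f ⁻¹' {y}) := hloc.mono fun z hz hzS =>
      hy.2 (by rw [← hz.2, hiso ⟨subset_closure hz.1, .inl hzS⟩, mem_singleton_iff])
    have heq : (fun y' => (U₀ ∩ f ⁻¹' {y'}).ncard) =ᶠ[𝓝 y] fun _ => (U₀ ∩ f ⁻¹' {y}).ncard :=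
      eventually_ncard_inter_fiber_eq hf hfin hU₀ (hBtube hy.1) hlocy
    exact (continuousAt_const.congr heq.symm).continuousWithinAt
  obtain ⟨n, hn⟩ : ∃ n, ∀ y ∈ B \ {f x}, (U₀ ∩ f ⁻¹' {y}).ncard = n := by
    obtain h | ⟨y₁, hy₁⟩ := (B \ {f x}).eq_empty_or_nonempty
    · exact ⟨0, by simp [h]⟩
    · exact ⟨_, fun y hy => hBconn.constant hconst hy hy₁⟩
  refine ⟨n, fun W hW => ⟨U₀ ∩ interior W, inter_subset_right.trans interior_subset,
    hU₀.inter isOpen_interior, ⟨hxU₀, mem_interior_iff_mem_nhds.2 hW⟩, ?_⟩⟩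
  filter_upwards [nhdsWithin_le_nhds hB, self_mem_nhdsWithin, nhdsWithin_le_nhds
    (htube _ inter_subset_left (hU₀.inter isOpen_interior)
      ⟨hxU₀, mem_interior_iff_mem_nhds.2 hW⟩)] with y hyB hyx hyW
  rw [← hn y ⟨hyB, hyx⟩]
  congr 1
  exact subset_antisymm (inter_subset_inter_left _ inter_subset_left)
    fun z hz => ⟨hyW ⟨subset_closure hz.1, hz.2⟩, hz.2⟩

theorem HasLocalDegree.ne_zero [T1Space X] (h : HasLocalDegree f x n)
    [(𝓝[≠] x).NeBot] (hf : ContinuousAt f x) (hfin : ∀ y, (f ⁻¹' {y}).Finite) : n ≠ 0 := by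
  rintro rfl
  obtain ⟨U, -, hU, hxU, hcount⟩ := h univ univ_mem
  have hne : ∀ᶠ z in 𝓝[≠] x, f z ≠ f x := by
    filter_upwards [mem_nhdsWithin_of_mem_nhds (compl_sdiff_singleton_mem_nhds (hfin (f x)) x),
      self_mem_nhdsWithin] with z hz hzx hfz using hz ⟨hfz, hzx⟩
  have htend : Tendsto f (𝓝[≠] x) (𝓝[≠] f x) :=
    tendsto_nhdsWithin_iff.2 ⟨hf.mono_left nhdsWithin_le_nhds, hne⟩
  obtain ⟨z, hz, hzU⟩ := ((htend.eventually hcount).and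
    (mem_nhdsWithin_of_mem_nhds (hU.mem_nhds hxU))).exists
  rw [ncard_eq_zero ((hfin _).subset inter_subset_right)] at hz
  exact eq_empty_iff_forall_notMem.1 hz z ⟨hzU, rfl⟩

theorem HasLocalDegree.nhds_le_map (h : HasLocalDegree f x n) (hn : n ≠ 0) :
    𝓝 (f x) ≤ map f (𝓝 x) := by
  intro s hs
  obtain ⟨U, hUs, -, hxU, hcount⟩ := h _ hs
  filter_upwards [eventually_nhdsWithin_iff.1 hcount] with y hy
  by_cases hyx : y = f x
  · exact hyx ▸ hUs hxU
  · obtain ⟨z, hzU, rfl⟩ := nonempty_of_ncard_ne_zero ((hy hyx).trans_ne hn)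
    exact hUs hzU

theorem HasLocalDegree.exists_injOn [T1Space X] (h : HasLocalDegree f x 1) (hf : ContinuousAt f x)
    (hfin : (f ⁻¹' {f x}).Finite) : ∃ U ∈ 𝓝 x, InjOn f U := by
  obtain ⟨U, hUW, hU, hxU, hcount⟩ := h _ (compl_sdiff_singleton_mem_nhds hfin x)
  refine ⟨U ∩ f ⁻¹' {y | y ≠ f x → (U ∩ f ⁻¹' {y}).ncard = 1},
    inter_mem (hU.mem_nhds hxU) (hf (eventually_nhdsWithin_iff.1 hcount)), ?_⟩
  rintro z ⟨hzU, hz⟩ w ⟨hwU, -⟩ hzw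
  by_cases hzx : f z = f x
  · have huniq : ∀ u ∈ U, f u = f x → u = x := fun u hu hux => by
      by_contra hne
      exact hUW hu ⟨hux, hne⟩
    rw [huniq z hzU hzx, huniq w hwU (hzw ▸ hzx)]
  · obtain ⟨u, hu⟩ := ncard_eq_one.1 (hz hzx)
    exact (hu.subset ⟨hzU, rfl⟩).trans (hu.subset ⟨hwU, hzw.symm⟩).symm

end FiberCount

section LocallyInjective

variable {Z Y : Type*} [TopologicalSpace Z] [TopologicalSpace Y] {q : Z → Y} {A B : Set Z}

theorem isPreconnected_inter_preimage_of_injOn (hq : IsOpenMap q) (hB : IsOpen B)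
    (hinj : InjOn q B) {I : Set Y} (hI : IsPreconnected I) (hIB : I ⊆ q '' B) :
    IsPreconnected (B ∩ q ⁻¹' I) := by
  rw [← Subtype.image_preimage_coe]
  refine IsPreconnected.image ?_ _ continuous_subtype_val.continuousOn
  exact hI.preimage_of_isOpenMap (f := B.domRestrict q) hinj.injective
    (hq.comp hB.isOpenMap_subtype_val) (by rwa [range_domRestrict])

theorem closure_inter_preimage_image_subset_of_injOn [T2Space Z] (hq : IsOpenMap q)
    (hqc : Continuous q) (hA : IsOpen A) (hinj : InjOn q A) : closure A ∩ q ⁻¹' (q '' A) ⊆ A := by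
  rintro z ⟨hz, a, haA, hqa⟩
  suffices z = a from this ▸ haA
  by_contra hne
  obtain ⟨P, Q, hP, hQ, hzP, haQ, hPQ⟩ := t2_separation hne
  have hN : P ∩ q ⁻¹' (q '' (Q ∩ A)) ∈ 𝓝 z :=
    (hP.inter ((hq _ (hQ.inter hA)).preimage hqc)).mem_nhds ⟨hzP, a, ⟨haQ, haA⟩, hqa⟩
  obtain ⟨b, ⟨hbP, c, ⟨hcQ, hcA⟩, hcb⟩, hbA⟩ := mem_closure_iff_nhds.1 hz _ hN
  exact hPQ.le_bot ⟨hbP, hinj hcA hbA hcb ▸ hcQ⟩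

theorem injOn_union_of_isPreconnected [T2Space Z] (hq : IsOpenMap q) (hqc : Continuous q)
    (hA : IsOpen A) (hB : IsOpen B) (hAinj : InjOn q A) (hBinj : InjOn q B)
    (hAB : (A ∩ B).Nonempty) (himage : IsPreconnected (q '' A ∩ q '' B)) : InjOn q (A ∪ B) := by
  have hB' : B ∩ q ⁻¹' (q '' A) ⊆ A := by
    have hconn := isPreconnected_inter_preimage_of_injOn hq hB hBinj himage inter_subset_right
    have heq : B ∩ q ⁻¹' (q '' A ∩ q '' B) = B ∩ q ⁻¹' (q '' A) := by
      rw [preimage_inter, inter_left_comm, inter_eq_left.2 (subset_preimage_image q B), inter_comm]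
    rw [heq] at hconn
    refine hconn.subset_of_closure_inter_subset hA ?_ fun z hz =>
      closure_inter_preimage_image_subset_of_injOn hq hqc hA hAinj ⟨hz.1, hz.2.2⟩
    obtain ⟨z, hzA, hzB⟩ := hAB
    exact ⟨z, ⟨hzB, mem_image_of_mem q hzA⟩, hzA⟩
  have hcross : ∀ a ∈ A, ∀ b ∈ B, q a = q b → a = b := fun a ha b hb hab =>
    hAinj ha (hB' ⟨hb, a, ha, hab⟩) hab
  rintro a (ha | ha) b (hb | hb) hab
  · exact hAinj ha hb hab
  · exact hcross a ha b hb hab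
  · exact (hcross b hb a ha hab.symm).symm
  · exact hBinj ha hb hab

theorem exists_isPreconnected_subset_of_injOn {q : Z → ℝ} (hq : IsOpenMap q)
    (hqc : Continuous q) {z : Z} (hloc : ∃ U ∈ 𝓝 z, InjOn q U) {W : Set Z} (hW : W ∈ 𝓝 z) :
    ∃ A ⊆ W, IsOpen A ∧ z ∈ A ∧ IsPreconnected A ∧ InjOn q A := by
  obtain ⟨U, hU, hinj⟩ := hloc
  have hO : interior (U ∩ W) ∈ 𝓝 z := interior_mem_nhds.2 (inter_mem hU hW)
  obtain ⟨ε, hε, hball⟩ := Metric.mem_nhds_iff.1 (hq.image_mem_nhds hO)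
  have hinjO : InjOn q (interior (U ∩ W)) := hinj.mono fun x hx => (interior_subset hx).1
  exact ⟨interior (U ∩ W) ∩ q ⁻¹' ball (q z) ε, fun x hx => (interior_subset hx.1).2,
    isOpen_interior.inter (isOpen_ball.preimage hqc), ⟨mem_of_mem_nhds hO, mem_ball_self hε⟩,
    isPreconnected_inter_preimage_of_injOn hq isOpen_interior hinjO
      (convex_ball _ _).isPreconnected hball, hinjO.mono inter_subset_left⟩

theorem injOn_of_isPreconnected_of_locally_injOn [T2Space Z] {q : Z → ℝ} (hq : IsOpenMap q)
    (hqc : Continuous q) {D : Set Z} (hD : IsPreconnected D)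
    (hloc : ∀ z ∈ D, ∃ U ∈ 𝓝 z, InjOn q U) : InjOn q D := by
  let IsChart : Set Z → Prop := fun A => IsOpen A ∧ InjOn q A ∧ IsPreconnected A
  let R : Z → Z → Prop := fun z w => ∃ A, IsChart A ∧ z ∈ A ∧ w ∈ A
  have hchart : ∀ z ∈ D, ∀ᶠ w in 𝓝[D] z, R z w := by
    intro z hz
    obtain ⟨A, -, hA, hzA, hAconn, hAinj⟩ :=
      exists_isPreconnected_subset_of_injOn hq hqc (hloc z hz) univ_mem
    filter_upwards [mem_nhdsWithin_of_mem_nhds (hA.mem_nhds hzA)] with w hw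
    exact ⟨A, ⟨hA, hAinj, hAconn⟩, hzA, hw⟩
  have htrans : ∀ x y z, R x y → R y z → R x z := by
    rintro x y z ⟨A, ⟨hA, hAinj, hAc⟩, hx, hyA⟩ ⟨B, ⟨hB, hBinj, hBc⟩, hyB, hz⟩
    refine ⟨A ∪ B, ⟨hA.union hB, ?_, hAc.union y hyA hyB hBc⟩, .inl hx, .inr hz⟩
    -- The images are intervals, so they meet in an interval; for a circle-valued `q` this fails.
    refine injOn_union_of_isPreconnected hq hqc hA hB hAinj hBinj ⟨y, hyA, hyB⟩ ?_
    exact ((hAc.image q hqc.continuousOn).ordConnected.inter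
      (hBc.image q hqc.continuousOn).ordConnected).isPreconnected
  intro z hz w hw hzw
  obtain ⟨A, hA, hzA, hwA⟩ : R z w := hD.induction₂ R hchart
    (fun x y z _ _ _ => htrans x y z) (fun x y _ _ ⟨A, hA, hx, hy⟩ => ⟨A, hA, hy, hx⟩) hz hw
  exact hA.2.1 hzA hwA hzw

end LocallyInjective

theorem mem_connectedComponentIn_of_mem_closure {X : Type*} [TopologicalSpace X] {A : Set X}
    {x y : X} (hy : y ∈ closure (connectedComponentIn A x)) (hyA : y ∈ A) :
    y ∈ connectedComponentIn A x := by
  have hx : x ∈ A := connectedComponentIn_nonempty_iff.1 (closure_nonempty_iff.1 ⟨y, hy⟩)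
  exact (isPreconnected_connectedComponentIn.subset_closure (subset_insert y _)
    (insert_subset hy subset_closure)).subset_connectedComponentIn
    (mem_insert_of_mem _ (mem_connectedComponentIn hx))
    (insert_subset hyA (connectedComponentIn_subset _ _)) (mem_insert _ _)

section Pullback

variable {X Y Z : Type*} [TopologicalSpace X] [TopologicalSpace Y] [TopologicalSpace Z]
  {f : X → Z} {g : Y → Z}

theorem isOpenMap_pullback_fst (hf : Continuous f) (hg : IsOpenMap g) :
    IsOpenMap (Function.Pullback.fst : f.Pullback g → X) := by
  refine isOpenMap_iff_nhds_le.2 fun ⟨⟨x, y⟩, hxy⟩ W hW => ?_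
  obtain ⟨W', hW', hWW'⟩ := mem_nhds_subtype _ _ _ |>.1 (mem_map.1 hW)
  obtain ⟨P, hP, Q, hQ, hPQ⟩ := mem_nhds_prod_iff.1 hW'
  filter_upwards [hP, hf.continuousAt (hxy ▸ hg.image_mem_nhds hQ)] with x' hx'P ⟨y', hy'Q, hy'⟩
  exact hWW' (a := ⟨(x', y'), hy'.symm⟩) (hPQ ⟨hx'P, hy'Q⟩)

theorem isOpenMap_pullback_snd (hf : IsOpenMap f) (hg : Continuous g) :
    IsOpenMap (Function.Pullback.snd : f.Pullback g → Y) := by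
  let swap : f.Pullback g ≃ₜ g.Pullback f := (Homeomorph.prodComm X Y).subtype fun _ => eq_comm
  exact (isOpenMap_pullback_fst hg hf).comp swap.isOpenMap

end Pullback

section Unrolling

variable {G : Type*} {p : G → UnitAddCircle} {V : Set G}

theorem unitAddCircle_coe_eq_coe_iff {s t : ℝ} :
    (s : UnitAddCircle) = t ↔ ∃ k : ℤ, s + k = t := by
  rw [← sub_eq_zero, ← neg_eq_zero, neg_sub, ← AddCircle.coe_sub, AddCircle.coe_eq_zero_iff]
  simp [eq_sub_iff_add_eq, add_comm]

/-- The unrolling of a map to the circle: its base change along the universal cover `ℝ` of the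
circle. Its points are the points of `G` together with a real lift of their image. -/
def Unrolling (p : G → UnitAddCircle) := p.Pullback ((↑) : ℝ → UnitAddCircle)

namespace Unrolling

/-- The point of `G` under a point of the unrolling. -/
def base (z : Unrolling p) : G := z.1.1

/-- The real lift of `p z.base` recorded by a point `z` of the unrolling. -/
def height (z : Unrolling p) : ℝ := z.1.2

theorem apply_base (z : Unrolling p) : p z.base = (z.height : UnitAddCircle) := z.2

theorem ext {z w : Unrolling p} (h₁ : z.base = w.base) (h₂ : z.height = w.height) : z = w :=
  Subtype.ext (Prod.ext h₁ h₂)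

theorem base_surjective : Function.Surjective (base : Unrolling p → G) := fun x =>
  let ⟨t, ht⟩ := QuotientAddGroup.mk_surjective (p x)
  ⟨⟨(x, t), ht.symm⟩, rfl⟩

theorem exists_base_eq_height_eq {x : G} {t : ℝ} (h : p x = t) :
    ∃ z : Unrolling p, z.base = x ∧ z.height = t :=
  ⟨⟨(x, t), h⟩, rfl, rfl⟩

variable [TopologicalSpace G]

instance : TopologicalSpace (Unrolling p) := inferInstanceAs (TopologicalSpace (Subtype _))

instance [T2Space G] : T2Space (Unrolling p) := inferInstanceAs (T2Space (Subtype _))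

/-- The deck transformation of the unrolling that adds `k` to the real lift. -/
def shift (k : ℤ) : Unrolling p ≃ₜ Unrolling p :=
  ((Homeomorph.refl G).prodCongr (Homeomorph.addRight (k : ℝ))).subtype fun z => by
    have hk : ((z.2 + k : ℝ) : UnitAddCircle) = z.2 :=
      (unitAddCircle_coe_eq_coe_iff.2 ⟨k, rfl⟩).symm
    exact hk.symm ▸ Iff.rfl

@[simp] theorem base_shift (k : ℤ) (z : Unrolling p) : (shift k z).base = z.base := rfl

@[simp] theorem height_shift (k : ℤ) (z : Unrolling p) : (shift k z).height = z.height + k := rfl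

theorem exists_shift_eq {z w : Unrolling p} (h : z.base = w.base) : ∃ k : ℤ, shift k z = w := by
  have hzw : (z.height : UnitAddCircle) = w.height := by rw [← apply_base, ← apply_base, h]
  obtain ⟨k, hk⟩ := unitAddCircle_coe_eq_coe_iff.1 hzw
  exact ⟨k, ext h hk⟩

theorem continuous_base : Continuous (base : Unrolling p → G) :=
  continuous_fst.comp continuous_subtype_val

theorem continuous_height : Continuous (height : Unrolling p → ℝ) :=
  continuous_snd.comp continuous_subtype_val

theorem isOpenMap_base (hp : Continuous p) : IsOpenMap (base : Unrolling p → G) :=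
  isOpenMap_pullback_fst hp QuotientAddGroup.isOpenMap_coe

theorem isOpenMap_height (hp : IsOpenMap p) : IsOpenMap (height : Unrolling p → ℝ) :=
  isOpenMap_pullback_snd hp (AddCircle.continuous_mk' 1)

theorem isProperMap_height [CompactSpace G] (hp : Continuous p) :
    IsProperMap (height : Unrolling p → ℝ) :=
  isProperMap_snd_of_compactSpace.comp (isClosed_eq (hp.comp continuous_fst)
    ((AddCircle.continuous_mk' 1).comp continuous_snd)).isClosedEmbedding_subtypeVal.isProperMap

end Unrolling

variable [TopologicalSpace G]

/-- `p` is a finite branched cover of the circle with branch points in `V`: it is open with finite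
fibers, locally injective off the finite set `V`, and of local degree at least two at `V`. -/
structure IsBranchedCover (p : G → UnitAddCircle) (V : Set G) : Prop where
  continuous : Continuous p
  isOpenMap : IsOpenMap p
  finite_fiber : ∀ θ, (p ⁻¹' {θ}).Finite
  finite_branch : V.Finite
  exists_injOn : ∀ x ∉ V, ∃ U ∈ 𝓝 x, InjOn p U
  exists_localDegree : ∀ v ∈ V, ∃ n ≥ 2, HasLocalDegree p v n

open Unrolling

/-- A leaf of the unrolling: the connected component of `z` among the points not over `V`. -/
def leaf (V : Set G) (z : Unrolling p) : Set (Unrolling p) :=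
  connectedComponentIn (base ⁻¹' Vᶜ) z

theorem isPreconnected_leaf (z : Unrolling p) : IsPreconnected (leaf V z) :=
  isPreconnected_connectedComponentIn

theorem isPreconnected_image_height_leaf (z : Unrolling p) :
    IsPreconnected (height '' leaf V z) :=
  (isPreconnected_leaf z).image _ continuous_height.continuousOn

theorem mem_leaf_self {z : Unrolling p} (hz : z.base ∉ V) : z ∈ leaf V z :=
  mem_connectedComponentIn hz

theorem base_notMem_of_mem_leaf {z w : Unrolling p} (hw : w ∈ leaf V z) : w.base ∉ V :=
  connectedComponentIn_subset _ _ hw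

theorem base_notMem_of_leaf_nonempty {z : Unrolling p} (h : (leaf V z).Nonempty) : z.base ∉ V :=
  connectedComponentIn_nonempty_iff.1 h

theorem leaf_eq_of_mem {z w : Unrolling p} (hw : w ∈ leaf V z) : leaf V z = leaf V w :=
  connectedComponentIn_eq hw

theorem image_shift_leaf (k : ℤ) {z : Unrolling p} (hz : z.base ∉ V) :
    shift k '' leaf V z = leaf V (shift k z) := by
  have hinv : shift k '' (base ⁻¹' Vᶜ) = (base ⁻¹' Vᶜ : Set (Unrolling p)) := by
    rw [(shift k).image_eq_preimage_symm]
    ext w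
    obtain ⟨u, rfl⟩ := (shift k).surjective w
    simp
  rw [leaf, (shift k).image_connectedComponentIn hz, hinv, leaf]

theorem image_height_leaf_shift (k : ℤ) {z : Unrolling p} (hz : z.base ∉ V) :
    height '' leaf V (shift k z) = (fun t : ℝ => t + k) '' (height '' leaf V z) := by
  rw [← image_shift_leaf k hz, image_image, image_image]
  rfl

theorem mem_leaf_of_mem_closure {z w : Unrolling p} (hw : w ∈ closure (leaf V z))
    (hwV : w.base ∉ V) : w ∈ leaf V z :=
  mem_connectedComponentIn_of_mem_closure hw hwV

namespace IsBranchedCover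

variable (h : IsBranchedCover p V)
include h

theorem exists_injOn_height {z : Unrolling p} (hz : z.base ∉ V) :
    ∃ U ∈ 𝓝 z, InjOn height U := by
  obtain ⟨U, hU, hinj⟩ := h.exists_injOn z.base hz
  refine ⟨base ⁻¹' U, continuous_base.continuousAt hU, ?_⟩
  intro u hu w hw huw
  exact Unrolling.ext (hinj hu hw (by rw [u.apply_base, w.apply_base, huw])) huw

theorem injOn_height_leaf [T2Space G] (z : Unrolling p) : InjOn height (leaf V z) :=
  injOn_of_isPreconnected_of_locally_injOn (isOpenMap_height h.isOpenMap)
    continuous_height (isPreconnected_leaf z)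
    fun _ hw => h.exists_injOn_height (base_notMem_of_mem_leaf hw)

theorem isOpen_leaf [T1Space G] (z : Unrolling p) : IsOpen (leaf V z) := by
  refine isOpen_iff_mem_nhds.2 fun w hw => ?_
  have hwV := base_notMem_of_mem_leaf hw
  obtain ⟨A, hAV, hA, hwA, hAconn, -⟩ := exists_isPreconnected_subset_of_injOn
    (isOpenMap_height h.isOpenMap) continuous_height (h.exists_injOn_height hwV)
    (continuous_base.continuousAt (h.finite_branch.isClosed.isOpen_compl.mem_nhds hwV))
  rw [leaf_eq_of_mem hw]
  exact mem_of_superset (hA.mem_nhds hwA) (hAconn.subset_connectedComponentIn hwA hAV)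

theorem isOpen_image_height_leaf [T1Space G] (z : Unrolling p) : IsOpen (height '' leaf V z) :=
  isOpenMap_height h.isOpenMap _ (h.isOpen_leaf z)

theorem image_base_leaf [T1Space G] {z : Unrolling p} (hz : z.base ∉ V) :
    base '' leaf V z = connectedComponentIn Vᶜ z.base := by
  have hopen (w : Unrolling p) : IsOpen (base '' leaf V w) :=
    isOpenMap_base h.continuous _ (h.isOpen_leaf w)
  refine subset_antisymm ?_ ?_
  · refine ((isPreconnected_leaf z).image _
      continuous_base.continuousOn).subset_connectedComponentIn ⟨z, mem_leaf_self hz, rfl⟩ ?_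
    rintro _ ⟨w, hw, rfl⟩
    exact base_notMem_of_mem_leaf hw
  · refine isPreconnected_connectedComponentIn.subset_of_closure_inter_subset (hopen z)
      ⟨z.base, mem_connectedComponentIn hz, z, mem_leaf_self hz, rfl⟩ ?_
    rintro x ⟨hx, hxe⟩
    obtain ⟨w, rfl⟩ := base_surjective (p := p) x
    have hwV : w.base ∉ V := connectedComponentIn_subset _ _ hxe
    obtain ⟨_, ⟨u, hu, rfl⟩, u', hu', huu'⟩ :=
      mem_closure_iff.1 hx _ (hopen w) ⟨w, mem_leaf_self hwV, rfl⟩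
    obtain ⟨k, hk⟩ := exists_shift_eq huu'
    have hw : w ∈ shift k '' leaf V z := by
      rw [leaf_eq_of_mem hu', image_shift_leaf k (base_notMem_of_mem_leaf hu'), hk,
        ← leaf_eq_of_mem hu]
      exact mem_leaf_self hwV
    obtain ⟨w', hw', rfl⟩ := hw
    exact ⟨w', hw', rfl⟩

end IsBranchedCover

end Unrolling

section Curves

theorem exists_homeomorph_image_of_isOpenMap_of_injOn {Y Z : Type*} [TopologicalSpace Y]
    [TopologicalSpace Z] {q : Z → Y} {D : Set Z} (hq : IsOpenMap q) (hqc : Continuous q)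
    (hD : IsOpen D) (hinj : InjOn q D) : ∃ e : D ≃ₜ q '' D, ∀ z, (e z : Y) = q z := by
  have hemb : IsOpenEmbedding (D.domRestrict q) := .of_continuous_injective_isOpenMap
    (hqc.comp continuous_subtype_val) hinj.injective (hq.comp hD.isOpenMap_subtype_val)
  exact ⟨hemb.isEmbedding.toHomeomorph.trans (.setCongr (range_domRestrict q D)), fun _ => rfl⟩

theorem isSimpleArc_of_homeomorph_Ioo {X : Type*} [TopologicalSpace X] {E : Set X} {a b : ℝ}
    (hab : a < b) (e : E ≃ₜ Ioo a b) : IsSimpleArc E := by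
  let φ := affineHomeomorph (b - a) a (sub_pos.2 hab).ne'
  have hφ : φ '' Ioo 0 1 = Ioo a b := by
    rw [affineHomeomorph_image_Ioo _ _ _ _ (sub_pos.2 hab)]
    simp
  exact ⟨e.trans ((Homeomorph.setCongr hφ.symm).trans (φ.image (Ioo 0 1)).symm)⟩

theorem isJordanCurve_range_of_eq_iff {X : Type*} [TopologicalSpace X] [T2Space X] {γ : ℝ → X}
    {c : ℝ} (hc : c ≠ 0) (hγ : Continuous γ) (h : ∀ s t, γ s = γ t ↔ ∃ l : ℤ, l * c = s - t) :
    IsJordanCurve (range γ) := by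
  have hper : Function.Periodic γ c := fun t => (h _ _).2 ⟨1, by ring⟩
  have hlift : Continuous hper.lift := hγ.quotient_liftOn' _
  have hinj : Function.Injective hper.lift := fun x y => by
    induction x using QuotientAddGroup.induction_on with | _ s => ?_
    induction y using QuotientAddGroup.induction_on with | _ t => ?_
    intro hst
    refine QuotientAddGroup.eq_iff_sub_mem.2 (AddSubgroup.mem_zmultiples_iff.2 ?_)
    simpa using (h s t).1 hst
  have hrange : range hper.lift = range γ :=
    (QuotientAddGroup.mk_surjective.range_comp hper.lift).symm
  have : CompactSpace (AddCircle c) := (AddCircle.homeomorphCircle hc).symm.compactSpace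
  rw [← hrange]
  exact ⟨(hlift.isClosedEmbedding hinj).isEmbedding.toHomeomorph.symm.trans
    (AddCircle.homeomorphCircle hc)⟩

theorem exists_eq_Ioo_of_isPreconnected_of_finite {H : Set ℝ} (hH : IsOpen H)
    (hconn : IsPreconnected H) {t : ℝ} (ht : t ∈ H) (hfin : {k : ℤ | t + k ∈ H}.Finite) :
    ∃ a b, a < b ∧ H = Ioo a b := by
  obtain ⟨M, hM⟩ := hfin.bddAbove
  obtain ⟨m, hm⟩ := hfin.bddBelow
  have hM' : t + (M + 1 : ℤ) ∉ H := fun h => by linarith [hM h]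
  have hm' : t + (m - 1 : ℤ) ∉ H := fun h => by linarith [hm h]
  have hM0 : (0 : ℝ) ≤ M := by exact_mod_cast hM (a := 0) (by simpa using ht)
  have hm0 : (m : ℝ) ≤ 0 := by exact_mod_cast hm (a := 0) (by simpa using ht)
  push_cast at hM' hm'
  have habove : BddAbove H := ⟨t + (M + 1), fun s hs => by
    by_contra! hlt
    exact hM' (hconn.Icc_subset ht hs ⟨by linarith, hlt.le⟩)⟩
  have hbelow : BddBelow H := ⟨t + (m - 1), fun s hs => by
    by_contra! hlt
    exact hm' (hconn.Icc_subset hs ht ⟨hlt.le, by linarith⟩)⟩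
  have hsub : H ⊆ Ioo (sInf H) (sSup H) :=
    (hH.subset_interior_iff.2 (subset_Icc_csInf_csSup hbelow habove)).trans interior_Icc.subset
  exact ⟨sInf H, sSup H, (hsub ht).1.trans (hsub ht).2,
    hsub.antisymm (IsConnected.Ioo_csInf_csSup_subset ⟨⟨t, ht⟩, hconn⟩ hbelow habove)⟩

end Curves

section EdgeShape

open Unrolling

variable {G : Type*} [TopologicalSpace G] {p : G → UnitAddCircle} {V : Set G} {z : Unrolling p}

theorem exists_forall_leaf_shift_eq_iff_dvd (V : Set G) (hz : z.base ∉ V) :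
    ∃ m : ℤ, ∀ k, leaf V (shift k z) = leaf V z ↔ m ∣ k := by
  have hadd (j k : ℤ) (hj : leaf V (shift j z) = leaf V z) :
      leaf V (shift (j + k) z) = leaf V (shift k z) := by
    have hjk : shift (j + k) z = shift k (shift j z) :=
      Unrolling.ext rfl (by simp [add_assoc])
    rw [hjk, ← image_shift_leaf k (z := shift j z) hz, hj, image_shift_leaf k hz]
  have hzero : shift 0 z = z := Unrolling.ext rfl (by simp)
  let periods : AddSubgroup ℤ :=
    { carrier := {k | leaf V (shift k z) = leaf V z}
      add_mem' := fun hj hk => (hadd _ _ hj).trans hk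
      zero_mem' := congrArg (leaf V) hzero
      neg_mem' := fun {k} hk => by
        have := hadd k (-k) hk
        rw [add_neg_cancel, hzero] at this
        exact this.symm }
  obtain ⟨m, hm⟩ := Int.subgroup_cyclic periods
  refine ⟨m, fun k => ?_⟩
  rw [← Int.mem_zmultiples_iff, AddSubgroup.zmultiples_eq_closure, ← hm]
  rfl

theorem shift_mem_leaf_iff {w : Unrolling p} (hw : w ∈ leaf V z) {k : ℤ} :
    shift k w ∈ leaf V z ↔ leaf V (shift k z) = leaf V z := by
  have hwV := base_notMem_of_mem_leaf hw
  rw [← image_shift_leaf k (base_notMem_of_leaf_nonempty ⟨w, hw⟩), leaf_eq_of_mem hw,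
    image_shift_leaf k hwV]
  exact ⟨fun h => (leaf_eq_of_mem h).symm, fun h => h ▸ mem_leaf_self hwV⟩

theorem image_height_leaf_eq_univ {m : ℤ} (hm0 : m ≠ 0)
    (hm : ∀ l : ℤ, shift (l * m) z ∈ leaf V z) : height '' leaf V z = univ := by
  have hmem (l : ℤ) : z.height + l * m ∈ height '' leaf V z := ⟨_, hm l, by simp⟩
  have hsq : (1 : ℝ) ≤ m * m := by exact_mod_cast (mul_self_pos.2 hm0 : 0 < m * m)
  have hle (n : ℕ) : (n : ℝ) ≤ n * m * m := by nlinarith [n.cast_nonneg (α := ℝ)]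
  refine (isPreconnected_image_height_leaf z).eq_univ_of_unbounded
    (fun ⟨b, hb⟩ => ?_) (fun ⟨b, hb⟩ => ?_)
  · obtain ⟨n, hn⟩ := exists_nat_gt (z.height - b)
    have := hb (hmem (-n * m))
    push_cast at this
    linarith [hle n]
  · obtain ⟨n, hn⟩ := exists_nat_gt (b - z.height)
    have := hb (hmem (n * m))
    push_cast at this
    linarith [hle n]

namespace IsBranchedCover

variable (h : IsBranchedCover p V)
include h

theorem finite_setOf_add_mem_image_height (hinj : InjOn base (leaf V z)) (t : ℝ) :
    {k : ℤ | t + k ∈ height '' leaf V z}.Finite := by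
  have hfin : (leaf V z ∩ base ⁻¹' (p ⁻¹' {(t : UnitAddCircle)})).Finite :=
    .of_finite_image ((h.finite_fiber t).subset (by rintro _ ⟨w, ⟨-, hw⟩, rfl⟩; exact hw))
      (hinj.mono inter_subset_left)
  refine ((hfin.image height).preimage (f := fun k : ℤ => t + k)
    fun j _ k _ hjk => by simpa using hjk).subset ?_
  rintro k ⟨w, hw, hwk⟩
  refine ⟨w, ⟨hw, ?_⟩, hwk⟩
  rw [mem_preimage, mem_preimage, mem_singleton_iff, w.apply_base, hwk]
  exact (unitAddCircle_coe_eq_coe_iff.2 ⟨k, rfl⟩).symm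

theorem exists_mem_closure_leaf_height_eq [CompactSpace G] {a : ℝ}
    (ha : a ∈ closure (height '' leaf V z)) (ha' : a ∉ height '' leaf V z) :
    ∃ y ∈ closure (leaf V z), y.height = a ∧ y.base ∈ V := by
  obtain ⟨y, hy, rfl⟩ := (isProperMap_height h.continuous).isClosedMap.closure_image_subset _ ha
  exact ⟨y, hy, rfl, not_not.1 fun hyV => ha' ⟨y, mem_leaf_of_mem_closure hy hyV, rfl⟩⟩

variable [T2Space G]

theorem exists_section_of_image_height_leaf_eq_univ (huniv : height '' leaf V z = univ) :
    ∃ σ : ℝ → Unrolling p, Continuous σ ∧ range σ = leaf V z ∧ ∀ t, (σ t).height = t := by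
  obtain ⟨e, he⟩ := exists_homeomorph_image_of_isOpenMap_of_injOn (isOpenMap_height h.isOpenMap)
    continuous_height (h.isOpen_leaf z) (h.injOn_height_leaf z)
  let e' : ℝ ≃ₜ leaf V z := ((e.trans (.setCongr huniv)).trans (Homeomorph.Set.univ ℝ)).symm
  have he' (w : leaf V z) : e'.symm w = w.1.height := he w
  refine ⟨fun t => e' t, continuous_subtype_val.comp e'.continuous, ?_, fun t => ?_⟩
  · rw [range_comp' Subtype.val e', e'.surjective.range_eq, image_univ, Subtype.range_coe]
  · rw [← he', e'.symm_apply_apply]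

theorem isJordanCurve_image_base_leaf (hz : z.base ∉ V) {m : ℤ} (hm0 : m ≠ 0)
    (hm : ∀ w ∈ leaf V z, ∀ k, shift k w ∈ leaf V z ↔ m ∣ k) :
    IsJordanCurve (base '' leaf V z) := by
  obtain ⟨σ, hσ, hrange, hheight⟩ := h.exists_section_of_image_height_leaf_eq_univ
    (image_height_leaf_eq_univ hm0 fun l =>
      (hm z (mem_leaf_self hz) _).2 (dvd_mul_left m l))
  have hmem (t : ℝ) : σ t ∈ leaf V z := hrange ▸ mem_range_self t
  rw [← hrange, ← range_comp]
  refine isJordanCurve_range_of_eq_iff (Int.cast_ne_zero.2 hm0 : (m : ℝ) ≠ 0)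
    (continuous_base.comp hσ) fun s t => ⟨fun hst => ?_, fun ⟨l, hl⟩ => ?_⟩
  · obtain ⟨k, hk⟩ := exists_shift_eq hst.symm
    obtain ⟨l, rfl⟩ := (hm _ (hmem t) k).1 (hk ▸ hmem s)
    have := congrArg height hk
    rw [height_shift, hheight, hheight] at this
    exact ⟨l, by push_cast at this; linarith⟩
  · have hs : shift (l * m) (σ t) = σ s :=
      h.injOn_height_leaf z ((hm _ (hmem t) _).2 (dvd_mul_left m l)) (hmem s)
        (by rw [height_shift, hheight, hheight]; push_cast; linarith)
    exact (congrArg base hs).symm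

theorem isSimpleArc_image_base_leaf (hinj : InjOn base (leaf V z)) {a b : ℝ} (hab : a < b)
    (himage : height '' leaf V z = Ioo a b) : IsSimpleArc (base '' leaf V z) := by
  obtain ⟨e, -⟩ := exists_homeomorph_image_of_isOpenMap_of_injOn (isOpenMap_base h.continuous)
    continuous_base (h.isOpen_leaf z) hinj
  obtain ⟨e', -⟩ := exists_homeomorph_image_of_isOpenMap_of_injOn (isOpenMap_height h.isOpenMap)
    continuous_height (h.isOpen_leaf z) (h.injOn_height_leaf z)
  exact isSimpleArc_of_homeomorph_Ioo hab (e.symm.trans (e'.trans (.setCongr himage)))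

theorem leaf_shape (hz : z.base ∉ V) :
    (height '' leaf V z = univ ∧ IsJordanCurve (base '' leaf V z)) ∨
      ∃ a b, a < b ∧ height '' leaf V z = Ioo a b ∧ IsSimpleArc (base '' leaf V z) := by
  obtain ⟨m, hm⟩ := exists_forall_leaf_shift_eq_iff_dvd V hz
  have hm' (w) (hw : w ∈ leaf V z) (k) : shift k w ∈ leaf V z ↔ m ∣ k :=
    (shift_mem_leaf_iff hw).trans (hm k)
  obtain rfl | hm0 := eq_or_ne m 0
  · right
    have hinj : InjOn base (leaf V z) := fun w hw u hu hwu => by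
      obtain ⟨k, rfl⟩ := exists_shift_eq hwu
      obtain rfl : k = 0 := by simpa using (hm' w hw k).1 hu
      exact Unrolling.ext rfl (by simp)
    obtain ⟨a, b, hab, himage⟩ := exists_eq_Ioo_of_isPreconnected_of_finite
      (h.isOpen_image_height_leaf z)
      (isPreconnected_image_height_leaf z)
      (mem_image_of_mem _ (mem_leaf_self hz)) (h.finite_setOf_add_mem_image_height hinj _)
    exact ⟨a, b, hab, himage, h.isSimpleArc_image_base_leaf hinj hab himage⟩
  · exact .inl ⟨image_height_leaf_eq_univ hm0 fun l =>
      (hm' z (mem_leaf_self hz) _).2 (dvd_mul_left m l), h.isJordanCurve_image_base_leaf hz hm0 hm'⟩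

theorem exists_mem_closure_leaf_base_eq [CompactSpace G] {a b : ℝ}
    (himage : height '' leaf V z = Ioo a b) {x : G}
    (hx : x ∈ closure (base '' leaf V z) \ base '' leaf V z) :
    ∃ y ∈ closure (leaf V z), y.base = x ∧ (y.height = a ∨ y.height = b) := by
  have hheight : closure (leaf V z) ⊆ height ⁻¹' Icc a b :=
    closure_minimal ((image_subset_iff.1 himage.subset).trans (preimage_mono Ioo_subset_Icc_self))
      (isClosed_Icc.preimage continuous_height)
  have hcompact : IsCompact (closure (leaf V z)) :=
    ((isProperMap_height h.continuous).isCompact_preimage isCompact_Icc).of_isClosed_subset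
      isClosed_closure hheight
  obtain ⟨y, hy, rfl⟩ := closure_minimal (image_mono subset_closure)
    (hcompact.image continuous_base).isClosed hx.1
  have hyH : y.height ∉ Ioo a b := fun hyH => hx.2 ⟨y,
    closure_inter_preimage_image_subset_of_injOn (isOpenMap_height h.isOpenMap) continuous_height
      (h.isOpen_leaf z) (h.injOn_height_leaf z) ⟨hy, himage.symm ▸ hyH⟩, rfl⟩
  exact ⟨y, hy, rfl, eq_endpoints_or_mem_Ioo_of_mem_Icc (hheight hy) |>.imp_right
    fun h => h.resolve_right hyH⟩

end IsBranchedCover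

end EdgeShape

section IsolatingNhd

open Unrolling

variable {G : Type*} [TopologicalSpace G] {p : G → UnitAddCircle} {V : Set G}

theorem unitAddCircle_coe_ne_coe {s t : ℝ} (hst : s ≠ t) (h : |s - t| < 1) :
    (s : UnitAddCircle) ≠ t := by
  rw [Ne, unitAddCircle_coe_eq_coe_iff]
  rintro ⟨k, rfl⟩
  have hk : |k| < 1 := by
    rw [sub_add_cancel_left, abs_neg] at h
    exact_mod_cast h
  exact hst (by simp [Int.abs_lt_one_iff.1 hk])

/-- An open neighborhood `U` of the branch point `v` in which `v` is isolated from the other branch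
points and from the other points of its fiber, and which contains exactly `n` points of each nearby
fiber, all of them away from the boundary of `U`. Nearby points of the circle are parametrized by
the interval of radius `ε` around a real lift `θ` of `p v`. -/
structure IsIsolatingNhd (p : G → UnitAddCircle) (V : Set G) (v : G) (U : Set G) (θ ε : ℝ)
    (n : ℕ) : Prop where
  isOpen : IsOpen U
  mem : v ∈ U
  mem_branch : v ∈ V
  apply_eq : p v = θ
  pos : 0 < ε
  le_one : ε ≤ 1
  closure_inter_branch_subset : closure U ∩ V ⊆ {v}
  closure_inter_fiber_subset : closure U ∩ p ⁻¹' {p v} ⊆ {v}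
  closure_inter_nearby_fiber_subset :
    ∀ t ∈ ball θ ε, closure U ∩ p ⁻¹' {(t : UnitAddCircle)} ⊆ U
  ncard_inter_fiber : ∀ t ∈ ball θ ε, t ≠ θ → (U ∩ p ⁻¹' {(t : UnitAddCircle)}).ncard = n

theorem IsBranchedCover.exists_isIsolatingNhd [CompactSpace G] [T2Space G]
    (h : IsBranchedCover p V) {v : G} (hv : v ∈ V) :
    ∃ U θ ε, ∃ n ≥ 2, IsIsolatingNhd p V v U θ ε n := by
  obtain ⟨n, hn, hdeg⟩ := h.exists_localDegree v hv
  obtain ⟨θ, hθ⟩ : ∃ θ : ℝ, (θ : UnitAddCircle) = p v := QuotientAddGroup.mk_surjective (p v)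
  obtain ⟨W, -, hWo, hvW, hWs⟩ := exists_isOpen_closure_inter_subset
    (h.finite_branch.union (h.finite_fiber (p v))) v univ_mem
  obtain ⟨U, hUW, hUo, hvU, hU⟩ := hdeg W (hWo.mem_nhds hvW)
  have hUs : closure U ∩ (V ∪ p ⁻¹' {p v}) ⊆ {v} :=
    (inter_subset_inter_left _ (closure_mono hUW)).trans hWs
  have hfiber : closure U ∩ p ⁻¹' {p v} ⊆ {v} :=
    (inter_subset_inter_right _ subset_union_right).trans hUs
  have hnear := eventually_inter_fiber_subset h.continuous.isClosedMap isClosed_closure hUo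
    (hfiber.trans (singleton_subset_iff.2 hvU))
  rw [eventually_nhdsWithin_iff] at hU
  rw [← hθ] at hnear hU
  have hcoe : Tendsto ((↑) : ℝ → UnitAddCircle) (𝓝 θ) (𝓝 (θ : UnitAddCircle)) :=
    (AddCircle.continuous_mk' 1).tendsto θ
  obtain ⟨ε, hε, hball⟩ := Metric.eventually_nhds_iff_ball.1
    ((hcoe.eventually hnear).and (hcoe.eventually hU))
  have hsub : ball θ (min ε 1) ⊆ ball θ ε := ball_subset_ball (min_le_left _ _)
  exact ⟨U, θ, min ε 1, n, hn,
    { isOpen := hUo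
      mem := hvU
      mem_branch := hv
      apply_eq := hθ.symm
      pos := lt_min hε one_pos
      le_one := min_le_right _ _
      closure_inter_branch_subset :=
        (inter_subset_inter_right _ subset_union_left).trans hUs
      closure_inter_fiber_subset := hfiber
      closure_inter_nearby_fiber_subset := fun t ht => (hball t (hsub ht)).1
      ncard_inter_fiber := fun t ht hne => (hball t (hsub ht)).2
        (unitAddCircle_coe_ne_coe hne ((mem_ball.1 ht).trans_le (min_le_right _ _))) }⟩

namespace IsIsolatingNhd

variable {v : G} {U : Set G} {θ ε : ℝ} {n : ℕ} {t : ℝ} (hU : IsIsolatingNhd p V v U θ ε n)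
include hU

theorem base_mem_of_mem_closure {z : Unrolling p} (hz : z.base ∈ closure U)
    (ht : z.height ∈ ball θ ε) : z.base ∈ U :=
  hU.closure_inter_nearby_fiber_subset z.height ht ⟨hz, z.apply_base⟩

theorem base_eq_of_height_eq {z : Unrolling p} (hz : z.base ∈ closure U) (ht : z.height = θ) :
    z.base = v :=
  hU.closure_inter_fiber_subset ⟨hz, by
    rw [mem_preimage, mem_singleton_iff, z.apply_base, ht, hU.apply_eq]⟩

theorem base_notMem_branch {z : Unrolling p} (hz : z.base ∈ closure U) (ht : z.height ∈ ball θ ε)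
    (hne : z.height ≠ θ) : z.base ∉ V := fun hzV => by
  have hzv : z.base = v := hU.closure_inter_branch_subset ⟨hz, hzV⟩
  have heq : (z.height : UnitAddCircle) = θ := by rw [← z.apply_base, hzv, hU.apply_eq]
  exact unitAddCircle_coe_ne_coe hne ((mem_ball.1 ht).trans_le hU.le_one) heq

section Leaf

variable [T2Space G] (h : IsBranchedCover p V) {z : Unrolling p} (hzV : z.base ∉ V)
  (hz : z.base ∈ U) (ht : z.height ∈ ball θ ε)
include h hzV hz ht

theorem leaf_inter_preimage_ball_subset : leaf V z ∩ height ⁻¹' ball θ ε ⊆ base ⁻¹' U := by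
  have hconn : IsPreconnected (leaf V z ∩ height ⁻¹' ball θ ε) := by
    have himage : (height '' leaf V z).OrdConnected :=
      (isPreconnected_image_height_leaf z).ordConnected
    have hball : (ball θ ε).OrdConnected := Real.ball_eq_Ioo θ ε ▸ ordConnected_Ioo
    have := isPreconnected_inter_preimage_of_injOn (isOpenMap_height h.isOpenMap) (h.isOpen_leaf z)
      (h.injOn_height_leaf z) (himage.inter hball).isPreconnected inter_subset_left
    rwa [preimage_inter, ← inter_assoc, inter_eq_left.2 (subset_preimage_image _ _)] at this
  refine hconn.subset_of_closure_inter_subset (hU.isOpen.preimage continuous_base)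
    ⟨z, ⟨mem_leaf_self hzV, ht⟩, hz⟩ ?_
  rintro w ⟨hw, -, hwt⟩
  exact hU.base_mem_of_mem_closure (continuous_base.closure_preimage_subset U hw) hwt

theorem notMem_image_height_leaf : θ ∉ height '' leaf V z := by
  rintro ⟨w, hw, hwθ⟩
  have hwU := hU.leaf_inter_preimage_ball_subset h hzV hz ht
    ⟨hw, by rw [mem_preimage, hwθ]; exact mem_ball_self hU.pos⟩
  have hwv := hU.base_eq_of_height_eq (subset_closure hwU) hwθ
  exact base_notMem_of_mem_leaf hw (hwv ▸ hU.mem_branch)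

theorem mem_closure_of_mem_closure_leaf {w : Unrolling p} (hw : w ∈ closure (leaf V z))
    (hwt : w.height ∈ ball θ ε) : w.base ∈ closure U := by
  refine closure_mono ?_ (mem_closure_image continuous_base.continuousAt
    ((isOpen_ball.preimage continuous_height).closure_inter ⟨hw, hwt⟩))
  exact image_subset_iff.2 (hU.leaf_inter_preimage_ball_subset h hzV hz ht)

theorem base_eq_of_mem_closure_leaf {w : Unrolling p} (hw : w ∈ closure (leaf V z))
    (hwθ : w.height = θ) : w.base = v :=
  hU.base_eq_of_height_eq (hU.mem_closure_of_mem_closure_leaf h hzV hz ht hw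
    (hwθ ▸ mem_ball_self hU.pos)) hwθ

theorem exists_image_height_leaf_eq_Ioo : ∃ a b, a < b ∧ height '' leaf V z = Ioo a b := by
  have hθ := hU.notMem_image_height_leaf h hzV hz ht
  obtain ⟨huniv, -⟩ | ⟨a, b, hab, himage, -⟩ := h.leaf_shape hzV
  · exact absurd (huniv ▸ mem_univ θ) hθ
  · exact ⟨a, b, hab, himage⟩

variable [CompactSpace G]

theorem subset_image_height_leaf {J : Set ℝ} (hJ : IsPreconnected J) (hJball : J ⊆ ball θ ε)
    (hθJ : θ ∉ J) (htJ : z.height ∈ J) : J ⊆ height '' leaf V z := by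
  refine hJ.subset_of_closure_inter_subset
    (h.isOpen_image_height_leaf z)
    ⟨z.height, htJ, z, mem_leaf_self hzV, rfl⟩ ?_
  rintro _ ⟨hs, hsJ⟩
  obtain ⟨w, hw, rfl⟩ := (isProperMap_height h.continuous).isClosedMap.closure_image_subset _ hs
  have hwU := hU.mem_closure_of_mem_closure_leaf h hzV hz ht hw (hJball hsJ)
  have hwV := hU.base_notMem_branch hwU (hJball hsJ) fun hwθ => hθJ (hwθ ▸ hsJ)
  exact ⟨w, mem_leaf_of_mem_closure hw hwV, rfl⟩

theorem mem_closure_image_height_leaf : θ ∈ closure (height '' leaf V z) := by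
  have hθball := mem_ball_self (x := θ) hU.pos
  have hconn : (ball θ ε).OrdConnected := Real.ball_eq_Ioo θ ε ▸ ordConnected_Ioo
  have hne : z.height ≠ θ := fun hzθ =>
    hU.notMem_image_height_leaf h hzV hz ht ⟨z, mem_leaf_self hzV, hzθ⟩
  obtain hlt | hlt := hne.lt_or_gt
  · refine closure_mono (hU.subset_image_height_leaf h hzV hz ht (J := Ico z.height θ)
      isPreconnected_Ico (Ico_subset_Icc_self.trans (hconn.out ht hθball)) (by simp)
      ⟨le_rfl, hlt⟩) ?_
    exact closure_Ico hlt.ne ▸ right_mem_Icc.2 hlt.le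
  · refine closure_mono (hU.subset_image_height_leaf h hzV hz ht (J := Ioc θ z.height)
      isPreconnected_Ioc (Ioc_subset_Icc_self.trans (hconn.out hθball ht)) (by simp)
      ⟨hlt, le_rfl⟩) ?_
    exact closure_Ioc hlt.ne ▸ left_mem_Icc.2 hlt.le

theorem mem_closure_image_base_leaf : v ∈ closure (base '' leaf V z) := by
  obtain ⟨w, hw, hwθ, -⟩ := h.exists_mem_closure_leaf_height_eq
    (hU.mem_closure_image_height_leaf h hzV hz ht) (hU.notMem_image_height_leaf h hzV hz ht)
  rw [← hU.base_eq_of_mem_closure_leaf h hzV hz ht hw hwθ]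
  exact mem_closure_image continuous_base.continuousAt hw

theorem left_eq_of_lt_height {a b : ℝ} (himage : height '' leaf V z = Ioo a b)
    (hlt : θ < z.height) : a = θ := by
  have hθ := hU.notMem_image_height_leaf h hzV hz ht
  have hθ' := hU.mem_closure_image_height_leaf h hzV hz ht
  have hz' := himage.subset ⟨z, mem_leaf_self hzV, rfl⟩
  rw [himage] at hθ hθ'
  rw [closure_Ioo (hz'.1.trans hz'.2).ne] at hθ'
  exact hθ'.1.eq_of_not_lt fun haθ => hθ ⟨haθ, hlt.trans hz'.2⟩

theorem right_eq_of_height_lt {a b : ℝ} (himage : height '' leaf V z = Ioo a b)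
    (hlt : z.height < θ) : b = θ := by
  have hθ := hU.notMem_image_height_leaf h hzV hz ht
  have hθ' := hU.mem_closure_image_height_leaf h hzV hz ht
  have hz' := himage.subset ⟨z, mem_leaf_self hzV, rfl⟩
  rw [himage] at hθ hθ'
  rw [closure_Ioo (hz'.1.trans hz'.2).ne] at hθ'
  exact (hθ'.2.eq_of_not_lt fun hθb => hθ ⟨hz'.1.trans hlt, hθb⟩).symm

end Leaf

end IsIsolatingNhd

end IsolatingNhd

section LocalEdges

open Unrolling

variable {G : Type*} [TopologicalSpace G] {p : G → UnitAddCircle} {V : Set G}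

/-- The edges that pass through a point of `U` over the point `t` of the circle. -/
def localEdges (p : G → UnitAddCircle) (V U : Set G) (t : ℝ) : Set (Set G) :=
  connectedComponentIn Vᶜ '' (U ∩ p ⁻¹' {(t : UnitAddCircle)})

theorem mem_localEdges {U : Set G} {t : ℝ} {e : Set G} : e ∈ localEdges p V U t ↔
    ∃ z : Unrolling p, z.base ∈ U ∧ z.height = t ∧ connectedComponentIn Vᶜ z.base = e := by
  constructor
  · rintro ⟨x, ⟨hxU, hx⟩, rfl⟩
    obtain ⟨z, rfl, hz⟩ := exists_base_eq_height_eq hx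
    exact ⟨z, hxU, hz, rfl⟩
  · rintro ⟨z, hzU, rfl, rfl⟩
    exact ⟨z.base, ⟨hzU, z.apply_base⟩, rfl⟩

theorem eq_zero_of_notMem_uIcc {t θ : ℝ} {k : ℤ} (ht : |t - θ| < 1) (h₁ : θ ∉ uIcc t (t + k))
    (h₂ : θ ∉ uIcc (t - k) t) : k = 0 := by
  rw [mem_uIcc] at h₁ h₂
  obtain ⟨hlt, hgt⟩ := abs_lt.1 ht
  by_contra hk
  obtain hk | hk := Int.lt_or_gt_of_ne hk
  · have hk' : (k : ℝ) ≤ -1 := by exact_mod_cast Int.le_sub_one_of_lt hk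
    obtain h | h := le_total t θ
    · exact h₂ (.inr ⟨h, by linarith⟩)
    · exact h₁ (.inr ⟨by linarith, h⟩)
  · have hk' : (1 : ℝ) ≤ k := by exact_mod_cast hk
    obtain h | h := le_total t θ
    · exact h₁ (.inl ⟨h, by linarith⟩)
    · exact h₂ (.inl ⟨by linarith, h⟩)

theorem IsBranchedCover.exists_shift_mem_leaf_of_connectedComponentIn_eq [T1Space G]
    (h : IsBranchedCover p V) {z w : Unrolling p} (hz : z.base ∉ V) (hw : w.base ∉ V)
    (heq : connectedComponentIn Vᶜ z.base = connectedComponentIn Vᶜ w.base) :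
    ∃ k : ℤ, w ∈ leaf V (shift k z) := by
  rw [← h.image_base_leaf hz] at heq
  obtain ⟨u, hu, huw⟩ := heq.symm ▸ mem_connectedComponentIn hw
  obtain ⟨k, rfl⟩ := exists_shift_eq huw
  exact ⟨k, image_shift_leaf k hz ▸ mem_image_of_mem _ hu⟩

theorem IsBranchedCover.finite_localEdges (h : IsBranchedCover p V) (U : Set G) (t : ℝ) :
    (localEdges p V U t).Finite :=
  ((h.finite_fiber t).subset inter_subset_right).image _

namespace IsIsolatingNhd

variable {v : G} {U : Set G} {θ ε : ℝ} {n : ℕ} {s t : ℝ} (hU : IsIsolatingNhd p V v U θ ε n)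
include hU

theorem sub_half_mem_ball : θ - ε / 2 ∈ ball θ ε := by
  simp [abs_of_pos hU.pos, hU.pos]

theorem add_half_mem_ball : θ + ε / 2 ∈ ball θ ε := by
  simp [abs_of_pos hU.pos, hU.pos]

theorem exists_of_mem_localEdges (ht : t ∈ ball θ ε) (hne : t ≠ θ) {e : Set G}
    (he : e ∈ localEdges p V U t) : ∃ z : Unrolling p, z.base ∉ V ∧ z.base ∈ U ∧ z.height = t ∧
      connectedComponentIn Vᶜ z.base = e := by
  obtain ⟨z, hzU, rfl, rfl⟩ := mem_localEdges.1 he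
  exact ⟨z, hU.base_notMem_branch (subset_closure hzU) ht hne, hzU, rfl, rfl⟩

theorem localEdges_subset_setComponents (ht : t ∈ ball θ ε) (hne : t ≠ θ) :
    localEdges p V U t ⊆ setComponents Vᶜ := fun e he => by
  obtain ⟨z, hzV, -, -, rfl⟩ := hU.exists_of_mem_localEdges ht hne he
  exact ⟨z.base, hzV, rfl⟩

variable [T2Space G] (h : IsBranchedCover p V)
include h

theorem injOn_connectedComponentIn (ht : t ∈ ball θ ε) (hne : t ≠ θ) :
    InjOn (connectedComponentIn Vᶜ) (U ∩ p ⁻¹' {(t : UnitAddCircle)}) := by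
  rintro x ⟨hxU, hx⟩ y ⟨hyU, hy⟩ hxy
  obtain ⟨z, rfl, hzt⟩ := exists_base_eq_height_eq hx
  obtain ⟨w, rfl, rfl⟩ := exists_base_eq_height_eq hy
  have hzV := hU.base_notMem_branch (subset_closure hxU) (hzt ▸ ht) (hzt ▸ hne)
  have hwV := hU.base_notMem_branch (subset_closure hyU) ht hne
  obtain ⟨k, hk⟩ := h.exists_shift_mem_leaf_of_connectedComponentIn_eq hzV hwV hxy
  have hθz := hU.notMem_image_height_leaf h hzV hxU (hzt ▸ ht)
  have hθw := hU.notMem_image_height_leaf h hwV hyU ht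
  have hzH : w.height ∈ height '' leaf V z := ⟨z, mem_leaf_self hzV, hzt⟩
  have hwH : w.height ∈ height '' leaf V w := ⟨w, mem_leaf_self hwV, rfl⟩
  have hshift := image_height_leaf_shift k hzV
  rw [leaf_eq_of_mem hk] at hshift
  have hzH' : w.height - k ∈ height '' leaf V z := by
    obtain ⟨s, hs, hsw⟩ := hshift ▸ hwH
    rwa [← hsw, add_sub_cancel_right]
  have hwH' : w.height + k ∈ height '' leaf V w := hshift ▸ mem_image_of_mem _ hzH
  obtain rfl : k = 0 := eq_zero_of_notMem_uIcc ((mem_ball.1 ht).trans_le hU.le_one)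
    (fun hθ => hθw ((isPreconnected_image_height_leaf w).ordConnected.uIcc_subset hwH hwH' hθ))
    (fun hθ => hθz ((isPreconnected_image_height_leaf z).ordConnected.uIcc_subset hzH' hzH hθ))
  have hwz : w ∈ leaf V z := by
    rwa [show shift 0 z = z from Unrolling.ext rfl (by simp)] at hk
  rw [h.injOn_height_leaf z (mem_leaf_self hzV) hwz hzt]

theorem ncard_localEdges (ht : t ∈ ball θ ε) (hne : t ≠ θ) : (localEdges p V U t).ncard = n :=
  (hU.injOn_connectedComponentIn h ht hne).ncard_image.trans (hU.ncard_inter_fiber t ht hne)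

theorem exists_mem_leaf_connectedComponentIn_mem_localEdges {y z : Unrolling p}
    (hy : y ∈ closure (leaf V z)) (hyv : y.base = v) :
    ∃ w ∈ leaf V z, w.height - y.height + θ ∈ ball θ ε ∧
      connectedComponentIn Vᶜ z.base ∈ localEdges p V U (w.height - y.height + θ) := by
  have hnhds : base ⁻¹' U ∩ height ⁻¹' ball y.height ε ∈ 𝓝 y :=
    inter_mem (continuous_base.continuousAt (hU.isOpen.mem_nhds (hyv ▸ hU.mem)))
      (continuous_height.continuousAt (ball_mem_nhds _ hU.pos))
  obtain ⟨w, ⟨hwU, hwy⟩, hw⟩ := mem_closure_iff_nhds.1 hy _ hnhds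
  have hzV := base_notMem_of_leaf_nonempty ⟨w, hw⟩
  refine ⟨w, hw, by simpa [Real.dist_eq] using hwy, w.base, ⟨hwU, ?_⟩, ?_⟩
  · have hyθ : (y.height : UnitAddCircle) = θ := by rw [← y.apply_base, hyv, hU.apply_eq]
    simp [w.apply_base, hyθ]
  · exact (connectedComponentIn_eq (h.image_base_leaf hzV ▸ mem_image_of_mem _ hw)).symm

variable [CompactSpace G]

theorem localEdges_subset (hs : s ∈ ball θ ε) (ht : t ∈ ball θ ε) (hθ : θ ∉ uIcc s t) :
    localEdges p V U s ⊆ localEdges p V U t := by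
  have hconn : (ball θ ε).OrdConnected := Real.ball_eq_Ioo θ ε ▸ ordConnected_Ioo
  intro e he
  obtain ⟨z, hzV, hzU, rfl, rfl⟩ := hU.exists_of_mem_localEdges hs
    (fun hsθ => hθ (hsθ ▸ left_mem_uIcc)) he
  obtain ⟨w, hw, rfl⟩ := hU.subset_image_height_leaf h hzV hzU hs isPreconnected_uIcc
    (hconn.uIcc_subset hs ht) hθ left_mem_uIcc right_mem_uIcc
  refine mem_localEdges.2 ⟨w, hU.leaf_inter_preimage_ball_subset h hzV hzU hs ⟨hw, ht⟩, rfl, ?_⟩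
  exact (connectedComponentIn_eq (h.image_base_leaf hzV ▸ mem_image_of_mem _ hw)).symm

theorem mem_closure_of_mem_localEdges (ht : t ∈ ball θ ε) (hne : t ≠ θ) {e : Set G}
    (he : e ∈ localEdges p V U t) : v ∈ closure e := by
  obtain ⟨z, hzV, hzU, rfl, rfl⟩ := hU.exists_of_mem_localEdges ht hne he
  exact h.image_base_leaf hzV ▸ hU.mem_closure_image_base_leaf h hzV hzU ht

theorem localEdges_subset_sub (ht : t ∈ ball θ ε) (hlt : t < θ) :
    localEdges p V U t ⊆ localEdges p V U (θ - ε / 2) :=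
  hU.localEdges_subset h ht hU.sub_half_mem_ball fun hθ => by
    obtain hθ | hθ := mem_uIcc.1 hθ <;> linarith [hθ.1, hθ.2, hU.pos]

theorem localEdges_subset_add (ht : t ∈ ball θ ε) (hlt : θ < t) :
    localEdges p V U t ⊆ localEdges p V U (θ + ε / 2) :=
  hU.localEdges_subset h ht hU.add_half_mem_ball fun hθ => by
    obtain hθ | hθ := mem_uIcc.1 hθ <;> linarith [hθ.1, hθ.2, hU.pos]

theorem mem_closure_iff_mem_localEdges {e : Set G} (he : e ∈ setComponents Vᶜ) :
    v ∈ closure e ↔ e ∈ localEdges p V U (θ - ε / 2) ∪ localEdges p V U (θ + ε / 2) := by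
  have hpos := half_pos hU.pos
  refine ⟨fun hv => ?_, ?_⟩
  · obtain ⟨x, -, rfl⟩ := he
    have hnhds : U ∩ p ⁻¹' ((↑) '' ball θ ε) ∈ 𝓝 v := inter_mem (hU.isOpen.mem_nhds hU.mem)
      (h.continuous.continuousAt (hU.apply_eq ▸
        QuotientAddGroup.isOpenMap_coe.image_mem_nhds (ball_mem_nhds θ hU.pos)))
    obtain ⟨y, ⟨hyU, t, ht, hty⟩, hye⟩ := mem_closure_iff_nhds.1 hv _ hnhds
    obtain ⟨z, rfl, rfl⟩ := exists_base_eq_height_eq hty.symm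
    have hzV : z.base ∉ V := connectedComponentIn_subset _ _ hye
    have he : connectedComponentIn Vᶜ x ∈ localEdges p V U z.height :=
      mem_localEdges.2 ⟨z, hyU, rfl, (connectedComponentIn_eq hye).symm⟩
    have hne : z.height ≠ θ := fun hθ =>
      hzV (hU.base_eq_of_height_eq (subset_closure hyU) hθ ▸ hU.mem_branch)
    exact hne.lt_or_gt.imp (fun hlt => hU.localEdges_subset_sub h ht hlt he)
      (fun hlt => hU.localEdges_subset_add h ht hlt he)
  · rintro (he | he)
    · exact hU.mem_closure_of_mem_localEdges h hU.sub_half_mem_ball (by linarith) he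
    · exact hU.mem_closure_of_mem_localEdges h hU.add_half_mem_ball (by linarith) he

theorem mem_localEdges_of_closure_sdiff_eq {e : Set G} (he : e ∈ setComponents Vᶜ)
    (hv : closure e \ e = {v}) :
    e ∈ localEdges p V U (θ - ε / 2) ∩ localEdges p V U (θ + ε / 2) := by
  have hve : v ∈ closure e := (hv ▸ mem_singleton v : v ∈ closure e \ e).1
  obtain ⟨t, ht, hne, het⟩ : ∃ t ∈ ball θ ε, t ≠ θ ∧ e ∈ localEdges p V U t := by
    have hpos := half_pos hU.pos
    obtain he | he := (hU.mem_closure_iff_mem_localEdges h he).1 hve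
    · exact ⟨_, hU.sub_half_mem_ball, by linarith, he⟩
    · exact ⟨_, hU.add_half_mem_ball, by linarith, he⟩
  obtain ⟨z, hzV, hzU, rfl, rfl⟩ := hU.exists_of_mem_localEdges ht hne het
  obtain ⟨a, b, hab, himage⟩ := hU.exists_image_height_leaf_eq_Ioo h hzV hzU ht
  have hend (c : ℝ) (hc : c ∈ Icc a b) (hc' : c ∉ Ioo a b) : ∃ w ∈ leaf V z,
      w.height - c + θ ∈ ball θ ε ∧
        connectedComponentIn Vᶜ z.base ∈ localEdges p V U (w.height - c + θ) := by
    obtain ⟨y, hy, rfl, hyV⟩ := h.exists_mem_closure_leaf_height_eq (z := z)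
      (by rwa [himage, closure_Ioo hab.ne]) (by rwa [himage])
    have hye : y.base ∈ closure (connectedComponentIn Vᶜ z.base) :=
      h.image_base_leaf hzV ▸ mem_closure_image continuous_base.continuousAt hy
    have hyv : y.base = v := hv.subset ⟨hye, fun h' => connectedComponentIn_subset _ _ h' hyV⟩
    exact hU.exists_mem_leaf_connectedComponentIn_mem_localEdges h hy hyv
  obtain ⟨w, hw, hwa, hea⟩ := hend a (left_mem_Icc.2 hab.le) (by simp)
  obtain ⟨u, hu, hub, heb⟩ := hend b (right_mem_Icc.2 hab.le) (by simp)
  have haw : a < w.height := (himage.subset (mem_image_of_mem _ hw)).1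
  have hbu : u.height < b := (himage.subset (mem_image_of_mem _ hu)).2
  exact ⟨hU.localEdges_subset_sub h hub (by linarith) heb,
    hU.localEdges_subset_add h hwa (by linarith) hea⟩

theorem closure_sdiff_eq_of_mem_localEdges {e : Set G}
    (he : e ∈ localEdges p V U (θ - ε / 2) ∩ localEdges p V U (θ + ε / 2)) :
    closure e \ e = {v} := by
  have hpos := half_pos hU.pos
  have hsub := hU.sub_half_mem_ball
  have hadd := hU.add_half_mem_ball
  have hve := hU.mem_closure_of_mem_localEdges h hsub (by linarith) he.1
  obtain ⟨w, hwV, hwU, hwθ, hwe⟩ := hU.exists_of_mem_localEdges hsub (by linarith) he.1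
  obtain ⟨z, hzV, hzU, hzθ, rfl⟩ := hU.exists_of_mem_localEdges hadd (by linarith) he.2
  rw [← hwθ] at hsub
  rw [← hzθ] at hadd
  obtain ⟨k, hk⟩ := h.exists_shift_mem_leaf_of_connectedComponentIn_eq hzV hwV hwe.symm
  have hleaf := leaf_eq_of_mem hk
  obtain ⟨a, b, -, himage⟩ := hU.exists_image_height_leaf_eq_Ioo h hzV hzU hadd
  have himage' : height '' leaf V w = Ioo (a + k) (b + k) := by
    rw [← hleaf, image_height_leaf_shift k hzV, himage, image_add_const_Ioo]
  obtain rfl : a = θ := hU.left_eq_of_lt_height h hzV hzU hadd himage (by linarith)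
  have hbk : b + k = a := hU.right_eq_of_height_lt h hwV hwU hsub himage' (by linarith)
  refine subset_antisymm (fun x hx => ?_) (singleton_subset_iff.2
    ⟨hve, fun hv => connectedComponentIn_subset _ _ hv hU.mem_branch⟩)
  rw [← h.image_base_leaf hzV] at hx
  obtain ⟨y, hy, rfl, hya | hyb⟩ := h.exists_mem_closure_leaf_base_eq himage hx
  · exact hU.base_eq_of_mem_closure_leaf h hzV hzU hadd hy hya
  · have hyk : shift k y ∈ closure (leaf V w) := by
      rw [← hleaf, ← image_shift_leaf k hzV]
      exact mem_closure_image (shift k).continuous.continuousAt hy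
    exact hU.base_eq_of_mem_closure_leaf (w := shift k y) h hwV hwU hsub hyk
      (by rw [height_shift, hyb, hbk])

theorem vertexDegree_eq : vertexDegree univ V v = 2 * n := by
  have hpos := half_pos hU.pos
  have hsub : θ - ε / 2 ≠ θ := by linarith
  have hadd : θ + ε / 2 ≠ θ := by linarith
  have hcomp : localEdges p V U (θ - ε / 2) ∪ localEdges p V U (θ + ε / 2) ⊆ setComponents Vᶜ :=
    union_subset (hU.localEdges_subset_setComponents hU.sub_half_mem_ball hsub)
      (hU.localEdges_subset_setComponents hU.add_half_mem_ball hadd)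
  have hclosure : {e ∈ setComponents Vᶜ | v ∈ closure e \ e} =
      localEdges p V U (θ - ε / 2) ∪ localEdges p V U (θ + ε / 2) := by
    refine subset_antisymm (fun e he => (hU.mem_closure_iff_mem_localEdges h he.1).1 he.2.1)
      fun e he => ⟨hcomp he, (hU.mem_closure_iff_mem_localEdges h (hcomp he)).2 he, fun hv => ?_⟩
    obtain ⟨x, -, rfl⟩ := hcomp he
    exact connectedComponentIn_subset _ _ hv hU.mem_branch
  have hloop : {e ∈ setComponents Vᶜ | closure e \ e = {v}} =
      localEdges p V U (θ - ε / 2) ∩ localEdges p V U (θ + ε / 2) :=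
    subset_antisymm (fun e he => hU.mem_localEdges_of_closure_sdiff_eq h he.1 he.2)
      fun e he => ⟨hcomp (.inl he.1), hU.closure_sdiff_eq_of_mem_localEdges h he⟩
  rw [vertexDegree, graphEdges, ← compl_eq_univ_sdiff, hclosure, hloop,
    ncard_union_add_ncard_inter _ _ (h.finite_localEdges U _)
      (h.finite_localEdges U _),
    hU.ncard_localEdges h hU.sub_half_mem_ball hsub,
    hU.ncard_localEdges h hU.add_half_mem_ball hadd, two_mul]

end IsIsolatingNhd

end LocalEdges

section Graph

variable {G : Type*} [TopologicalSpace G]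

theorem closure_sdiff_subset_of_mem_setComponents {A e : Set G} (he : e ∈ setComponents A) :
    closure e \ e ⊆ Aᶜ := by
  obtain ⟨x, -, rfl⟩ := he
  exact fun y ⟨hy, hye⟩ hyA => hye (mem_connectedComponentIn_of_mem_closure hy hyA)

open Unrolling

variable [CompactSpace G] [T2Space G] {p : G → UnitAddCircle} {V : Set G}

namespace IsBranchedCover

theorem finite_setOf_mem_closure (h : IsBranchedCover p V) {v : G} (hv : v ∈ V) :
    {e ∈ setComponents Vᶜ | v ∈ closure e}.Finite := by
  obtain ⟨U, θ, ε, n, -, hU⟩ := h.exists_isIsolatingNhd hv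
  exact ((h.finite_localEdges U _).union (h.finite_localEdges U _)).subset
    fun e he => (hU.mem_closure_iff_mem_localEdges h he.1).1 he.2

theorem finite_setComponents (h : IsBranchedCover p V) : (setComponents Vᶜ).Finite := by
  refine (((h.finite_fiber 0).image (connectedComponentIn Vᶜ)).union
    (h.finite_branch.biUnion fun v hv => h.finite_setOf_mem_closure hv)).subset ?_
  rintro _ ⟨x, hx, rfl⟩
  obtain ⟨z, rfl⟩ := base_surjective (p := p) x
  obtain ⟨huniv, -⟩ | ⟨a, b, hab, himage, -⟩ := h.leaf_shape hx
  · obtain ⟨w, hw, hw0⟩ := huniv.symm ▸ mem_univ (0 : ℝ)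
    exact .inl ⟨w.base, by simp [w.apply_base, hw0],
      (connectedComponentIn_eq (h.image_base_leaf hx ▸ mem_image_of_mem _ hw)).symm⟩
  · obtain ⟨y, hy, -, hyV⟩ := h.exists_mem_closure_leaf_height_eq (z := z) (a := a)
      (by rw [himage, closure_Ioo hab.ne]; exact left_mem_Icc.2 hab.le) (by simp [himage])
    exact .inr (mem_biUnion hyV ⟨⟨z.base, hx, rfl⟩,
      h.image_base_leaf hx ▸ mem_closure_image continuous_base.continuousAt hy⟩)

theorem isLemniscateGraphWith_univ (h : IsBranchedCover p V) : IsLemniscateGraphWith univ V := by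
  have hdeg (v) (hv : v ∈ V) : ∃ n ≥ 2, vertexDegree univ V v = 2 * n := by
    obtain ⟨U, θ, ε, n, hn, hU⟩ := h.exists_isIsolatingNhd hv
    exact ⟨n, hn, hU.vertexDegree_eq h⟩
  have hedges : graphEdges univ V = setComponents Vᶜ := by
    rw [graphEdges, ← compl_eq_univ_sdiff]
  refine ⟨subset_univ V, h.finite_branch, hedges ▸ h.finite_setComponents, fun e he => ?_,
    fun v hv => ?_, fun v hv => ?_⟩
  · rw [hedges] at he
    obtain ⟨x, hx, rfl⟩ := id he
    obtain ⟨z, rfl⟩ := base_surjective (p := p) x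
    have hshape := h.leaf_shape hx
    rw [h.image_base_leaf hx] at hshape
    obtain ⟨-, hcurve⟩ | ⟨-, -, -, -, harc⟩ := hshape
    · exact .inl hcurve
    · exact .inr ⟨harc, (closure_sdiff_subset_of_mem_setComponents he).trans (compl_compl V).subset⟩
  · obtain ⟨n, -, hn⟩ := hdeg v hv
    exact hn ▸ even_two_mul n
  · obtain ⟨n, hn2, hn⟩ := hdeg v hv
    omega

end IsBranchedCover

end Graph

section Image

variable {X Y : Type*} [TopologicalSpace X] [TopologicalSpace Y] {i : X → Y} {A V : Set X}

theorem image_connectedComponentIn_of_isInducing (hi : IsInducing i) {x : X} (hx : x ∈ A) :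
    i '' connectedComponentIn A x = connectedComponentIn (i '' A) (i x) := by
  refine (hi.continuous.continuousOn.image_connectedComponentIn_subset hx).antisymm ?_
  set C := connectedComponentIn (i '' A) (i x)
  have hC : i '' (A ∩ i ⁻¹' C) = C := by
    rw [image_inter_preimage, inter_eq_right]
    exact connectedComponentIn_subset _ _
  have hconn : IsPreconnected (A ∩ i ⁻¹' C) := by
    rw [← hi.isPreconnected_image, hC]
    exact isPreconnected_connectedComponentIn
  rw [← hC]
  exact image_mono (hconn.subset_connectedComponentIn
    ⟨hx, mem_connectedComponentIn (mem_image_of_mem i hx)⟩ inter_subset_left)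

theorem setComponents_image (hi : IsInducing i) :
    setComponents (i '' A) = image i '' setComponents A := by
  ext e
  constructor
  · rintro ⟨_, ⟨x, hx, rfl⟩, rfl⟩
    exact ⟨_, ⟨x, hx, rfl⟩, image_connectedComponentIn_of_isInducing hi hx⟩
  · rintro ⟨_, ⟨x, hx, rfl⟩, rfl⟩
    exact ⟨i x, mem_image_of_mem i hx, image_connectedComponentIn_of_isInducing hi hx⟩

theorem graphEdges_image (hi : IsEmbedding i) :
    graphEdges (i '' A) (i '' V) = image i '' graphEdges A V := by
  rw [graphEdges, ← image_sdiff hi.injective, setComponents_image hi.isInducing, graphEdges]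

theorem closure_image_sdiff_image (hi : IsClosedEmbedding i) (e : Set X) :
    closure (i '' e) \ i '' e = i '' (closure e \ e) := by
  rw [hi.closure_image_eq, image_sdiff hi.injective]

theorem vertexDegree_image (hi : IsClosedEmbedding i) (v : X) :
    vertexDegree (i '' A) (i '' V) (i v) = vertexDegree A V v := by
  have hncard (P : Set Y → Prop) : {e ∈ graphEdges (i '' A) (i '' V) | P e}.ncard =
      {e ∈ graphEdges A V | P (i '' e)}.ncard := by
    rw [graphEdges_image hi.isEmbedding, ← ncard_image_of_injective _ hi.injective.image_injective]
    congr 1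
    aesop
  rw [vertexDegree, hncard, hncard, vertexDegree]
  simp only [closure_image_sdiff_image hi, hi.injective.mem_set_image, ← image_singleton,
    hi.injective.image_injective.eq_iff]

theorem IsLemniscateGraphWith.image (h : IsLemniscateGraphWith A V) (hi : IsClosedEmbedding i) :
    IsLemniscateGraphWith (i '' A) (i '' V) where
  vertex_subset := image_mono h.vertex_subset
  vertex_finite := h.vertex_finite.image i
  edges_finite := graphEdges_image hi.isEmbedding ▸ h.edges_finite.image _
  edge_shape := by
    rw [graphEdges_image hi.isEmbedding, forall_mem_image]
    intro e he
    rw [closure_image_sdiff_image hi]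
    have φ := hi.isEmbedding.homeomorphImage e
    obtain ⟨⟨ψ⟩⟩ | ⟨⟨ψ⟩, hV⟩ := h.edge_shape e he
    · exact .inl ⟨φ.symm.trans ψ⟩
    · exact .inr ⟨⟨φ.symm.trans ψ⟩, image_mono hV⟩
  degree_even := by
    rintro _ ⟨v, hv, rfl⟩
    exact vertexDegree_image hi v ▸ h.degree_even v hv
  degree_ge_four := by
    rintro _ ⟨v, hv, rfl⟩
    exact vertexDegree_image hi v ▸ h.degree_ge_four v hv

end Image

section Preimage

variable {X Y Z : Type*} [TopologicalSpace X] [TopologicalSpace Y] [TopologicalSpace Z]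
  {f : X → Y} {n : ℕ}

theorem HasLocalDegree.restrictPreimage {K : Set Y} {x : f ⁻¹' K} (h : HasLocalDegree f x n) :
    HasLocalDegree (K.restrictPreimage f) x n := by
  intro W hW
  obtain ⟨W', hW', hWW'⟩ := mem_nhds_subtype _ _ _ |>.1 hW
  obtain ⟨U, hUW, hU, hxU, hcount⟩ := h W' hW'
  have htend : Tendsto ((↑) : K → Y) (𝓝[≠] K.restrictPreimage f x) (𝓝[≠] f x) :=
    continuous_subtype_val.continuousAt.continuousWithinAt.tendsto_nhdsWithin
      fun y hy hyx => hy (Subtype.ext hyx)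
  refine ⟨Subtype.val ⁻¹' U, (preimage_mono hUW).trans hWW', hU.preimage continuous_subtype_val,
    hxU, ?_⟩
  filter_upwards [htend.eventually hcount] with y hy
  rw [← hy, ← ncard_image_of_injective _ Subtype.val_injective]
  congr 1
  ext z
  constructor
  · rintro ⟨w, ⟨hwU, hw⟩, rfl⟩
    exact ⟨hwU, congrArg Subtype.val hw⟩
  · rintro ⟨hzU, hz⟩
    exact ⟨⟨z, mem_preimage.2 ((show f z = y from hz) ▸ y.2)⟩, ⟨hzU, Subtype.ext hz⟩, rfl⟩

theorem HasLocalDegree.homeomorph_comp {x : X} (h : HasLocalDegree f x n) (φ : Y ≃ₜ Z) :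
    HasLocalDegree (φ ∘ f) x n := by
  intro W hW
  obtain ⟨U, hUW, hU, hxU, hcount⟩ := h W hW
  refine ⟨U, hUW, hU, hxU, ?_⟩
  rw [Function.comp_apply, ← φ.map_punctured_nhds_eq, eventually_map]
  filter_upwards [hcount] with y hy
  rw [← hy, preimage_comp, ← image_singleton, φ.injective.preimage_image]

theorem exists_mem_nhds_injOn_of_isLocalHomeomorphOn {s : Set X} (hf : IsLocalHomeomorphOn f s)
    {x : X} (hx : x ∈ s) : ∃ U ∈ 𝓝 x, InjOn f U := by
  obtain ⟨e, hxe, rfl⟩ := hf x hx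
  exact ⟨e.source, e.open_source.mem_nhds hxe, e.injOn⟩

variable [CompactSpace X] [T2Space X] [∀ x : X, (𝓝[≠] x).NeBot] [T2Space Y] {K : Set Y} {S : Set X}

theorem isBranchedCover_preimage (hf : Continuous f) (hfin : ∀ y, (f ⁻¹' {y}).Finite)
    (hS : S.Finite) (hloc : IsLocalHomeomorphOn f Sᶜ)
    (hpunct : ∀ y ∈ K, ∀ W ∈ 𝓝 y, ∃ B ∈ 𝓝 y, B ⊆ W ∧ IsPreconnected (B \ {y}))
    (φ : K ≃ₜ UnitAddCircle) :
    IsBranchedCover (φ ∘ K.restrictPreimage f) ((↑) ⁻¹' {x | ¬ ∃ U ∈ 𝓝 x, InjOn f U}) := by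
  have hdeg (x : f ⁻¹' K) : ∃ n ≠ 0, HasLocalDegree f x n := by
    obtain ⟨n, hn⟩ := exists_hasLocalDegree hf.isClosedMap hfin hS hloc x (hpunct _ x.2)
    exact ⟨n, hn.ne_zero hf.continuousAt hfin, hn⟩
  have hdeg' {x : f ⁻¹' K} {n : ℕ} (h : HasLocalDegree f x n) :
      HasLocalDegree (φ ∘ K.restrictPreimage f) x n := h.restrictPreimage.homeomorph_comp φ
  refine ⟨φ.continuous.comp hf.restrictPreimage, isOpenMap_iff_nhds_le.2 fun x => ?_,
    fun θ => ?_, ?_, fun x hx => ?_, fun x hx => ?_⟩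
  · obtain ⟨n, hn0, hn⟩ := hdeg x
    exact (hdeg' hn).nhds_le_map hn0
  · refine ((hfin (φ.symm θ)).preimage Subtype.val_injective.injOn).subset fun x hx => ?_
    exact congrArg Subtype.val (φ.eq_symm_apply.2 hx)
  · refine (hS.subset fun x hx => ?_).preimage Subtype.val_injective.injOn
    by_contra hxS
    exact hx (exists_mem_nhds_injOn_of_isLocalHomeomorphOn hloc hxS)
  · obtain ⟨U, hU, hinj⟩ := not_not.1 hx
    refine ⟨Subtype.val ⁻¹' U, continuous_subtype_val.continuousAt hU, fun y hy z hz hyz => ?_⟩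
    exact Subtype.ext (hinj hy hz (congrArg Subtype.val (φ.injective hyz)))
  · obtain ⟨n, hn0, hn⟩ := hdeg x
    have hn1 : n ≠ 1 := by
      rintro rfl
      exact hx (hn.exists_injOn hf.continuousAt (hfin _))
    exact ⟨n, by omega, hdeg' hn⟩

theorem rational_lemniscate_is_graph_general (hf : Continuous f) (hfin : ∀ y, (f ⁻¹' {y}).Finite)
    (hS : S.Finite) (hloc : IsLocalHomeomorphOn f Sᶜ) (hK : IsJordanCurve K)
    (hpunct : ∀ y ∈ K, ∀ W ∈ 𝓝 y, ∃ B ∈ 𝓝 y, B ⊆ W ∧ IsPreconnected (B \ {y})) :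
    IsLemniscateGraphWith (f ⁻¹' K) {x ∈ f ⁻¹' K | ¬ ∃ U ∈ 𝓝 x, InjOn f U} := by
  obtain ⟨φ⟩ := hK
  have hclosed : IsClosed K := (isCompact_iff_compactSpace.2
    (φ.trans (AddCircle.homeomorphCircle one_ne_zero).symm).symm.compactSpace).isClosed
  have : CompactSpace (f ⁻¹' K) := isCompact_iff_compactSpace.1 (hclosed.preimage hf).isCompact
  have hcover := isBranchedCover_preimage hf hfin hS hloc hpunct
    (φ.trans (AddCircle.homeomorphCircle one_ne_zero).symm)
  have hgraph := hcover.isLemniscateGraphWith_univ.image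
    (hclosed.preimage hf).isClosedEmbedding_subtypeVal
  rwa [image_univ, Subtype.range_val, Subtype.image_preimage_coe] at hgraph

end Preimage

section RationalMap

theorem isPreconnected_ball_sdiff_center {E : Type*} [NormedAddCommGroup E] [NormedSpace ℝ E]
    (hE : 1 < Module.rank ℝ E) (c : E) {δ : ℝ} (hδ : 0 < δ) :
    IsPreconnected (ball c δ \ {c}) := by
  let e : OpenPartialHomeomorph E E := .univBall c δ
  have hinj : Function.Injective e :=
    injOn_univ.1 (OpenPartialHomeomorph.univBall_source (E := E) c δ ▸ e.injOn)
  have hrange : e '' univ = ball c δ := by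
    rw [← OpenPartialHomeomorph.univBall_source (E := E) c δ, e.image_source_eq_target,
      OpenPartialHomeomorph.univBall_target c hδ]
  have himage : e '' {0}ᶜ = ball c δ \ {c} := by
    rw [compl_eq_univ_sdiff, image_sdiff hinj, hrange, image_singleton,
      OpenPartialHomeomorph.univBall_apply_zero]
  rw [← himage]
  exact (isConnected_compl_singleton_of_one_lt_rank hE 0).isPreconnected.image _
    (OpenPartialHomeomorph.continuous_univBall c δ).continuousOn

theorem exists_mem_nhds_isPreconnected_sdiff_singleton (w : ℂ) {W : Set (OnePoint ℂ)}
    (hW : W ∈ 𝓝 (w : OnePoint ℂ)) :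
    ∃ B ∈ 𝓝 (w : OnePoint ℂ), B ⊆ W ∧ IsPreconnected (B \ {(w : OnePoint ℂ)}) := by
  obtain ⟨δ, hδ, hball⟩ := Metric.mem_nhds_iff.1 (OnePoint.continuous_coe.continuousAt hW)
  refine ⟨(↑) '' ball w δ, OnePoint.isOpenEmbedding_coe.image_mem_nhds.2 (ball_mem_nhds w hδ),
    image_subset_iff.2 hball, ?_⟩
  rw [← image_singleton, ← image_sdiff OnePoint.coe_injective]
  exact (isPreconnected_ball_sdiff_center (by simp) w hδ).image _
    OnePoint.continuous_coe.continuousOn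

theorem isJordanCurve_coe_image_unitCircle :
    IsJordanCurve ((↑) '' {w : ℂ | ‖w‖ = 1} : Set (OnePoint ℂ)) := by
  have hsphere : {w : ℂ | ‖w‖ = 1} = sphere 0 1 := by
    ext w
    simp
  exact ⟨(OnePoint.isOpenEmbedding_coe.isEmbedding.homeomorphImage _).symm.trans
    (.setCongr hsphere)⟩

theorem sub_C_mul_ne_zero_of_isCoprime {K : Type*} [Field K] {p q : K[X]} (hpq : IsCoprime p q)
    (hdeg : ¬(p.natDegree = 0 ∧ q.natDegree = 0)) (c : K) : p - C c * q ≠ 0 := by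
  intro h0
  have hp : p = C c * q := sub_eq_zero.1 h0
  have hq : q.natDegree = 0 :=
    natDegree_eq_zero_of_isUnit (hpq.isUnit_of_dvd' (hp ▸ dvd_mul_left q (C c)) dvd_rfl)
  refine hdeg ⟨?_, hq⟩
  rw [hp, ← Nat.le_zero, ← hq]
  exact natDegree_C_mul_le c q

theorem right_ne_zero_of_isCoprime {K : Type*} [Field K] {p q : K[X]} (hpq : IsCoprime p q)
    (hdeg : ¬(p.natDegree = 0 ∧ q.natDegree = 0)) : q ≠ 0 := by
  rintro rfl
  exact hdeg ⟨natDegree_eq_zero_of_isUnit (isCoprime_zero_right.1 hpq), natDegree_zero⟩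

theorem wronskian_ne_zero_of_isCoprime {K : Type*} [Field K] [CharZero K] {p q : K[X]}
    (hpq : IsCoprime p q) (hdeg : ¬(p.natDegree = 0 ∧ q.natDegree = 0)) : wronskian p q ≠ 0 := by
  intro h0
  obtain ⟨hp, hq⟩ := hpq.wronskian_eq_zero_iff.1 h0
  exact hdeg ⟨derivative_eq_zero.1 hp, derivative_eq_zero.1 hq⟩

theorem finite_of_forall_eval_eq_zero {R : Type*} [CommRing R] [IsDomain R] {p : R[X]}
    (hp : p ≠ 0) {s : Set (OnePoint R)} (hs : ∀ z : R, (z : OnePoint R) ∈ s → p.eval z = 0) :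
    s.Finite := by
  refine (((finite_setOfPred_isRoot hp).image (↑)).insert OnePoint.infty).subset fun x hx => ?_
  induction x using OnePoint.rec with
  | infty => exact .inl rfl
  | coe z => exact .inr ⟨z, hs z hx, rfl⟩

theorem isLocalHomeomorphOn_eval_div_eval {𝕜 : Type*} [NontriviallyNormedField 𝕜]
    [CompleteSpace 𝕜] (p q : 𝕜[X]) : IsLocalHomeomorphOn (fun z => p.eval z / q.eval z)
      {z | q.eval z ≠ 0 ∧ (wronskian p q).eval z ≠ 0} := by
  refine IsLocalHomeomorphOn.mk _ _ fun z hz => ?_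
  have hder : HasStrictDerivAt (fun z => p.eval z / q.eval z)
      (((derivative p).eval z * q.eval z - p.eval z * (derivative q).eval z) / q.eval z ^ 2) z :=
    (p.hasStrictDerivAt z).fun_div (q.hasStrictDerivAt z) hz.1
  have hne : ((derivative p).eval z * q.eval z - p.eval z * (derivative q).eval z) /
      q.eval z ^ 2 ≠ 0 := by
    refine div_ne_zero (fun h0 => hz.2 ?_) (pow_ne_zero 2 hz.1)
    simp only [wronskian, eval_sub, eval_mul]
    linear_combination -h0
  exact ⟨(hder.hasStrictFDerivAt_equiv hne).toOpenPartialHomeomorph _,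
    HasStrictFDerivAt.mem_toOpenPartialHomeomorph_source _, fun _ _ => rfl⟩

theorem isLocalHomeomorphOn_of_eq_eval_div_eval {𝕜 : Type*} [NontriviallyNormedField 𝕜]
    [CompleteSpace 𝕜] {r : OnePoint 𝕜 → OnePoint 𝕜} {p q : 𝕜[X]}
    (hr : ∀ z : 𝕜, q.eval z ≠ 0 → r z = ((p.eval z / q.eval z : 𝕜) : OnePoint 𝕜)) :
    IsLocalHomeomorphOn r ((↑) '' {z : 𝕜 | q.eval z ≠ 0 ∧ (wronskian p q).eval z ≠ 0}) := by
  have hcoe : IsLocalHomeomorph ((↑) : 𝕜 → OnePoint 𝕜) :=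
    OnePoint.isOpenEmbedding_coe.isLocalHomeomorph
  have hdiv := (hcoe.isLocalHomeomorphOn (s := univ)).comp
    (isLocalHomeomorphOn_eval_div_eval p q) (mapsTo_univ _ _)
  refine IsLocalHomeomorphOn.of_comp_right (IsLocalHomeomorphOn.mk _ _ fun z hz => ?_)
    hcoe.isLocalHomeomorphOn
  obtain ⟨e, hze, he⟩ := hdiv z hz
  have hopen : IsOpen {z : 𝕜 | q.eval z ≠ 0} := isOpen_ne_fun q.continuous continuous_const
  exact ⟨e.restrOpen _ hopen, ⟨hze, hz.1⟩, fun w hw => (hr w hw.2).trans (congrFun he w)⟩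

variable {r : OnePoint ℂ → OnePoint ℂ}

theorem IsRationalMap.finite_fiber (hr : IsRationalMap r) (y : OnePoint ℂ) :
    (r ⁻¹' {y}).Finite := by
  obtain ⟨-, p, q, hpq, hdeg, hdiv⟩ := hr
  have hq := right_ne_zero_of_isCoprime hpq hdeg
  induction y using OnePoint.rec with
  | infty =>
    refine finite_of_forall_eval_eq_zero hq fun z hz => ?_
    by_contra hqz
    exact OnePoint.coe_ne_infty _ ((hdiv z hqz).symm.trans hz)
  | coe w =>
    refine finite_of_forall_eval_eq_zero
      (mul_ne_zero hq (sub_C_mul_ne_zero_of_isCoprime hpq hdeg w)) fun z hz => ?_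
    rw [eval_mul, eval_sub, eval_mul, eval_C, mul_eq_zero, or_iff_not_imp_left, sub_eq_zero]
    intro hqz
    exact (div_eq_iff hqz).1 (OnePoint.coe_injective ((hdiv z hqz).symm.trans hz))

theorem IsRationalMap.exists_isLocalHomeomorphOn_compl (hr : IsRationalMap r) :
    ∃ S : Set (OnePoint ℂ), S.Finite ∧ IsLocalHomeomorphOn r Sᶜ := by
  obtain ⟨-, p, q, hpq, hdeg, hdiv⟩ := hr
  refine ⟨((↑) '' {z : ℂ | q.eval z ≠ 0 ∧ (wronskian p q).eval z ≠ 0})ᶜ, ?_, ?_⟩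
  · refine finite_of_forall_eval_eq_zero (mul_ne_zero (right_ne_zero_of_isCoprime hpq hdeg)
      (wronskian_ne_zero_of_isCoprime hpq hdeg)) fun z hz => ?_
    by_contra hne
    rw [eval_mul] at hne
    exact hz (mem_image_of_mem _ (mul_ne_zero_iff.1 hne))
  · rw [compl_compl]
    exact isLocalHomeomorphOn_of_eq_eval_div_eval hdiv

end RationalMap

/-- Any rational lemniscate is a lemniscate graph, with vertex set the set of points
of the lemniscate at which the map is not locally injective (its critical points). -/
theorem rational_lemniscate_is_graph
    (r : OnePoint ℂ → OnePoint ℂ) (hr : IsRationalMap r) :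
    IsLemniscateGraphWith (lemniscate r)
      {z ∈ lemniscate r | ¬ ∃ U ∈ 𝓝 z, Set.InjOn r U} := by
  obtain ⟨S, hS, hloc⟩ := hr.exists_isLocalHomeomorphOn_compl
  refine rational_lemniscate_is_graph_general hr.1 hr.finite_fiber hS hloc
    isJordanCurve_coe_image_unitCircle ?_
  rintro _ ⟨w, -, rfl⟩ W hW
  exact exists_mem_nhds_isPreconnected_sdiff_singleton w hW

end
end

section
/- Let Ω ⊂ ℂ be a bounded lemniscate domain, let z₀ ∈ Ω, and set γ := ∂Ω. Let (δ_n) be a sequence of positive reals converging to 0, and for each n let h_n : γ → ℂ be a continuous injective map with sup_{z ∈ γ} |h_n(z) − z| < δ_n; assume z₀ ∉ h_n(γ) and let Ω_n be the connected component of ℂ \ h_n(γ) containing z₀. Suppose φ, φ_n : closure(𝔻) → ℂ are continuous maps that are injective and holomorphic on the open unit disc 𝔻, with φ(𝔻) = Ω, φ_n(𝔻) = Ω_n, φ(0) = φ_n(0) = z₀, and with φ′(0) and φ_n′(0) real and positive. Then φ_n → φ uniformly on closure(𝔻), i.e. sup_{z ∈ closure(𝔻)} |φ_n(z) − φ(z)|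 → 0 as n → ∞. -/
open Set Metric Topology Filter Polynomial

noncomputable section

/-- A lemniscate domain: a simply connected open set whose boundary is a
lemniscate graph. -/
def IsLemniscateDomain (Ω : Set ℂ) : Prop :=
  IsOpen Ω ∧ SimplyConnectedSpace Ω ∧ IsLemniscateGraph (frontier Ω)

/-! By the length–area inequality and the boundedness of `Ω_n`, every boundary point `ζ` of the disc
is cut off by a circular arc whose image under `φ_n` is short. The endpoints of that image lie on
`h_n(γ)`, which is locally connected uniformly in `n`, so a small connected piece of `h_n(γ)` joins
them; a winding argument, phrased through continuous logarithms, then traps the image of the region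
cut off by the arc in a small disc. Hence the `φ_n` are asymptotically equicontinuous up to the
boundary. As `h_n → id`, the domains `Ω_n` converge to their kernel `Ω`, so `φ_n → φ` locally
uniformly in the open disc by Carathéodory's kernel theorem, and equicontinuity upgrades this to
uniform convergence on the closed disc. -/

/-- Univalent functions: holomorphic and injective on `U`. -/
structure IsUnivalentOn (f : ℂ → ℂ) (U : Set ℂ) : Prop where
  differentiableOn : DifferentiableOn ℂ f U
  injOn : InjOn f U

namespace IsUnivalentOn

variable {f g : ℂ → ℂ} {U : Set ℂ}

lemma nhds_le_map_nhds (hf : IsUnivalentOn f U) (hU : IsOpen U) {z : ℂ} (hz : z ∈ U) :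
    𝓝 (f z) ≤ map f (𝓝 z) := by
  have han : AnalyticAt ℂ f z := hf.differentiableOn.analyticAt (hU.mem_nhds hz)
  refine han.eventually_constant_or_nhds_le_map_nhds.resolve_left fun hconst => ?_
  have heq : ∀ᶠ w in 𝓝[≠] z, w = z := by
    filter_upwards [nhdsWithin_le_nhds hconst, nhdsWithin_le_nhds (hU.mem_nhds hz)]
      with w hw hwU using hf.injOn hwU hz hw
  obtain ⟨w, hw, hne⟩ := (heq.and eventually_mem_nhdsWithin).exists
  exact hne hw

lemma isOpen_image (hf : IsUnivalentOn f U) (hU : IsOpen U) {s : Set ℂ} (hs : IsOpen s)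
    (hsU : s ⊆ U) : IsOpen (f '' s) := by
  rw [isOpen_iff_mem_nhds]
  rintro _ ⟨z, hz, rfl⟩
  exact hf.nhds_le_map_nhds hU (hsU hz) (image_mem_map (hs.mem_nhds hz))

lemma continuousAt_of_leftInvOn (hf : IsUnivalentOn f U) (hU : IsOpen U) (hg : LeftInvOn g f U)
    {z : ℂ} (hz : z ∈ U) : ContinuousAt g (f z) := by
  have h : Tendsto g (map f (𝓝 z)) (𝓝 (g (f z))) := by
    rw [tendsto_map'_iff, hg hz]
    refine tendsto_id.congr' ?_
    filter_upwards [hU.mem_nhds hz] with w hw using (hg hw).symm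
  exact h.mono_left (hf.nhds_le_map_nhds hU hz)

lemma eventually_deriv_ne_zero (hf : IsUnivalentOn f U) (hU : IsOpen U) {z : ℂ} (hz : z ∈ U) :
    ∀ᶠ w in 𝓝[≠] z, deriv f w ≠ 0 := by
  have han : AnalyticAt ℂ f z := hf.differentiableOn.analyticAt (hU.mem_nhds hz)
  refine han.deriv.eventually_eq_zero_or_eventually_ne_zero.resolve_left fun h0 => ?_
  obtain ⟨r, hr, hball⟩ := Metric.mem_nhds_iff.1 (inter_mem h0 (hU.mem_nhds hz))
  have hconst : ∀ w ∈ ball z r, f w = f z := fun w hw =>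
    isOpen_ball.is_const_of_deriv_eq_zero isPreconnected_ball
      (hf.differentiableOn.mono fun x hx => (hball hx).2) (fun x hx => (hball hx).1) hw
      (mem_ball_self hr)
  obtain ⟨w, hw, hne⟩ := ((eventually_nhdsWithin_of_eventually_nhds
    (ball_mem_nhds z hr)).and (eventually_mem_nhdsWithin (s := {z}ᶜ))).exists
  exact hne (hf.injOn (hball hw).2 hz (hconst w hw))

lemma hasDerivAt_of_leftInvOn (hf : IsUnivalentOn f U) (hU : IsOpen U) (hg : LeftInvOn g f U)
    {z : ℂ} (hz : z ∈ U) (hne : deriv f z ≠ 0) : HasDerivAt g (deriv f z)⁻¹ (f z) := by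
  refine HasDerivAt.of_local_left_inverse (f := f) (hf.continuousAt_of_leftInvOn hU hg hz) ?_ hne ?_
  · rw [hg hz]
    exact (hf.differentiableOn.differentiableAt (hU.mem_nhds hz)).hasDerivAt
  · filter_upwards [(hf.isOpen_image hU hU Subset.rfl).mem_nhds (mem_image_of_mem f hz)]
    rintro _ ⟨x, hx, rfl⟩
    rw [hg hx]

-- Zeros of `deriv f` are isolated, so their images are removable singularities of the inverse.
lemma differentiableOn_of_leftInvOn (hf : IsUnivalentOn f U) (hU : IsOpen U)
    (hg : LeftInvOn g f U) : DifferentiableOn ℂ g (f '' U) := by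
  rintro _ ⟨z, hz, rfl⟩
  obtain ⟨V, hVsub, hVo, hzV⟩ := _root_.mem_nhds_iff.1
    (inter_mem (mem_nhdsWithin_iff_eventually.1 (hf.eventually_deriv_ne_zero hU hz))
      (hU.mem_nhds hz))
  have hVU : V ⊆ U := fun w hw => (hVsub hw).2
  have hmem : f '' V ∈ 𝓝 (f z) := (hf.isOpen_image hU hVo hVU).mem_nhds (mem_image_of_mem f hzV)
  have hd : DifferentiableOn ℂ g (f '' V \ {f z}) := by
    rintro _ ⟨⟨w, hw, rfl⟩, hne⟩
    exact (hf.hasDerivAt_of_leftInvOn hU hg (hVU hw)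
      ((hVsub hw).1 fun h => hne (congrArg f h))).differentiableAt.differentiableWithinAt
  exact (((Complex.differentiableOn_compl_singleton_and_continuousAt_iff hmem).1
    ⟨hd, hf.continuousAt_of_leftInvOn hU hg hz⟩).differentiableAt hmem).differentiableWithinAt

lemma deriv_ne_zero (hf : IsUnivalentOn f U) (hU : IsOpen U) {z : ℂ} (hz : z ∈ U) :
    deriv f z ≠ 0 := by
  have hg : LeftInvOn (Function.invFunOn f U) f U := hf.injOn.leftInvOn_invFunOn
  have hgd := (hf.differentiableOn_of_leftInvOn hU hg).differentiableAt
    ((hf.isOpen_image hU hU Subset.rfl).mem_nhds (mem_image_of_mem f hz))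
  have hid : HasDerivAt (Function.invFunOn f U ∘ f) 1 z := by
    refine (hasDerivAt_id z).congr_of_eventuallyEq ?_
    filter_upwards [hU.mem_nhds hz] with w hw using hg hw
  have hmul := (hgd.hasDerivAt.comp z
    (hf.differentiableOn.differentiableAt (hU.mem_nhds hz)).hasDerivAt).unique hid
  exact right_ne_zero_of_mul_eq_one hmul

lemma notMem_image_of_mem_frontier (hf : IsUnivalentOn f U) (hU : IsOpen U) {ξ : ℂ}
    (hc : ContinuousWithinAt f U ξ) (hξ : ξ ∈ frontier U) : f ξ ∉ f '' U := by
  rintro ⟨ω, hω, hfω⟩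
  rw [hU.frontier_eq] at hξ
  obtain ⟨A, B, hA, hB, hωA, hξB, hAB⟩ := t2_separation (ne_of_mem_of_not_mem hω hξ.2)
  have hmem : f '' (A ∩ U) ∈ 𝓝 (f ξ) :=
    (hf.isOpen_image hU (hA.inter hU) inter_subset_right).mem_nhds
      (hfω ▸ mem_image_of_mem f ⟨hωA, hω⟩)
  have : (𝓝[U] ξ).NeBot := mem_closure_iff_nhdsWithin_neBot.1 hξ.1
  have hBU : ∀ᶠ x in 𝓝[U] ξ, x ∈ B ∧ x ∈ U :=
    inter_mem (mem_nhdsWithin_of_mem_nhds (hB.mem_nhds hξB)) self_mem_nhdsWithin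
  obtain ⟨x, ⟨y, hy, hyx⟩, hxB, hxU⟩ := ((hc.eventually hmem).and hBU).exists
  exact disjoint_left.1 hAB hy.1 (hf.injOn hy.2 hxU hyx ▸ hxB)

lemma apply_ne_of_mem_closure (hf : IsUnivalentOn f U) (hU : IsOpen U)
    (hc : ContinuousOn f (closure U)) {ξ x : ℂ} (hξ : ξ ∈ closure U) (hx : x ∈ U) (hne : ξ ≠ x) :
    f ξ ≠ f x := by
  intro h
  rcases closure_eq_self_union_frontier U ▸ hξ with hξU | hξU
  · exact hne (hf.injOn hξU hx h)
  · exact hf.notMem_image_of_mem_frontier hU ((hc ξ hξ).mono subset_closure) hξU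
      (h ▸ mem_image_of_mem f hx)

lemma frontier_image (hf : IsUnivalentOn f U) (hU : IsOpen U) (hb : Bornology.IsBounded U)
    (hc : ContinuousOn f (closure U)) : frontier (f '' U) = f '' frontier U := by
  have hclosure : closure (f '' U) = f '' closure U :=
    (closure_minimal (image_mono subset_closure)
      (hb.isCompact_closure.image_of_continuousOn hc).isClosed).antisymm hc.image_closure
  rw [(hf.isOpen_image hU hU Subset.rfl).frontier_eq, hclosure]
  refine Subset.antisymm ?_ ?_
  · rintro _ ⟨⟨ξ, hξ, rfl⟩, hy⟩
    exact mem_image_of_mem f (hU.frontier_eq ▸ ⟨hξ, fun h => hy (mem_image_of_mem f h)⟩)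
  · rintro _ ⟨ξ, hξ, rfl⟩
    have hξc := frontier_subset_closure hξ
    exact ⟨mem_image_of_mem f hξc,
      hf.notMem_image_of_mem_frontier hU ((hc ξ hξc).mono subset_closure) hξ⟩

end IsUnivalentOn

/-- `g` has a continuous logarithm on `A`. By a theorem of Eilenberg, a compact plane set `A` does
not separate `p` from `q` exactly when `z ↦ (z - p) / (z - q)` has one. -/
def HasContinuousLogOn {X : Type*} [TopologicalSpace X] (g : X → ℂ) (A : Set X) : Prop :=
  ∃ l : X → ℂ, ContinuousOn l A ∧ ∀ x ∈ A, Complex.exp (l x) = g x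

lemma eqOn_of_exp_eq_exp {X : Type*} [TopologicalSpace X] {A : Set X} (hA : IsPreconnected A)
    {l m : X → ℂ} (hl : ContinuousOn l A) (hm : ContinuousOn m A)
    (h : ∀ x ∈ A, Complex.exp (l x) = Complex.exp (m x)) {a : X} (ha : a ∈ A)
    (hla : l a = m a) : EqOn l m A :=
  Complex.isCoveringMap_exp.eqOn_of_comp_eqOn hA hl hm
    (fun x hx => Subtype.ext (h x hx)) ha hla

namespace HasContinuousLogOn

variable {X : Type*} [TopologicalSpace X] {g g' : X → ℂ} {A B : Set X}

lemma mono (h : HasContinuousLogOn g B) (hAB : A ⊆ B) : HasContinuousLogOn g A :=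
  let ⟨l, hl, hexp⟩ := h
  ⟨l, hl.mono hAB, fun x hx => hexp x (hAB hx)⟩

lemma congr (h : HasContinuousLogOn g A) (hg : EqOn g' g A) : HasContinuousLogOn g' A :=
  let ⟨l, hl, hexp⟩ := h
  ⟨l, hl, fun x hx => (hexp x hx).trans (hg hx).symm⟩

lemma div (h : HasContinuousLogOn g A) (h' : HasContinuousLogOn g' A) :
    HasContinuousLogOn (fun x => g x / g' x) A :=
  let ⟨l, hl, hexp⟩ := h
  let ⟨l', hl', hexp'⟩ := h'
  ⟨fun x => l x - l' x, hl.sub hl', fun x hx => by rw [Complex.exp_sub, hexp x hx, hexp' x hx]⟩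

lemma comp {Y : Type*} [TopologicalSpace Y] {S : Set Y} {f : Y → X}
    (h : HasContinuousLogOn g A) (hf : ContinuousOn f S) (hfA : MapsTo f S A) :
    HasContinuousLogOn (fun y => g (f y)) S :=
  let ⟨l, hl, hexp⟩ := h
  ⟨fun y => l (f y), hl.comp hf hfA, fun y hy => hexp (f y) (hfA hy)⟩

lemma exists_eq_at (h : HasContinuousLogOn g A) {a : X} (ha : a ∈ A) {c : ℂ}
    (hc : Complex.exp c = g a) :
    ∃ l : X → ℂ, ContinuousOn l A ∧ (∀ x ∈ A, Complex.exp (l x) = g x) ∧ l a = c := by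
  obtain ⟨l, hl, hexp⟩ := h
  refine ⟨fun x => l x + (c - l a), hl.add continuousOn_const, fun x hx => ?_, by simp⟩
  rw [Complex.exp_add, Complex.exp_sub, hc, hexp a ha, hexp x hx, div_self, mul_one]
  exact hc ▸ Complex.exp_ne_zero c

lemma union (h : HasContinuousLogOn g A) (h' : HasContinuousLogOn g B) (hA : IsClosed A)
    (hB : IsClosed B) (hAB : IsPreconnected (A ∩ B)) : HasContinuousLogOn g (A ∪ B) := by
  classical
  obtain ⟨l, hl, hexp⟩ := h
  obtain ⟨l', hl', hexp', heq⟩ : ∃ l' : X → ℂ, ContinuousOn l' B ∧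
      (∀ x ∈ B, Complex.exp (l' x) = g x) ∧ EqOn l l' (A ∩ B) := by
    rcases (A ∩ B).eq_empty_or_nonempty with hempty | ⟨a, ha⟩
    · obtain ⟨l', hl', hexp'⟩ := h'
      exact ⟨l', hl', hexp', by simp [hempty]⟩
    · obtain ⟨l', hl', hexp', hl'a⟩ := h'.exists_eq_at ha.2 (hexp a ha.1)
      refine ⟨l', hl', hexp', eqOn_of_exp_eq_exp hAB (hl.mono inter_subset_left)
        (hl'.mono inter_subset_right) (fun x hx => ?_) ha hl'a.symm⟩
      rw [hexp x hx.1, hexp' x hx.2]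
  have hmA : EqOn (A.piecewise l l') l A := piecewise_eqOn A l l'
  have hmB : EqOn (A.piecewise l l') l' B := fun x hx => by
    by_cases hxA : x ∈ A
    · exact (hmA hxA).trans (heq ⟨hxA, hx⟩)
    · exact piecewise_eq_of_notMem A l l' hxA
  refine ⟨A.piecewise l l', (hl.congr hmA).union_of_isClosed (hl'.congr hmB) hA hB, ?_⟩
  rintro x (hx | hx)
  · rw [hmA hx, hexp x hx]
  · rw [hmB hx, hexp' x hx]

lemma of_homotopy {H : ℝ → X → ℂ} (hH : ContinuousOn (Function.uncurry H) (Icc 0 1 ×ˢ A))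
    (hne : ∀ t ∈ Icc (0 : ℝ) 1, ∀ x ∈ A, H t x ≠ 0) (h₀ : HasContinuousLogOn (H 0) A) :
    HasContinuousLogOn (H 1) A := by
  classical
  obtain ⟨l, hl, hexp⟩ := h₀
  let Hc : C(unitInterval × A, {z : ℂ // z ≠ 0}) :=
    ⟨fun p => ⟨H p.1 p.2, hne p.1 p.1.2 p.2 p.2.2⟩, Continuous.subtype_mk
      (hH.comp_continuous (f := fun p : unitInterval × A => ((p.1 : ℝ), (p.2 : X)))
        (by fun_prop) fun p => ⟨p.1.2, p.2.2⟩) _⟩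
  let lc : C(A, ℂ) := ⟨fun a => l a, hl.comp_continuous continuous_subtype_val fun a => a.2⟩
  have hlc : ∀ a, Hc (0, a) = (⟨_, (lc a).exp_ne_zero⟩ : {z : ℂ // z ≠ 0}) := fun a =>
    Subtype.ext (hexp a a.2).symm
  let G := Complex.isCoveringMap_exp.liftHomotopy Hc lc hlc
  have hG := Complex.isCoveringMap_exp.liftHomotopy_lifts Hc lc hlc
  refine ⟨fun x => if hx : x ∈ A then G (1, ⟨x, hx⟩) else 0, ?_, fun x hx => ?_⟩
  · rw [continuousOn_iff_continuous_domRestrict]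
    have hG1 : Continuous fun a : A => G (1, a) := by fun_prop
    convert hG1 using 2 with a
    simp
  · simp only [hx, dif_pos]
    exact congrArg Subtype.val (congrFun hG (1, ⟨x, hx⟩))

lemma of_convex {E : Type*} [AddCommGroup E] [Module ℝ E] [TopologicalSpace E]
    [IsTopologicalAddGroup E] [ContinuousSMul ℝ E] {S : Set E} (hS : Convex ℝ S) {q : E → ℂ}
    (hq : ContinuousOn q S) (hne : ∀ x ∈ S, q x ≠ 0) : HasContinuousLogOn q S := by
  rcases S.eq_empty_or_nonempty with rfl | ⟨x₀, hx₀⟩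
  · exact ⟨0, continuousOn_empty 0, fun x hx => hx.elim⟩
  have hmem : ∀ t ∈ Icc (0 : ℝ) 1, ∀ x ∈ S, x₀ + t • (x - x₀) ∈ S := fun t ht x hx =>
    hS.add_smul_sub_mem hx₀ hx ht
  have := of_homotopy (A := S) (H := fun t x => q (x₀ + t • (x - x₀)))
    (hq.comp (by fun_prop) fun p hp => hmem p.1 hp.1 p.2 hp.2)
    (fun t ht x hx => hne _ (hmem t ht x hx))
    ⟨fun _ => Complex.log (q x₀), continuousOn_const, fun x _ => by
      simp [Complex.exp_log (hne x₀ hx₀)]⟩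
  simpa using this

lemma sub_div_sub_of_convex {S : Set ℂ} (hS : Convex ℝ S) {p q : ℂ} (hp : p ∉ S) (hq : q ∉ S) :
    HasContinuousLogOn (fun z => (z - q) / (z - p)) S :=
  have hne : ∀ y ∉ S, ∀ z ∈ S, z - y ≠ 0 := fun _ hy _ hz =>
    sub_ne_zero.2 (ne_of_mem_of_not_mem hz hy)
  .of_convex hS (ContinuousOn.div (by fun_prop) (by fun_prop) (hne p hp))
    fun z hz => div_ne_zero (hne q hq z hz) (hne p hp z hz)

lemma sub_div_sub_of_joinedIn {S : Set ℂ} {p q : ℂ} (h : JoinedIn Sᶜ p q) :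
    HasContinuousLogOn (fun z => (z - q) / (z - p)) S := by
  obtain ⟨γ, hγ⟩ := h
  have hne : ∀ t : unitInterval, ∀ z ∈ S, z - γ t ≠ 0 := fun t z hz h =>
    hγ t (sub_eq_zero.1 h ▸ hz)
  have hnep : ∀ z ∈ S, z - p ≠ 0 := by simpa using hne 0
  have := of_homotopy (A := S) (H := fun t z => (z - γ.extend t) / (z - p))
    (ContinuousOn.div (by fun_prop) (by fun_prop) fun x hx => hnep _ hx.2)
    (fun t ht z hz => div_ne_zero (by simpa [γ.extend_apply ht] using hne ⟨t, ht⟩ z hz)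
      (hnep z hz))
    ⟨fun _ => 0, continuousOn_const, fun z hz => by simp [div_self (hnep z hz)]⟩
  simpa using this

end HasContinuousLogOn

lemma not_hasContinuousLogOn_sphere {ω : ℂ} {R : ℝ} (hR : 0 < R) :
    ¬ HasContinuousLogOn (fun z => z - ω) (sphere ω R) := by
  rintro ⟨l, hl, hexp⟩
  have hmem : ∀ θ : ℝ, circleMap ω R θ ∈ sphere ω R := circleMap_mem_sphere ω hR.le
  have hlc : Continuous fun θ : ℝ => l (circleMap ω R θ) :=
    hl.comp_continuous (continuous_circleMap ω R) hmem
  let m : ℝ → ℂ := fun θ => l (circleMap ω R 0) + θ * Complex.I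
  have hm : Continuous m := by fun_prop
  have heq : EqOn (fun θ : ℝ => l (circleMap ω R θ)) m univ := by
    refine eqOn_of_exp_eq_exp isPreconnected_univ hlc.continuousOn hm.continuousOn
      (fun θ _ => ?_) (mem_univ 0) (by simp [m])
    simp only [m, Complex.exp_add, hexp _ (hmem _)]
    simp [circleMap]
  have hper : circleMap ω R (2 * Real.pi) = circleMap ω R 0 := by
    simpa using periodic_circleMap ω R 0
  simpa [m, hper, Real.pi_ne_zero] using heq (mem_univ (2 * Real.pi))

-- A logarithm on the frontier extends by Tietze to a nonvanishing function on the plane which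
-- equals `z - ω` outside `L`; such a function has a logarithm, even on a large circle.
lemma not_hasContinuousLogOn_frontier {L : Set ℂ} (hL : Bornology.IsBounded L) {ω : ℂ}
    (hω : ω ∈ L) : ¬ HasContinuousLogOn (fun z => z - ω) (frontier L) := by
  classical
  rintro ⟨l, hl, hexp⟩
  obtain ⟨S, hS⟩ := ContinuousMap.exists_restrict_eq (isClosed_frontier (s := L))
    (⟨fun a => l a, hl.comp_continuous continuous_subtype_val fun a => a.2⟩ : C(frontier L, ℂ))
  have hSl : ∀ x ∈ frontier L, S x = l x := fun x hx => DFunLike.congr_fun hS ⟨x, hx⟩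
  let F : ℂ → ℂ := L.piecewise (fun z => Complex.exp (S z)) (fun z => z - ω)
  have hFL : ∀ z ∉ L, F z = z - ω := fun z hz => piecewise_eq_of_notMem _ _ _ hz
  have hF : Continuous F := by
    refine Continuous.piecewise (fun a ha => ?_) (by fun_prop) (by fun_prop)
    rw [hSl a ha, hexp a ha]
  have hF0 : ∀ z ∈ univ, F z ≠ 0 := by
    intro z _
    by_cases hz : z ∈ L
    · simp [F, hz]
    · exact hFL z hz ▸ sub_ne_zero.2 (ne_of_mem_of_not_mem hω hz).symm
  obtain ⟨R, hR, hLR⟩ := hL.subset_ball_lt 0 ω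
  refine not_hasContinuousLogOn_sphere hR (((HasContinuousLogOn.of_convex convex_univ
    hF.continuousOn hF0).mono (subset_univ (sphere ω R))).congr ?_)
  exact fun z hz => (hFL z fun h => (mem_ball.1 (hLR h)).ne (mem_sphere.1 hz)).symm

lemma not_hasContinuousLogOn_frontier_sub_div_sub {f : ℂ → ℂ} {L : Set ℂ}
    (hb : Bornology.IsBounded L) (hL : IsOpen L) {ω w : ℂ} (hω : ω ∈ L)
    (hs : Convex ℝ L) (hc : ContinuousOn f (closure L))
    (hd : DifferentiableAt ℂ f ω) (hd0 : deriv f ω ≠ 0)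
    (hne : ∀ ξ ∈ closure L, ξ ≠ ω → f ξ ≠ f ω) (hw : ∀ ξ ∈ closure L, f ξ ≠ w) :
    ¬ HasContinuousLogOn (fun ξ => (f ξ - f ω) / (f ξ - w)) (frontier L) := by
  intro h
  have hslope : ContinuousOn (dslope f ω) (closure L) :=
    (continuousOn_dslope (mem_of_superset (hL.mem_nhds hω) subset_closure)).2 ⟨hc, hd⟩
  have hq : HasContinuousLogOn (fun ξ => dslope f ω ξ / (f ξ - w)) (closure L) := by
    refine HasContinuousLogOn.of_convex hs.closure
      (hslope.div (hc.sub continuousOn_const) fun ξ hξ => sub_ne_zero.2 (hw ξ hξ)) fun ξ hξ =>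
        div_ne_zero ?_ (sub_ne_zero.2 (hw ξ hξ))
    rcases eq_or_ne ξ ω with rfl | hξω
    · rwa [dslope_same]
    · rw [dslope_of_ne _ hξω, slope_def_field]
      exact div_ne_zero (sub_ne_zero.2 (hne ξ hξ hξω)) (sub_ne_zero.2 hξω)
  refine not_hasContinuousLogOn_frontier hb hω
    ((h.div (hq.mono frontier_subset_closure)).congr fun ξ hξ => ?_)
  have hξω : ξ ≠ ω := fun h => disjoint_left.1 (disjoint_frontier_iff_isOpen.2 hL) hξ (h ▸ hω)
  have h1 := sub_ne_zero.2 (hw ξ (frontier_subset_closure hξ))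
  have h2 := sub_ne_zero.2 (hne ξ (frontier_subset_closure hξ) hξω)
  have h3 := sub_ne_zero.2 hξω
  simp only [dslope_of_ne _ hξω, slope_def_field]
  field_simp

-- The cut-off part is recognised by winding: `K`, the image of the crosscut and `C` together do
-- not separate `f ω` from `f p`, whereas the boundary of `U ∩ V` winds around `ω`.
lemma IsUnivalentOn.mapsTo_inter_of_crosscut {f : ℂ → ℂ} {U V K C D : Set ℂ}
    (hf : IsUnivalentOn f U) (hU : IsOpen U) (hUc : Convex ℝ U) (hUb : Bornology.IsBounded U)
    (hc : ContinuousOn f (closure U)) (hV : IsOpen V) (hVc : Convex ℝ V)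
    (hK : IsClosed K) (hfK : MapsTo f (frontier U) K) (hKd : Disjoint K (f '' U))
    (hC : IsPreconnected C) (hCK : C ⊆ K) (hD : IsClosed D) (hDc : Convex ℝ D) (hCD : C ⊆ D)
    (hend : MapsTo f (frontier U ∩ frontier V) C) (hcross : MapsTo f (closure U ∩ frontier V) D)
    {p : ℂ} (hp : p ∈ U) (hpV : p ∉ closure V) (hpD : f p ∉ D) : MapsTo f (U ∩ V) D := by
  rintro ω ⟨hωU, hωV⟩
  by_contra hω
  let B := f '' (closure U ∩ frontier V) ∪ closure C
  have hcompact : IsCompact (closure U ∩ frontier V) :=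
    hUb.isCompact_closure.inter_right isClosed_frontier
  have hBc : IsClosed B :=
    (hcompact.image_of_continuousOn (hc.mono inter_subset_left)).isClosed.union isClosed_closure
  have hBD : B ⊆ D := union_subset hcross.image_subset (closure_minimal hCD hD)
  have hKB : K ∩ B = closure C := by
    refine Subset.antisymm ?_ (subset_inter (closure_minimal hCK hK) subset_union_right)
    rintro _ ⟨hxK, ⟨ξ, ⟨hξU, hξV⟩, rfl⟩ | hx⟩
    · rcases closure_eq_self_union_frontier U ▸ hξU with hξ | hξ
      · exact (disjoint_left.1 hKd hxK (mem_image_of_mem f hξ)).elim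
      · exact subset_closure (hend ⟨hξ, hξV⟩)
    · exact hx
  have hlogK : HasContinuousLogOn (fun z => (z - f ω) / (z - f p)) K :=
    HasContinuousLogOn.sub_div_sub_of_joinedIn
      ((((hUc.isPathConnected ⟨p, hp⟩).joinedIn p hp ω hωU).map_continuousOn
        (hc.mono subset_closure)).mono hKd.subset_compl_left)
  have hlogD := HasContinuousLogOn.sub_div_sub_of_convex hDc hpD hω
  have hlog := hlogK.union (hlogD.mono hBD) hK hBc (hKB ▸ hC.closure)
  have hLU : closure (U ∩ V) ⊆ closure U := closure_mono inter_subset_left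
  refine not_hasContinuousLogOn_frontier_sub_div_sub (hUb.subset inter_subset_left)
    (hU.inter hV) ⟨hωU, hωV⟩ (hUc.inter hVc) (hc.mono hLU)
    (hf.differentiableOn.differentiableAt (hU.mem_nhds hωU)) (hf.deriv_ne_zero hU hωU)
    (fun ξ hξ => hf.apply_ne_of_mem_closure hU hc (hLU hξ) hωU)
    (fun ξ hξ => hf.apply_ne_of_mem_closure hU hc (hLU hξ) hp fun h =>
      hpV (closure_mono inter_subset_right (h ▸ hξ)))
    (hlog.comp (hc.mono (frontier_subset_closure.trans hLU)) ?_)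
  intro ξ hξ
  rcases frontier_inter_subset U V hξ with hξ | hξ
  · exact Or.inl (hfK hξ.1)
  · exact Or.inr (Or.inl (mem_image_of_mem f hξ))

section LengthArea

open MeasureTheory

lemma enorm_sub_le_lintegral_enorm_of_hasDerivAt {E : Type*} [NormedAddCommGroup E]
    [NormedSpace ℝ E] [CompleteSpace E] {G G' : ℝ → E} {a b : ℝ} (hab : a ≤ b)
    (hc : ContinuousOn G (Icc a b)) (hd : ∀ t ∈ Ioo a b, HasDerivAt G (G' t) t)
    (hc' : ContinuousOn G' (Ioo a b)) :
    ‖G b - G a‖ₑ ≤ ∫⁻ t in Ioo a b, ‖G' t‖ₑ := by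
  by_cases htop : ∫⁻ t in Ioo a b, ‖G' t‖ₑ = ⊤
  · simp only [htop, le_top]
  have hint : IntegrableOn G' (Ioo a b) :=
    ⟨hc'.aestronglyMeasurable measurableSet_Ioo, lt_top_iff_ne_top.2 htop⟩
  rw [← intervalIntegral.integral_eq_sub_of_hasDerivAt_of_le hab hc hd
      ((intervalIntegrable_iff_integrableOn_Ioo_of_le hab).2 hint),
    intervalIntegral.integral_of_le hab, integral_Ioc_eq_integral_Ioo]
  exact enorm_integral_le_lintegral_enorm G'

lemma sq_lintegral_le_measure_univ_mul_lintegral_sq {α : Type*} [MeasurableSpace α]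
    (μ : Measure α) {g : α → ENNReal} (hg : AEMeasurable g μ) :
    (∫⁻ x, g x ∂μ) ^ 2 ≤ μ univ * ∫⁻ x, g x ^ 2 ∂μ := by
  have h := ENNReal.lintegral_mul_le_Lp_mul_Lq μ Real.HolderConjugate.two_two
    (aemeasurable_const (b := 1)) hg
  simp only [Pi.mul_apply, one_mul, ENNReal.one_rpow, lintegral_const] at h
  calc (∫⁻ x, g x ∂μ) ^ 2
      ≤ (μ univ ^ (1 / 2 : ℝ) * (∫⁻ x, g x ^ (2 : ℝ) ∂μ) ^ (1 / 2 : ℝ)) ^ 2 := by gcongr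
    _ = μ univ * ∫⁻ x, g x ^ 2 ∂μ := by
      simp only [mul_pow, ← ENNReal.rpow_mul_natCast, ENNReal.rpow_two]
      norm_num

lemma enorm_sub_circleMap_sq_le {f : ℂ → ℂ} {U : Set ℂ} (hU : IsOpen U)
    (hf : DifferentiableOn ℂ f U) {c : ℂ} {ρ s t : ℝ} (hρ : 0 ≤ ρ) (hst : s ≤ t)
    (hmaps : MapsTo (circleMap c ρ) (Ioo s t) U)
    (hc : ContinuousOn (fun θ => f (circleMap c ρ θ)) (Icc s t)) :
    ‖f (circleMap c ρ t) - f (circleMap c ρ s)‖ₑ ^ 2 ≤ ENNReal.ofReal ((t - s) * ρ) *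
      ∫⁻ θ in Ioo s t, ENNReal.ofReal ρ * ‖deriv f (circleMap c ρ θ)‖ₑ ^ 2 := by
  have hderiv : ContinuousOn (fun θ => deriv f (circleMap c ρ θ)) (Ioo s t) :=
    (hf.deriv hU).continuousOn.comp (continuous_circleMap c ρ).continuousOn hmaps
  let g' : ℝ → ℂ := fun θ => deriv f (circleMap c ρ θ) * (circleMap 0 ρ θ * Complex.I)
  have hg' : ContinuousOn g' (Ioo s t) :=
    hderiv.mul ((continuous_circleMap 0 ρ).mul continuous_const).continuousOn
  have hlen := enorm_sub_le_lintegral_enorm_of_hasDerivAt hst hc (G' := g') (fun θ hθ =>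
    (hf.differentiableAt (hU.mem_nhds (hmaps hθ))).hasDerivAt.comp θ (hasDerivAt_circleMap c ρ θ))
    hg'
  have hnorm : ∀ θ, ‖g' θ‖ₑ ^ 2 =
      ENNReal.ofReal ρ * (ENNReal.ofReal ρ * ‖deriv f (circleMap c ρ θ)‖ₑ ^ 2) := fun θ => by
    have : ‖circleMap 0 ρ θ‖ₑ = ENNReal.ofReal ρ := by
      rw [← ofReal_norm, norm_circleMap_zero, abs_of_nonneg hρ]
    have hI : ‖Complex.I‖ₑ = 1 := by rw [← ofReal_norm, Complex.norm_I, ENNReal.ofReal_one]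
    simp only [g', enorm_mul, this, hI]
    ring
  calc ‖f (circleMap c ρ t) - f (circleMap c ρ s)‖ₑ ^ 2
      ≤ (∫⁻ θ in Ioo s t, ‖g' θ‖ₑ) ^ 2 := by gcongr
    _ ≤ volume (Ioo s t) * ∫⁻ θ in Ioo s t, ‖g' θ‖ₑ ^ 2 := by
      rw [← Measure.restrict_apply_univ (Ioo s t)]
      exact sq_lintegral_le_measure_univ_mul_lintegral_sq _
        (hg'.aemeasurable measurableSet_Ioo).enorm
    _ = _ := by
      simp only [hnorm]
      rw [lintegral_const_mul' _ _ ENNReal.ofReal_ne_top, ← mul_assoc, Real.volume_Ioo,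
        ENNReal.ofReal_mul (sub_nonneg.2 hst)]

lemma lintegral_circleMap_eq (c : ℂ) (g : ℂ → ENNReal) :
    ∫⁻ p in Ioi (0 : ℝ) ×ˢ Ioo (-Real.pi) Real.pi, ENNReal.ofReal p.1 * g (circleMap c p.1 p.2) =
      ∫⁻ z, g z := by
  rw [← lintegral_add_left_eq_self g c, ← Complex.lintegral_comp_polarCoord_symm]
  refine lintegral_congr fun p => ?_
  simp [circleMap, Complex.polarCoord_symm_apply, Complex.exp_mul_I]

lemma setLIntegral_Ioo_le_of_periodic {g : ℝ → ENNReal} {T : ℝ} (hg : Function.Periodic g T)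
    (hT : 0 < T) {s t : ℝ} (hst : t ≤ s + T) (a : ℝ) :
    ∫⁻ θ in Ioo s t, g θ ≤ ∫⁻ θ in Ioc a (a + T), g θ := by
  have : Fact (0 < T) := ⟨hT⟩
  calc ∫⁻ θ in Ioo s t, g θ
      ≤ ∫⁻ θ in Ioc s (s + T), g θ :=
        lintegral_mono_set (Ioo_subset_Ioc_self.trans (Ioc_subset_Ioc_right hst))
    _ = ∫⁻ θ in Ioc a (a + T), g θ :=
      (AddCircle.lintegral_preimage T s hg.lift).trans
        (AddCircle.lintegral_preimage T a hg.lift).symm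

lemma lintegral_Ioo_ofReal_inv {δ R : ℝ} (hδ : 0 < δ) (hδR : δ ≤ R) :
    ∫⁻ ρ in Ioo δ R, ENNReal.ofReal ρ⁻¹ = ENNReal.ofReal (Real.log (R / δ)) := by
  have hint : IntervalIntegrable (fun ρ : ℝ => ρ⁻¹) volume δ R :=
    intervalIntegral.intervalIntegrable_inv (fun x hx => (hδ.trans_le (uIcc_of_le hδR ▸ hx).1).ne')
      continuousOn_id
  rw [← integral_inv_of_pos hδ (hδ.trans_le hδR), intervalIntegral.integral_of_le hδR,
    integral_Ioc_eq_integral_Ioo, ofReal_integral_eq_lintegral_ofReal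
    ((intervalIntegrable_iff_integrableOn_Ioo_of_le hδR).1 hint)]
  filter_upwards [ae_restrict_mem measurableSet_Ioo] with ρ hρ
    using inv_nonneg.2 (hδ.trans hρ.1).le

lemma ofReal_sq_mul_inv_le_lintegral_circleMap {f : ℂ → ℂ} {U : Set ℂ} (hU : IsOpen U)
    (hf : DifferentiableOn ℂ f U) {c : ℂ} {ρ η s t : ℝ} (hρ : 0 < ρ) (hη : 0 ≤ η) (hst : s ≤ t)
    (hts : t ≤ s + 2 * Real.pi) (hmaps : MapsTo (circleMap c ρ) (Ioo s t) U)
    (hc : ContinuousOn (fun θ => f (circleMap c ρ θ)) (Icc s t))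
    (hdist : η ≤ dist (f (circleMap c ρ s)) (f (circleMap c ρ t))) :
    ENNReal.ofReal (η ^ 2 / (2 * Real.pi)) * ENNReal.ofReal ρ⁻¹ ≤
      ∫⁻ θ in Ioo (-Real.pi) Real.pi,
        ENNReal.ofReal ρ * U.indicator (fun z => ‖deriv f z‖ₑ ^ 2) (circleMap c ρ θ) := by
  set g : ℝ → ENNReal := fun θ =>
    ENNReal.ofReal ρ * U.indicator (fun z => ‖deriv f z‖ₑ ^ 2) (circleMap c ρ θ)
  have hg : Function.Periodic g (2 * Real.pi) := fun θ => by
    simp only [g, periodic_circleMap c ρ θ]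
  have := Real.pi_pos
  rw [show η ^ 2 / (2 * Real.pi) = (2 * Real.pi)⁻¹ * η ^ 2 by ring, ← ENNReal.ofReal_mul
    (by positivity), show (2 * Real.pi)⁻¹ * η ^ 2 * ρ⁻¹ = η ^ 2 / (2 * Real.pi * ρ) by
      field_simp, ENNReal.ofReal_div_of_pos (by positivity)]
  refine ENNReal.div_le_of_le_mul' ?_
  calc ENNReal.ofReal (η ^ 2)
      ≤ ‖f (circleMap c ρ t) - f (circleMap c ρ s)‖ₑ ^ 2 := by
        rw [← ofReal_norm, ← ENNReal.ofReal_pow (norm_nonneg _), ← dist_eq_norm, dist_comm]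
        exact ENNReal.ofReal_le_ofReal (by gcongr)
    _ ≤ ENNReal.ofReal ((t - s) * ρ) *
          ∫⁻ θ in Ioo s t, ENNReal.ofReal ρ * ‖deriv f (circleMap c ρ θ)‖ₑ ^ 2 :=
        enorm_sub_circleMap_sq_le hU hf hρ.le hst hmaps hc
    _ = ENNReal.ofReal ((t - s) * ρ) * ∫⁻ θ in Ioo s t, g θ := by
        rw [setLIntegral_congr_fun measurableSet_Ioo fun θ hθ => ?_]
        simp only [g, indicator_of_mem (hmaps hθ)]
    _ ≤ ENNReal.ofReal (2 * Real.pi * ρ) *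
          ∫⁻ θ in Ioc (-Real.pi) (-Real.pi + 2 * Real.pi), g θ := by
        refine mul_le_mul' (ENNReal.ofReal_le_ofReal ?_)
          (setLIntegral_Ioo_le_of_periodic hg Real.two_pi_pos hts _)
        gcongr
        linarith
    _ = ENNReal.ofReal (2 * Real.pi * ρ) * ∫⁻ θ in Ioo (-Real.pi) Real.pi, g θ := by
        rw [show -Real.pi + 2 * Real.pi = Real.pi by ring,
          Measure.restrict_congr_set Ioo_ae_eq_Ioc]

lemma ofReal_sq_mul_log_le_lintegral_enorm_deriv_sq {f : ℂ → ℂ} {U : Set ℂ} (hU : IsOpen U)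
    (hf : DifferentiableOn ℂ f U) {c : ℂ} {δ R η : ℝ} (hδ : 0 < δ) (hδR : δ ≤ R) (hη : 0 ≤ η)
    (harc : ∀ ρ ∈ Ioo δ R, ∃ s t, s ≤ t ∧ t ≤ s + 2 * Real.pi ∧ MapsTo (circleMap c ρ) (Ioo s t) U ∧
      ContinuousOn (fun θ => f (circleMap c ρ θ)) (Icc s t) ∧
      η ≤ dist (f (circleMap c ρ s)) (f (circleMap c ρ t))) :
    ENNReal.ofReal (η ^ 2 / (2 * Real.pi) * Real.log (R / δ)) ≤ ∫⁻ z in U, ‖deriv f z‖ₑ ^ 2 := by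
  set g : ℂ → ENNReal := U.indicator fun z => ‖deriv f z‖ₑ ^ 2
  have hg : Measurable g := ((measurable_deriv f).enorm.pow_const 2).indicator hU.measurableSet
  have hcirc : Measurable fun p : ℝ × ℝ => circleMap c p.1 p.2 := by
    simp only [circleMap]
    fun_prop
  calc ENNReal.ofReal (η ^ 2 / (2 * Real.pi) * Real.log (R / δ))
      = ∫⁻ ρ in Ioo δ R, ENNReal.ofReal (η ^ 2 / (2 * Real.pi)) * ENNReal.ofReal ρ⁻¹ := by
        rw [lintegral_const_mul' _ _ ENNReal.ofReal_ne_top, lintegral_Ioo_ofReal_inv hδ hδR,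
          ENNReal.ofReal_mul (by positivity)]
    _ ≤ ∫⁻ ρ in Ioo δ R, ∫⁻ θ in Ioo (-Real.pi) Real.pi, ENNReal.ofReal ρ * g (circleMap c ρ θ) :=
        setLIntegral_mono' measurableSet_Ioo fun ρ hρ =>
          let ⟨_, _, hst, hts, hmaps, hc, hdist⟩ := harc ρ hρ
          ofReal_sq_mul_inv_le_lintegral_circleMap hU hf (hδ.trans hρ.1) hη hst hts hmaps hc hdist
    _ = ∫⁻ p in Ioo δ R ×ˢ Ioo (-Real.pi) Real.pi,
          ENNReal.ofReal p.1 * g (circleMap c p.1 p.2) := by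
        rw [Measure.volume_eq_prod, ← Measure.prod_restrict, lintegral_prod _ (by fun_prop)]
    _ ≤ ∫⁻ p in Ioi (0 : ℝ) ×ˢ Ioo (-Real.pi) Real.pi,
          ENNReal.ofReal p.1 * g (circleMap c p.1 p.2) :=
        lintegral_mono_set (prod_mono (fun x hx => hδ.trans hx.1) Subset.rfl)
    _ = ∫⁻ z in U, ‖deriv f z‖ₑ ^ 2 := by
        rw [lintegral_circleMap_eq, lintegral_indicator hU.measurableSet]

lemma IsUnivalentOn.lintegral_enorm_deriv_sq {f : ℂ → ℂ} {U : Set ℂ} (hf : IsUnivalentOn f U)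
    (hU : IsOpen U) : ∫⁻ z in U, ‖deriv f z‖ₑ ^ 2 = volume (f '' U) := by
  rw [← lintegral_abs_det_fderiv_eq_addHaar_image volume hU.measurableSet
    (f' := fun z => (fderiv ℂ f z).restrictScalars ℝ)
    (fun z hz => ((hf.differentiableOn.differentiableAt
      (hU.mem_nhds hz)).hasFDerivAt.restrictScalars ℝ).hasFDerivWithinAt) hf.injOn]
  refine lintegral_congr fun z => ?_
  have hdet : ((fderiv ℂ f z).restrictScalars ℝ).det = ‖deriv f z‖ ^ 2 :=
    calc ((fderiv ℂ f z).restrictScalars ℝ).det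
        = LinearMap.det ((fderiv ℂ f z : ℂ →ₗ[ℂ] ℂ).restrictScalars ℝ) := rfl
      _ = ‖fderiv ℂ f z 1‖ ^ 2 := by
        rw [LinearMap.det_restrictScalars, Algebra.norm_complex_apply, LinearMap.det_ring,
          Complex.normSq_eq_norm_sq, ContinuousLinearMap.coe_coe]
      _ = ‖deriv f z‖ ^ 2 := by rw [fderiv_apply_one_eq_deriv]
  rw [hdet, abs_of_nonneg (sq_nonneg _), ENNReal.ofReal_pow (norm_nonneg _), ofReal_norm]

end LengthArea

lemma norm_circleMap_sq (c : ℂ) (ρ θ : ℝ) :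
    ‖circleMap c ρ θ‖ ^ 2 = ‖c‖ ^ 2 + ρ ^ 2 + 2 * ρ * ‖c‖ * Real.cos (θ - c.arg) := by
  have hre : ‖c‖ * Real.cos c.arg = c.re := Complex.norm_mul_cos_arg c
  have him : ‖c‖ * Real.sin c.arg = c.im := Complex.norm_mul_sin_arg c
  rw [← Complex.normSq_eq_norm_sq, ← Complex.normSq_eq_norm_sq, Real.cos_sub,
    Complex.normSq_apply, Complex.normSq_apply]
  simp only [circleMap, Complex.add_re, Complex.add_im, Complex.re_ofReal_mul,
    Complex.im_ofReal_mul, Complex.exp_ofReal_mul_I_re, Complex.exp_ofReal_mul_I_im]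
  linear_combination ρ ^ 2 * Real.sin_sq_add_cos_sq θ - 2 * ρ * Real.cos θ * hre -
    2 * ρ * Real.sin θ * him

lemma cos_lt_of_mem_Ioo_of_le_two_pi {s t θ k : ℝ} (hs : 0 ≤ s) (ht : t ≤ 2 * Real.pi)
    (hks : Real.cos s ≤ k) (hkt : Real.cos t ≤ k) (hθ : θ ∈ Ioo s t) : Real.cos θ < k := by
  rcases le_total θ Real.pi with h | h
  · exact (Real.cos_lt_cos_of_nonneg_of_le_pi hs h hθ.1).trans_le hks
  · rw [← Real.cos_two_pi_sub] at hkt ⊢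
    refine (Real.cos_lt_cos_of_nonneg_of_le_pi ?_ ?_ ?_).trans_le hkt <;> linarith [hθ.2]

lemma mapsTo_circleMap_Ioo_ball {c : ℂ} (hc : c ≠ 0) {ρ r s t : ℝ} (hρ : 0 < ρ)
    (hs : c.arg ≤ s) (ht : t ≤ c.arg + 2 * Real.pi) (hsr : circleMap c ρ s ∈ closedBall 0 r)
    (htr : circleMap c ρ t ∈ closedBall 0 r) :
    MapsTo (circleMap c ρ) (Ioo s t) (ball 0 r) := by
  intro θ hθ
  have hr : 0 ≤ r := (norm_nonneg _).trans (mem_closedBall_zero_iff.1 hsr)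
  have hpos : 0 < 2 * ρ * ‖c‖ := by positivity
  have hk : ∀ u, ‖circleMap c ρ u‖ ^ 2 ≤ r ^ 2 →
      Real.cos (u - c.arg) ≤ (r ^ 2 - ‖c‖ ^ 2 - ρ ^ 2) / (2 * ρ * ‖c‖) := fun u hu => by
    rw [norm_circleMap_sq] at hu
    rw [le_div_iff₀ hpos]
    linarith
  have hcos := cos_lt_of_mem_Ioo_of_le_two_pi (sub_nonneg.2 hs) (by linarith)
    (hk s (by gcongr; exact mem_closedBall_zero_iff.1 hsr))
    (hk t (by gcongr; exact mem_closedBall_zero_iff.1 htr))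
    (show θ - c.arg ∈ Ioo _ _ from ⟨sub_lt_sub_right hθ.1 _, sub_lt_sub_right hθ.2 _⟩)
  rw [lt_div_iff₀ hpos] at hcos
  rw [mem_ball_zero_iff]
  refine lt_of_pow_lt_pow_left₀ 2 hr ?_
  rw [norm_circleMap_sq]
  linarith

lemma exists_circleMap_arc_subset_ball {c : ℂ} (hc : c ≠ 0) {ρ r : ℝ} (hρ : 0 < ρ) {z w : ℂ}
    (hz : z ∈ closedBall 0 r ∩ sphere c ρ) (hw : w ∈ closedBall 0 r ∩ sphere c ρ) :
    ∃ s t, s ≤ t ∧ t ≤ s + 2 * Real.pi ∧ MapsTo (circleMap c ρ) (Ioo s t) (ball 0 r) ∧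
      s(circleMap c ρ s, circleMap c ρ t) = s(z, w) := by
  have hangle : ∀ x ∈ sphere c ρ, ∃ θ ∈ Ioc c.arg (c.arg + 2 * Real.pi), circleMap c ρ θ = x := by
    intro x hx
    rwa [← abs_of_pos hρ, ← range_circleMap,
      ← (periodic_circleMap c ρ).image_Ioc Real.two_pi_pos c.arg] at hx
  obtain ⟨s, hs, rfl⟩ := hangle z hz.2
  obtain ⟨t, ht, rfl⟩ := hangle w hw.2
  rcases le_total s t with h | h
  · exact ⟨s, t, h, by linarith [ht.2, hs.1],
      mapsTo_circleMap_Ioo_ball hc hρ hs.1.le ht.2 hz.1 hw.1, rfl⟩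
  · exact ⟨t, s, h, by linarith [hs.2, ht.1],
      mapsTo_circleMap_Ioo_ball hc hρ ht.1.le hs.2 hw.1 hz.1, Sym2.eq_swap⟩

lemma IsUnivalentOn.exists_crosscut {f : ℂ → ℂ} {r : ℝ} (hf : IsUnivalentOn f (ball 0 r))
    (hfc : ContinuousOn f (closedBall 0 r)) {c : ℂ} (hc : c ≠ 0) {δ R η : ℝ} (hδ : 0 < δ)
    (hδR : δ ≤ R) (hη : 0 ≤ η)
    (hvol : MeasureTheory.volume (f '' ball 0 r) <
      ENNReal.ofReal (η ^ 2 / (2 * Real.pi) * Real.log (R / δ))) :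
    ∃ ρ ∈ Ioo δ R, ∀ z ∈ closedBall 0 r ∩ sphere c ρ, ∀ w ∈ closedBall 0 r ∩ sphere c ρ,
      dist (f z) (f w) < η := by
  by_contra! hlong
  refine hvol.not_ge ?_
  rw [← hf.lintegral_enorm_deriv_sq isOpen_ball]
  refine ofReal_sq_mul_log_le_lintegral_enorm_deriv_sq (c := c) isOpen_ball hf.differentiableOn
    hδ hδR hη fun ρ hρ => ?_
  obtain ⟨z, hz, w, hw, hzw⟩ := hlong ρ hρ
  obtain ⟨s, t, hst, hts, hmaps, hends⟩ :=
    exists_circleMap_arc_subset_ball hc (hδ.trans hρ.1) hz hw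
  obtain ⟨hs, ht, hdist⟩ : circleMap c ρ s ∈ closedBall 0 r ∧ circleMap c ρ t ∈ closedBall 0 r ∧
      η ≤ dist (f (circleMap c ρ s)) (f (circleMap c ρ t)) := by
    rcases Sym2.eq_iff.1 hends with ⟨rfl, rfl⟩ | ⟨rfl, rfl⟩
    · exact ⟨hz.1, hw.1, hzw⟩
    · exact ⟨hw.1, hz.1, dist_comm (f (circleMap c ρ t)) _ ▸ hzw⟩
  have harc : MapsTo (circleMap c ρ) (Icc s t) (closedBall 0 r) := fun θ hθ => by
    rcases eq_endpoints_or_mem_Ioo_of_mem_Icc hθ with rfl | rfl | hθ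
    · exact hs
    · exact ht
    · exact ball_subset_closedBall (hmaps hθ)
  exact ⟨s, t, hst, hts, hmaps, hfc.comp (continuous_circleMap c ρ).continuousOn harc, hdist⟩

lemma exists_lt_ofReal_mul_log_div {A : ENNReal} (hA : A ≠ ⊤) {c R : ℝ} (hc : 0 < c) (hR : 0 < R) :
    ∃ δ ∈ Ioo 0 R, A < ENNReal.ofReal (c * Real.log (R / δ)) := by
  have hlim : Tendsto (fun δ : ℝ => c * Real.log (R / δ)) (𝓝[>] 0) atTop :=
    (Real.tendsto_log_atTop.comp
      (tendsto_inv_nhdsGT_zero.const_mul_atTop hR)).const_mul_atTop hc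
  obtain ⟨δ, hδA, hδ⟩ := ((hlim.eventually_gt_atTop A.toReal).and
    (Ioo_mem_nhdsGT hR)).exists
  exact ⟨δ, hδ, (ENNReal.lt_ofReal_iff_toReal_lt hA).2 hδA⟩

/-- Quantitative local connectedness of `K`: every point of `K` at distance less than `η` from
`x ∈ K` can be joined to `x` by a connected subset of `K` of radius at most `ε` around `x`. -/
def ConnectsWithin {X : Type*} [PseudoMetricSpace X] (K : Set X) (η ε : ℝ) : Prop :=
  ∀ x ∈ K, K ∩ ball x η ⊆ connectedComponentIn (K ∩ closedBall x ε) x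

lemma ConnectsWithin.mono {X : Type*} [PseudoMetricSpace X] {K : Set X} {η η' ε ε' : ℝ}
    (hK : ConnectsWithin K η ε) (hη : η' ≤ η) (hε : ε ≤ ε') : ConnectsWithin K η' ε' :=
  fun x hx => (inter_subset_inter_right K (ball_subset_ball hη)).trans <| (hK x hx).trans <|
    connectedComponentIn_mono x (inter_subset_inter_right K (closedBall_subset_closedBall hε))

lemma exists_connectsWithin {X : Type*} [PseudoMetricSpace X] {K : Set X} (hK : IsCompact K)
    [LocallyConnectedSpace K] {ε : ℝ} (hε : 0 < ε) : ∃ η > 0, ConnectsWithin K η ε := by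
  have : CompactSpace K := isCompact_iff_compactSpace.1 hK
  obtain ⟨η, hη, hleb⟩ := lebesgue_number_lemma_of_metric (s := (univ : Set K))
    (c := fun z : K => connectedComponentIn (ball z (ε / 2)) z) isCompact_univ
    (fun z => isOpen_ball.connectedComponentIn)
    (fun z _ => mem_iUnion.2 ⟨z, mem_connectedComponentIn (mem_ball_self (half_pos hε))⟩)
  refine ⟨η, hη, fun x hx y ⟨hyK, hy⟩ => ?_⟩
  obtain ⟨z, hz⟩ := hleb ⟨x, hx⟩ (mem_univ _)
  have hsub : Subtype.val '' connectedComponentIn (ball z (ε / 2)) z ⊆ K ∩ closedBall x ε := by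
    rintro _ ⟨w, hw, rfl⟩
    have hwz := connectedComponentIn_subset _ _ hw
    have hxz := connectedComponentIn_subset _ _ (hz (mem_ball_self hη))
    rw [mem_ball, Subtype.dist_eq] at hwz hxz
    exact ⟨w.2, mem_closedBall.2 (by linarith [dist_triangle_right (w : X) x z])⟩
  exact (isPreconnected_connectedComponentIn.image _
    continuous_subtype_val.continuousOn).subset_connectedComponentIn
      ⟨⟨x, hx⟩, hz (mem_ball_self hη), rfl⟩ hsub ⟨⟨y, hyK⟩, hz hy, rfl⟩

lemma ConnectsWithin.image {X : Type*} [PseudoMetricSpace X] {K : Set X} {g : X → X} {η ε τ : ℝ}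
    (hK : ConnectsWithin K η ε) (hg : ContinuousOn g K) (hτ : ∀ z ∈ K, dist (g z) z ≤ τ) :
    ConnectsWithin (g '' K) (η - 2 * τ) (ε + 2 * τ) := by
  rintro _ ⟨u, hu, rfl⟩ _ ⟨⟨v, hv, rfl⟩, hvu⟩
  have hmem : v ∈ connectedComponentIn (K ∩ closedBall u ε) u := by
    refine hK u hu ⟨hv, mem_ball.2 ?_⟩
    have := dist_triangle4_right v u (g v) (g u)
    rw [dist_comm v (g v), dist_comm u (g u)] at this
    linarith [hτ u hu, hτ v hv, mem_ball.1 hvu]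
  have hmaps : MapsTo g (K ∩ closedBall u ε) (g '' K ∩ closedBall (g u) (ε + 2 * τ)) := by
    rintro w ⟨hwK, hw⟩
    refine ⟨mem_image_of_mem g hwK, mem_closedBall.2 ?_⟩
    have := dist_triangle4_right (g w) (g u) w u
    linarith [hτ u hu, hτ w hwK, mem_closedBall.1 hw]
  exact connectedComponentIn_mono _ hmaps.image_subset
    ((hg.mono inter_subset_left).mapsTo_connectedComponentIn
      (connectedComponentIn_nonempty_iff.1 ⟨v, hmem⟩) hmem)

lemma locallyConnectedSpace_image_of_isCompact {X Y : Type*} [TopologicalSpace X]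
    [TopologicalSpace Y]
    [T2Space Y] {K : Set X} (hK : IsCompact K) [LocallyConnectedSpace K] {f : X → Y}
    (hf : ContinuousOn f K) : LocallyConnectedSpace (f '' K) := by
  have : CompactSpace K := isCompact_iff_compactSpace.1 hK
  have hcont : Continuous ((mapsTo_image f K).restrict) := hf.mapsToRestrict _
  have hq := hcont.isClosedMap.isQuotientMap hcont (surjective_mapsTo_image_restrict f K)
  exact hq.isCoinducing.locallyConnectedSpace

instance locallyConnectedSpace_sphere : LocallyConnectedSpace (sphere (0 : ℂ) 1) := by
  have : Fact (Module.finrank ℝ ℂ = 1 + 1) := ⟨Complex.finrank_real_complex⟩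
  exact ChartedSpace.locallyConnectedSpace (EuclideanSpace ℝ (Fin 1)) _

lemma nonempty_sphere_inter_sphere {ζ : ℂ} {r ρ : ℝ} (hζ : ζ ∈ sphere 0 r) (h0 : 0 ≤ ρ)
    (h2 : ρ ≤ 2 * r) : (sphere (0 : ℂ) r ∩ sphere ζ ρ).Nonempty := by
  have hconn : IsPreconnected (sphere (0 : ℂ) r) :=
    isPreconnected_sphere (Complex.rank_real_complex ▸ Cardinal.one_lt_two) 0 r
  have hneg : -ζ ∈ sphere (0 : ℂ) r := by
    simpa only [mem_sphere_zero_iff_norm, norm_neg] using hζ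
  have hdist : dist (-ζ) ζ = 2 * r := by
    rw [dist_eq_norm, show -ζ - ζ = (-2 : ℂ) * ζ by ring, norm_mul, norm_neg, Complex.norm_ofNat,
      mem_sphere_zero_iff_norm.1 hζ]
  obtain ⟨ξ, hξ, hξρ⟩ := hconn.intermediate_value hζ hneg (f := fun x => dist x ζ) (by fun_prop)
    (show ρ ∈ Icc _ _ from ⟨(dist_self ζ).symm ▸ h0, hdist.symm ▸ h2⟩)
  exact ⟨ξ, hξ, hξρ⟩

lemma IsUnivalentOn.mapsTo_closedBall_inter_ball {f : ℂ → ℂ} {r : ℝ}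
    (hf : IsUnivalentOn f (ball 0 r)) (hfc : ContinuousOn f (closedBall 0 r)) {K : Set ℂ}
    (hK : IsClosed K) (hfK : MapsTo f (sphere 0 r) K) (hKd : Disjoint K (f '' ball 0 r))
    {η ε ρ : ℝ} (hKc : ConnectsWithin K η ε) {ζ ξ₀ : ℂ} (hr : 0 < r) (hζ : ρ < dist 0 ζ)
    (hξ₀ : ξ₀ ∈ sphere 0 r ∩ sphere ζ ρ) (hξ₀d : ε < dist (f 0) (f ξ₀))
    (hcross : ∀ z ∈ closedBall 0 r ∩ sphere ζ ρ, dist (f z) (f ξ₀) < min η ε) :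
    MapsTo f (closedBall 0 r ∩ ball ζ ρ) (closedBall (f ξ₀) ε) := by
  have hfr : frontier (ball ζ ρ) ⊆ sphere ζ ρ := frontier_ball_subset_sphere
  have himage : MapsTo f (ball 0 r ∩ ball ζ ρ) (closedBall (f ξ₀) ε) := by
    refine hf.mapsTo_inter_of_crosscut isOpen_ball (convex_ball 0 r) isBounded_ball
      ((closure_ball (0 : ℂ) hr.ne').symm ▸ hfc) isOpen_ball (convex_ball ζ ρ) hK
      ((frontier_ball (0 : ℂ) hr.ne').symm ▸ hfK) hKd
      (C := connectedComponentIn (K ∩ closedBall (f ξ₀) ε) (f ξ₀))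
      isPreconnected_connectedComponentIn
      ((connectedComponentIn_subset _ _).trans inter_subset_left) isClosed_closedBall
      (convex_closedBall _ _) ((connectedComponentIn_subset _ _).trans inter_subset_right)
      ?_ ?_ (mem_ball_self hr) ?_ (fun h => hξ₀d.not_ge (mem_closedBall.1 h))
    · rw [frontier_ball (0 : ℂ) hr.ne']
      exact fun ξ hξ => hKc _ (hfK hξ₀.1) ⟨hfK hξ.1, mem_ball.2 ((hcross ξ
        ⟨sphere_subset_closedBall hξ.1, hfr hξ.2⟩).trans_le (min_le_left _ _))⟩
    · rw [closure_ball (0 : ℂ) hr.ne']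
      exact fun z hz => mem_closedBall.2 ((hcross z ⟨hz.1, hfr hz.2⟩).le.trans (min_le_right _ _))
    · exact fun h => hζ.not_ge (mem_closedBall.1 (closure_ball_subset_closedBall h))
  have hclosure : closedBall 0 r ∩ ball ζ ρ ⊆ closure (ball 0 r ∩ ball ζ ρ) := by
    rw [← closure_ball (0 : ℂ) hr.ne', inter_comm, inter_comm (ball 0 r)]
    exact isOpen_ball.inter_closure
  intro z hz
  rw [← isClosed_closedBall.closure_eq]
  exact ((hfc z hz.1).mono (inter_subset_left.trans ball_subset_closedBall)).mem_closure
    (hclosure hz) himage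

lemma IsUnivalentOn.dist_le_of_connectsWithin {f : ℂ → ℂ} {r : ℝ}
    (hf : IsUnivalentOn f (ball 0 r)) (hfc : ContinuousOn f (closedBall 0 r)) {K : Set ℂ}
    (hK : IsClosed K) (hfK : MapsTo f (sphere 0 r) K) (hKd : Disjoint K (f '' ball 0 r))
    {η ε δ : ℝ} (hKc : ConnectsWithin K η ε) (hη : 0 ≤ η) (hε : 0 ≤ ε)
    (hKε : ∀ x ∈ K, ε < dist (f 0) x) (hδ : 0 < δ) (hδr : δ ≤ r)
    (hvol : MeasureTheory.volume (f '' ball 0 r) <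
      ENNReal.ofReal (min η ε ^ 2 / (2 * Real.pi) * Real.log (r / δ)))
    {ζ z : ℂ} (hζ : ζ ∈ sphere 0 r) (hz : z ∈ closedBall 0 r) (hzζ : dist z ζ ≤ δ) :
    dist (f z) (f ζ) ≤ 2 * ε := by
  have hr : 0 < r := hδ.trans_le hδr
  obtain ⟨ρ, ⟨hδρ, hρr⟩, hcross⟩ := hf.exists_crosscut hfc (ne_of_mem_sphere hζ hr.ne') hδ hδr
    (le_min hη hε) hvol
  have hρ : 0 < ρ := hδ.trans hδρ
  obtain ⟨ξ₀, hξ₀⟩ := nonempty_sphere_inter_sphere hζ hρ.le (by linarith)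
  have hmaps := hf.mapsTo_closedBall_inter_ball hfc hK hfK hKd hKc hr
    ((mem_sphere'.1 hζ).symm ▸ hρr) hξ₀ (hKε _ (hfK hξ₀.1))
    fun w hw => hcross w hw ξ₀ ⟨sphere_subset_closedBall hξ₀.1, hξ₀.2⟩
  have hz' := mem_closedBall.1 (hmaps ⟨hz, mem_ball.2 (hzζ.trans_lt hδρ)⟩)
  have hζ' := mem_closedBall.1 (hmaps ⟨sphere_subset_closedBall hζ, mem_ball_self hρ⟩)
  linarith [dist_triangle_right (f z) (f ζ) (f ξ₀)]

section Equicontinuity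

variable {ι α β : Type*} [TopologicalSpace α] [PseudoMetricSpace β]

/-- Asymptotic equicontinuity: the family `F` is equicontinuous within `s` at `x` up to discarding,
for each precision `ε`, the indices outside a member of `l`. -/
def EventuallyEquicontinuousWithinAt (F : ι → α → β) (l : Filter ι) (s : Set α) (x : α) : Prop :=
  ∀ ε > 0, ∀ᶠ p in l ×ˢ 𝓝[s] x, dist (F p.1 p.2) (F p.1 x) < ε

lemma EventuallyEquicontinuousWithinAt.continuousWithinAt {F : ι → α → β} {l : Filter ι} [l.NeBot]
    {s : Set α} {x : α} (hF : EventuallyEquicontinuousWithinAt F l s x) {f : α → β} (hx : x ∈ s)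
    (hlim : ∀ y ∈ s, Tendsto (F · y) l (𝓝 (f y))) : ContinuousWithinAt f s x := by
  refine Metric.tendsto_nhds.2 fun ε hε => ?_
  obtain ⟨P, hP, Q, hQ, hPQ⟩ := eventually_prod_iff.1 (hF (ε / 2) (half_pos hε))
  filter_upwards [hQ, self_mem_nhdsWithin] with y hy hys
  refine (le_of_tendsto ((hlim y hys).dist (hlim x hx)) ?_).trans_lt (half_lt_self hε)
  filter_upwards [hP] with n hn using (hPQ hn hy).le

lemma tendstoLocallyUniformlyOn_of_eventuallyEquicontinuousWithinAt {F : ι → α → β} {f : α → β}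
    {l : Filter ι} {s t : Set α} (hF : ∀ x ∈ s, EventuallyEquicontinuousWithinAt F l s x)
    (hf : ContinuousOn f s) (hts : t ⊆ s) (hst : s ⊆ closure t)
    (hlim : ∀ y ∈ t, Tendsto (F · y) l (𝓝 (f y))) : TendstoLocallyUniformlyOn F f l s := by
  refine tendstoLocallyUniformlyOn_iff_forall_tendsto.2 fun x hx => ?_
  refine Metric.uniformity_basis_dist.tendsto_right_iff.2 fun ε hε => ?_
  have hε5 : 0 < ε / 5 := by positivity
  obtain ⟨P, hP, Q, hQ, hPQ⟩ := eventually_prod_iff.1 (hF x hx (ε / 5) hε5)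
  have hQf := hQ.and (Metric.tendsto_nhds.1 (hf x hx) (ε / 5) hε5)
  have hQf' := hQf.filter_mono (nhdsWithin_mono x hts)
  have : (𝓝[t] x).NeBot := mem_closure_iff_nhdsWithin_neBot.1 (hst hx)
  obtain ⟨y₀, ⟨hQy₀, hfy₀⟩, hy₀⟩ := (hQf'.and eventually_mem_nhdsWithin).exists
  have hP' := hP.and (Metric.tendsto_nhds.1 (hlim y₀ hy₀) (ε / 5) hε5)
  filter_upwards [hP'.prod_mk hQf] with ⟨n, y⟩ ⟨⟨hn, hny₀⟩, hQy, hfy⟩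
  calc dist (f y) (F n y)
      ≤ dist (f y) (f x) + dist (f y₀) (f x) + dist (F n y₀) (f y₀) +
          dist (F n y₀) (F n x) + dist (F n y) (F n x) := by
        have h1 := dist_triangle4 (f y) (f x) (f y₀) (F n y₀)
        have h2 := dist_triangle4 (f y) (F n y₀) (F n x) (F n y)
        rw [dist_comm (f x), dist_comm (f y₀) (F n y₀)] at h1
        rw [dist_comm (F n x)] at h2
        linarith
    _ < ε / 5 + ε / 5 + ε / 5 + ε / 5 + ε / 5 := by
        gcongr
        exacts [hPQ hn hQy₀, hPQ hn hQy]
    _ = ε := by ring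

end Equicontinuity

lemma eventuallyEquicontinuousWithinAt_of_norm_le {ι : Type*} {l : Filter ι} {F : ι → ℂ → ℂ}
    {U : Set ℂ} (hU : IsOpen U) (hd : ∀ᶠ n in l, DifferentiableOn ℂ (F n) U) {M : ℝ}
    (hM : ∀ᶠ n in l, ∀ z ∈ U, ‖F n z‖ ≤ M) {x : ℂ} (hx : x ∈ U) (s : Set ℂ) :
    EventuallyEquicontinuousWithinAt F l s x := by
  intro ε hε
  obtain ⟨r, hr, hrU⟩ := Metric.isOpen_iff.1 hU x hx
  have hsmall : ∀ᶠ y in 𝓝 x, 2 * M / r * dist y x < ε := by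
    refine ContinuousAt.eventually_lt (by fun_prop) continuousAt_const ?_
    simpa only [dist_self, mul_zero] using hε
  filter_upwards [(hd.and hM).prod_mk (nhdsWithin_le_nhds (hsmall.and (ball_mem_nhds x hr)))]
    with ⟨n, y⟩ ⟨⟨hdn, hMn⟩, hy, hyr⟩
  refine (Complex.dist_le_div_mul_dist_of_mapsTo_ball (hdn.mono hrU) (fun w hw => ?_) hyr).trans_lt
    hy
  rw [mem_closedBall, dist_eq_norm]
  linarith [norm_sub_le (F n w) (F n x), hMn w (hrU hw), hMn x hx]

/-- **Montel's theorem**, with ultrafilters in place of subsequences. -/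
lemma exists_tendstoLocallyUniformlyOn_of_norm_le {ι : Type*} (u : Ultrafilter ι) {F : ι → ℂ → ℂ}
    {U : Set ℂ} (hU : IsOpen U) (hd : ∀ᶠ n in u, DifferentiableOn ℂ (F n) U) {M : ℝ}
    (hM : ∀ᶠ n in u, ∀ z ∈ U, ‖F n z‖ ≤ M) : ∃ f, TendstoLocallyUniformlyOn F f u U := by
  have hlim : ∀ z ∈ U, ∃ y, Tendsto (F · z) u (𝓝 y) := fun z hz => by
    obtain ⟨y, -, hy⟩ := (isCompact_closedBall (0 : ℂ) M).ultrafilter_le_nhds (u.map (F · z)) <|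
      le_principal_iff.2 <| hM.mono fun n hn => mem_closedBall_zero_iff.2 (hn z hz)
    exact ⟨y, hy⟩
  choose! f hf using hlim
  have hF := fun x hx => eventuallyEquicontinuousWithinAt_of_norm_le hU hd hM (x := x) hx U
  exact ⟨f, tendstoLocallyUniformlyOn_of_eventuallyEquicontinuousWithinAt hF
    (fun x hx => (hF x hx).continuousWithinAt hx hf) Subset.rfl subset_closure hf⟩

lemma le_norm_of_forall_mem_sphere_le_norm {f : ℂ → ℂ} {z : ℂ} {r m : ℝ} (hr : 0 < r)
    (hf : DiffContOnCl ℂ f (ball z r)) (hne : ∀ w ∈ closedBall z r, f w ≠ 0) (hm : 0 < m)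
    (hfm : ∀ w ∈ sphere z r, m ≤ ‖f w‖) : m ≤ ‖f z‖ := by
  have hinv : ‖(f z)⁻¹‖ ≤ m⁻¹ := by
    refine Complex.norm_le_of_forall_mem_frontier_norm_le (f := f⁻¹) isBounded_ball
      (hf.inv fun w hw => hne w (closure_ball_subset_closedBall hw)) (fun w hw => ?_)
      (subset_closure (mem_ball_self hr))
    rw [Pi.inv_apply, norm_inv]
    exact inv_anti₀ hm (hfm w (frontier_ball_subset_sphere hw))
  rw [norm_inv] at hinv
  exact (inv_le_inv₀ (norm_pos_iff.2 (hne z (mem_closedBall_self hr.le))) hm).1 hinv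

/-- **Hurwitz's theorem.** -/
lemma eqOn_zero_or_forall_ne_zero_of_tendstoLocallyUniformlyOn {ι : Type*} {l : Filter ι}
    [l.NeBot] {F : ι → ℂ → ℂ} {f : ℂ → ℂ} {U : Set ℂ} (hU : IsOpen U) (hUc : IsPreconnected U)
    (hd : ∀ᶠ n in l, DifferentiableOn ℂ (F n) U) (hlim : TendstoLocallyUniformlyOn F f l U)
    (hne : ∀ᶠ n in l, ∀ z ∈ U, F n z ≠ 0) : EqOn f 0 U ∨ ∀ z ∈ U, f z ≠ 0 := by
  have hfd : DifferentiableOn ℂ f U := hlim.differentiableOn hd hU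
  have han : AnalyticOnNhd ℂ f U := hfd.analyticOnNhd hU
  refine or_iff_not_imp_left.2 fun hf0 z hz hzero => ?_
  have hiso : ∀ᶠ w in 𝓝[≠] z, f w ≠ 0 :=
    (han z hz).eventually_eq_zero_or_eventually_ne_zero.resolve_left fun h =>
      hf0 (han.eqOn_zero_of_preconnected_of_eventuallyEq_zero hUc hz h)
  obtain ⟨r, hr, hball⟩ := Metric.nhds_basis_closedBall.mem_iff.1
    (inter_mem (mem_nhdsWithin_iff_eventually.1 hiso) (hU.mem_nhds hz))
  have hrU : closedBall z r ⊆ U := fun w hw => (hball hw).2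
  obtain ⟨m, hm, hmin⟩ := (isCompact_sphere z r).exists_forall_le' (f := fun w => ‖f w‖) (a := 0)
    (hfd.continuousOn.mono (sphere_subset_closedBall.trans hrU)).norm fun w hw =>
      norm_pos_iff.2 ((hball (sphere_subset_closedBall hw)).1 (ne_of_mem_sphere hw hr.ne'))
  have hunif := Metric.tendstoUniformlyOn_iff.1
    ((tendstoLocallyUniformlyOn_iff_forall_isCompact hU).1 hlim _ hrU
      (isCompact_closedBall z r)) (m / 2) (half_pos hm)
  obtain ⟨n, hdn, hnen, hn⟩ := (hd.and (hne.and hunif)).exists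
  have hle : m / 2 ≤ ‖F n z‖ := by
    refine le_norm_of_forall_mem_sphere_le_norm hr (hdn.diffContOnCl_ball hrU)
      (fun w hw => hnen w (hrU hw)) (half_pos hm) fun w hw => ?_
    have := hn w (sphere_subset_closedBall hw)
    rw [dist_eq_norm] at this
    linarith [hmin w hw, norm_sub_norm_le (f w) (F n w)]
  have := hn z (mem_closedBall_self hr.le)
  rw [hzero, dist_zero_left] at this
  linarith

lemma subset_of_disjoint_frontier {X : Type*} [TopologicalSpace X] {s t : Set X} (hs : IsOpen s)
    (ht : IsPreconnected t) (hst : (t ∩ s).Nonempty) (hd : Disjoint t (frontier s)) : t ⊆ s := by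
  refine ht.subset_left_of_subset_union hs isClosed_closure.isOpen_compl
    (disjoint_compl_right.mono_left subset_closure) (fun y hy => ?_) hst
  by_contra h
  rw [mem_union, not_or, mem_compl_iff, not_not] at h
  exact disjoint_left.1 hd hy (hs.frontier_eq.symm ▸ ⟨h.2, h.1⟩)

section Subordination

open scoped ComplexOrder

variable {f g : ℂ → ℂ} {r : ℝ}

lemma IsUnivalentOn.exists_eqOn_comp {U V : Set ℂ} (hg : IsUnivalentOn g U) (hU : IsOpen U)
    (hf : DifferentiableOn ℂ f V) (hfg : MapsTo f V (g '' U)) :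
    ∃ k, DifferentiableOn ℂ k V ∧ MapsTo k V U ∧ EqOn (g ∘ k) f V :=
  ⟨Function.invFunOn g U ∘ f,
    (hg.differentiableOn_of_leftInvOn hU hg.injOn.leftInvOn_invFunOn).comp hf hfg,
    fun _ hz => Function.invFunOn_mem (hfg hz), fun _ hz => Function.invFunOn_eq (hfg hz)⟩

lemma IsUnivalentOn.exists_eqOn_comp_of_mapsTo_ball (hg : IsUnivalentOn g (ball 0 1)) (hr : 0 < r)
    (hf : DifferentiableOn ℂ f (ball 0 r)) (hfg : MapsTo f (ball 0 r) (g '' ball 0 1))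
    (h0 : f 0 = g 0) :
    ∃ k, DifferentiableOn ℂ k (ball 0 r) ∧ MapsTo k (ball 0 r) (closedBall (k 0) 1) ∧ k 0 = 0 ∧
      EqOn (g ∘ k) f (ball 0 r) ∧ deriv f 0 = deriv g 0 * deriv k 0 := by
  obtain ⟨k, hkd, hkm, hgk⟩ := hg.exists_eqOn_comp isOpen_ball hf hfg
  have hr0 : (0 : ℂ) ∈ ball 0 r := mem_ball_self hr
  have h10 : (0 : ℂ) ∈ ball 0 1 := mem_ball_self one_pos
  have hk0 : k 0 = 0 := hg.injOn (hkm hr0) h10 ((hgk hr0).trans h0)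
  refine ⟨k, hkd, hk0.symm ▸ hkm.mono_right ball_subset_closedBall, hk0, hgk, ?_⟩
  rw [← (hgk.eventuallyEq_of_mem (isOpen_ball.mem_nhds hr0)).deriv_eq, deriv_comp, hk0]
  · rw [hk0]
    exact hg.differentiableOn.differentiableAt (isOpen_ball.mem_nhds h10)
  · exact hkd.differentiableAt (isOpen_ball.mem_nhds hr0)

lemma IsUnivalentOn.mul_norm_deriv_le (hg : IsUnivalentOn g (ball 0 1)) (hr : 0 < r)
    (hf : DifferentiableOn ℂ f (ball 0 r)) (hfg : MapsTo f (ball 0 r) (g '' ball 0 1))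
    (h0 : f 0 = g 0) : r * ‖deriv f 0‖ ≤ ‖deriv g 0‖ := by
  obtain ⟨k, hkd, hkm, -, -, hder⟩ := hg.exists_eqOn_comp_of_mapsTo_ball hr hf hfg h0
  have hk : ‖deriv k 0‖ * r ≤ 1 :=
    (le_div_iff₀ hr).1 (Complex.norm_deriv_le_div_of_mapsTo_ball hkd hkm hr)
  calc r * ‖deriv f 0‖ = ‖deriv g 0‖ * (‖deriv k 0‖ * r) := by rw [hder, norm_mul]; ring
    _ ≤ ‖deriv g 0‖ := mul_le_of_le_one_right (norm_nonneg _) hk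

lemma IsUnivalentOn.eqOn_of_deriv_le (hg : IsUnivalentOn g (ball 0 1))
    (hf : DifferentiableOn ℂ f (ball 0 1)) (hfg : MapsTo f (ball 0 1) (g '' ball 0 1))
    (h0 : f 0 = g 0) (hpos : 0 < deriv g 0) (hle : deriv g 0 ≤ deriv f 0) :
    EqOn f g (ball 0 1) := by
  obtain ⟨k, hkd, hkm, hk0, hgk, hder⟩ := hg.exists_eqOn_comp_of_mapsTo_ball one_pos hf hfg h0
  have hk1 : 1 ≤ deriv k 0 := (le_mul_iff_one_le_right hpos).1 (hder ▸ hle)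
  have hk : deriv k 0 = 1 := by
    refine hk1.antisymm' ?_
    rw [Complex.eq_coe_norm_of_nonneg (zero_le_one.trans hk1)]
    exact_mod_cast Complex.norm_deriv_le_one_of_mapsTo_ball hkd hkm one_pos
  have hkid := Complex.affine_of_mapsTo_ball_of_norm_dslope_eq_div hkd hkm
    (mem_ball_self one_pos) (by rw [dslope_same, hk]; simp)
  intro z hz
  have hkz : k z = z := by simpa [hk0, dslope_same, hk] using hkid hz
  rw [← hgk hz, Function.comp_apply, hkz]

end Subordination

section KernelConvergence

open scoped ComplexOrder

variable {ι : Type*} {l : Filter ι} {f : ℂ → ℂ} {Ω : Set ℂ} {z₀ : ℂ} {φ ψ : ℂ → ℂ} {φn : ι → ℂ → ℂ}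
  {Ωn : ι → Set ℂ}

/-- `f` is the Riemann map of `Ω` normalized at `z₀`: it maps the unit disc conformally onto `Ω`,
with `f 0 = z₀` and `f'(0)` a positive real number. -/
structure IsRiemannMap (f : ℂ → ℂ) (Ω : Set ℂ) (z₀ : ℂ) : Prop
    extends IsUnivalentOn f (ball 0 1) where
  image_ball : f '' ball 0 1 = Ω
  apply_zero : f 0 = z₀
  exists_deriv_eq : ∃ a : ℝ, 0 < a ∧ deriv f 0 = a

/-- Convergence along `l` of the domains `Ωn` to their Carathéodory kernel `Ω` at `z₀`: compact
connected subsets of `Ω` through `z₀` are eventually contained in `Ωn`, and every frontier point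
of `Ω` is a limit of points outside `Ωn`. -/
structure TendstoKernel (Ωn : ι → Set ℂ) (l : Filter ι) (Ω : Set ℂ) (z₀ : ℂ) : Prop where
  eventually_subset : ∀ K ⊆ Ω, IsCompact K → IsConnected K → z₀ ∈ K → ∀ᶠ n in l, K ⊆ Ωn n
  exists_tendsto_notMem : ∀ p ∈ frontier Ω, ∃ c : ι → ℂ, Tendsto c l (𝓝 p) ∧ ∀ᶠ n in l, c n ∉ Ωn n

lemma TendstoKernel.mono {l' : Filter ι} (hΩ : TendstoKernel Ωn l Ω z₀) (hl : l' ≤ l) :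
    TendstoKernel Ωn l' Ω z₀ where
  eventually_subset K hK hKc hKp hzK := hl (hΩ.eventually_subset K hK hKc hKp hzK)
  exists_tendsto_notMem p hp :=
    (hΩ.exists_tendsto_notMem p hp).imp fun _ hc => ⟨hc.1.mono_left hl, hl hc.2⟩

namespace IsRiemannMap

lemma isOpen (hf : IsRiemannMap f Ω z₀) : IsOpen Ω :=
  hf.image_ball ▸ hf.isOpen_image isOpen_ball isOpen_ball Subset.rfl

lemma mem (hf : IsRiemannMap f Ω z₀) : z₀ ∈ Ω :=
  hf.image_ball ▸ hf.apply_zero ▸ mem_image_of_mem f (mem_ball_self one_pos)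

lemma deriv_pos (hf : IsRiemannMap f Ω z₀) : 0 < deriv f 0 := by
  obtain ⟨a, ha, hfa⟩ := hf.exists_deriv_eq
  exact hfa ▸ Complex.zero_lt_real.2 ha

lemma image_sphere (hf : IsRiemannMap f Ω z₀) (hfc : ContinuousOn f (closedBall 0 1)) :
    f '' sphere 0 1 = frontier Ω := by
  have hcl : closure (ball (0 : ℂ) 1) = closedBall 0 1 := closure_ball 0 one_ne_zero
  rw [← hf.image_ball, hf.frontier_image isOpen_ball isBounded_ball (hcl.symm ▸ hfc),
    frontier_ball 0 one_ne_zero]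

lemma eventually_mul_deriv_le (hφ : IsRiemannMap φ Ω z₀)
    (hφn : ∀ n, IsRiemannMap (φn n) (Ωn n) z₀) (hΩ : TendstoKernel Ωn l Ω z₀) {r : ℝ} (hr : 0 < r)
    (hr1 : r < 1) : ∀ᶠ n in l, (r : ℂ) * deriv φ 0 ≤ deriv (φn n) 0 := by
  have hsub : closedBall (0 : ℂ) r ⊆ ball 0 1 := closedBall_subset_ball hr1
  have hφc := hφ.differentiableOn.continuousOn.mono hsub
  filter_upwards [hΩ.eventually_subset (φ '' closedBall 0 r) (hφ.image_ball ▸ image_mono hsub)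
    ((isCompact_closedBall 0 r).image_of_continuousOn hφc)
    ((isConnected_closedBall hr.le).image φ hφc)
    (hφ.apply_zero ▸ mem_image_of_mem φ (mem_closedBall_self hr.le))] with n hn
  rw [← (hφn n).image_ball] at hn
  have hle := (hφn n).mul_norm_deriv_le hr
    (hφ.differentiableOn.mono (ball_subset_ball hr1.le))
    (fun z hz => hn (mem_image_of_mem φ (ball_subset_closedBall hz)))
    (hφ.apply_zero.trans (hφn n).apply_zero.symm)
  rw [Complex.eq_coe_norm_of_nonneg hφ.deriv_pos.le,
    Complex.eq_coe_norm_of_nonneg (hφn n).deriv_pos.le]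
  exact_mod_cast hle

lemma deriv_le_of_tendstoLocallyUniformlyOn [l.NeBot] (hφ : IsRiemannMap φ Ω z₀)
    (hφn : ∀ n, IsRiemannMap (φn n) (Ωn n) z₀) (hΩ : TendstoKernel Ωn l Ω z₀)
    (hψ : TendstoLocallyUniformlyOn φn ψ l (ball 0 1)) : deriv φ 0 ≤ deriv ψ 0 := by
  have hlim : Tendsto (fun n => deriv (φn n) 0) l (𝓝 (deriv ψ 0)) :=
    (hψ.deriv (Eventually.of_forall fun n => (hφn n).differentiableOn) isOpen_ball).tendsto_at
      (mem_ball_self one_pos)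
  have hr : Tendsto (fun r : ℝ => (r : ℂ) * deriv φ 0) (𝓝[<] 1) (𝓝 (deriv φ 0)) := by
    refine (Continuous.tendsto' (by fun_prop) 1 _ ?_).mono_left nhdsWithin_le_nhds
    rw [Complex.ofReal_one, one_mul]
  refine le_of_tendsto hr ?_
  filter_upwards [Ioo_mem_nhdsLT zero_lt_one] with r hr
  exact ge_of_tendsto hlim (hφ.eventually_mul_deriv_le hφn hΩ hr.1 hr.2)

lemma mapsTo_of_tendstoLocallyUniformlyOn [l.NeBot] (hΩ : IsOpen Ω) (hz₀ : z₀ ∈ Ω)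
    (hφn : ∀ n, IsRiemannMap (φn n) (Ωn n) z₀) (hK : TendstoKernel Ωn l Ω z₀)
    (hψ : TendstoLocallyUniformlyOn φn ψ l (ball 0 1)) (hψ' : deriv ψ 0 ≠ 0) :
    MapsTo ψ (ball 0 1) Ω := by
  have h0 : (0 : ℂ) ∈ ball 0 1 := mem_ball_self one_pos
  have hd := fun n => (hφn n).differentiableOn
  have hψd : DifferentiableOn ℂ ψ (ball 0 1) := hψ.differentiableOn (.of_forall hd) isOpen_ball
  have hψ0 : ψ 0 = z₀ := tendsto_nhds_unique (hψ.tendsto_at h0) <|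
    tendsto_const_nhds.congr fun n => (hφn n).apply_zero.symm
  rw [mapsTo_iff_image_subset]
  refine subset_of_disjoint_frontier hΩ
    (isPreconnected_ball.image ψ hψd.continuousOn)
    ⟨z₀, ⟨0, h0, hψ0⟩, hz₀⟩ (disjoint_left.2 ?_)
  rintro _ ⟨w, hw, rfl⟩ hwΩ
  obtain ⟨c, hc, hcΩ⟩ := hK.exists_tendsto_notMem _ hwΩ
  have hlim : TendstoLocallyUniformlyOn (fun n z => φn n z - c n) (fun z => ψ z - ψ w) l
      (ball 0 1) :=
    hψ.sub (hc.tendstoUniformlyOn_const _).tendstoLocallyUniformlyOn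
  rcases eqOn_zero_or_forall_ne_zero_of_tendstoLocallyUniformlyOn isOpen_ball
    isPreconnected_ball (.of_forall fun n => (hd n).sub_const _) hlim
    (hcΩ.mono fun n hn z hz hzc => hn <| (hφn n).image_ball ▸ ⟨z, hz, sub_eq_zero.1 hzc⟩)
    with hzero | hne
  · refine hψ' ?_
    have := (hzero.eventuallyEq_of_mem (isOpen_ball.mem_nhds h0)).deriv_eq
    simpa using this
  · exact hne w hw (sub_self _)

/-- The **Carathéodory kernel theorem** for uniformly bounded Riemann maps. -/
theorem tendstoLocallyUniformlyOn (hφ : IsRiemannMap φ Ω z₀)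
    (hφn : ∀ n, IsRiemannMap (φn n) (Ωn n) z₀) (hΩ : TendstoKernel Ωn l Ω z₀) {M : ℝ}
    (hM : ∀ᶠ n in l, ∀ z ∈ ball 0 1, ‖φn n z‖ ≤ M) :
    TendstoLocallyUniformlyOn φn φ l (ball 0 1) := by
  have hd := fun n => (hφn n).differentiableOn
  refine tendstoLocallyUniformlyOn_of_eventuallyEquicontinuousWithinAt (fun x hx =>
    eventuallyEquicontinuousWithinAt_of_norm_le isOpen_ball (.of_forall hd) hM hx _)
    hφ.differentiableOn.continuousOn Subset.rfl subset_closure fun z hz => ?_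
  refine (tendsto_iff_ultrafilter _ _ _).2 fun u hu => ?_
  have hΩu := hΩ.mono hu
  obtain ⟨ψ, hψ⟩ := exists_tendstoLocallyUniformlyOn_of_norm_le u isOpen_ball (.of_forall hd)
    (hu hM)
  have hle : deriv φ 0 ≤ deriv ψ 0 := hφ.deriv_le_of_tendstoLocallyUniformlyOn hφn hΩu hψ
  have hψΩ : MapsTo ψ (ball 0 1) Ω := mapsTo_of_tendstoLocallyUniformlyOn hφ.isOpen hφ.mem hφn hΩu
    hψ (hφ.deriv_pos.trans_le hle).ne'
  have hψ0 : ψ 0 = φ 0 := tendsto_nhds_unique (hψ.tendsto_at (mem_ball_self one_pos)) <|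
    tendsto_const_nhds.congr fun n => hφ.apply_zero.trans (hφn n).apply_zero.symm
  have heq : EqOn ψ φ (ball 0 1) :=
    hφ.eqOn_of_deriv_le (hψ.differentiableOn (.of_forall hd) isOpen_ball)
      (hφ.image_ball.symm ▸ hψΩ) hψ0 hφ.deriv_pos hle
  exact heq hz ▸ hψ.tendsto_at hz

end IsRiemannMap

end KernelConvergence

section Perturbation

variable {ι : Type*} {l : Filter ι} {h : ι → ℂ → ℂ} {γ Ω : Set ℂ} {z₀ : ℂ}

lemma eventually_connectsWithin_image (hγ : IsCompact γ) [LocallyConnectedSpace γ]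
    (hcont : ∀ n, ContinuousOn (h n) γ) (hh : TendstoUniformlyOn h id l γ) {ε : ℝ} (hε : 0 < ε) :
    ∃ η > 0, ∀ᶠ n in l, ConnectsWithin (h n '' γ) η ε := by
  obtain ⟨η, hη, hγη⟩ := exists_connectsWithin hγ (half_pos hε)
  refine ⟨η / 2, half_pos hη, ?_⟩
  filter_upwards [Metric.tendstoUniformlyOn_iff.1 hh (min (η / 4) (ε / 4)) (by positivity)]
    with n hn
  refine (hγη.image (hcont n) fun z hz => (dist_comm _ _).trans_le (hn z hz).le).mono ?_ ?_
  · linarith [min_le_left (η / 4) (ε / 4)]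
  · linarith [min_le_right (η / 4) (ε / 4)]

lemma exists_eventually_lt_dist_image (hγ : IsClosed γ) (hh : TendstoUniformlyOn h id l γ)
    (hz₀ : z₀ ∉ γ) : ∃ d > 0, ∀ᶠ n in l, ∀ x ∈ h n '' γ, d < dist z₀ x := by
  obtain ⟨d, hd, hdγ⟩ := Metric.isOpen_iff.1 hγ.isOpen_compl z₀ hz₀
  refine ⟨d / 2, half_pos hd, ?_⟩
  filter_upwards [Metric.tendstoUniformlyOn_iff.1 hh (d / 2) (half_pos hd)] with n hn
  rintro _ ⟨z, hz, rfl⟩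
  have hdz : d ≤ dist z₀ z := not_lt.1 fun hlt => hdγ (mem_ball'.2 hlt) hz
  have := hn z hz
  rw [id_eq, dist_comm] at this
  linarith [dist_triangle z₀ (h n z) z]

lemma exists_eventually_norm_image_le (hγ : Bornology.IsBounded γ)
    (hh : TendstoUniformlyOn h id l γ) : ∃ M, ∀ᶠ n in l, ∀ x ∈ h n '' γ, ‖x‖ ≤ M := by
  obtain ⟨M, hM⟩ := hγ.exists_norm_le
  refine ⟨M + 1, ?_⟩
  filter_upwards [Metric.tendstoUniformlyOn_iff.1 hh 1 one_pos] with n hn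
  rintro _ ⟨z, hz, rfl⟩
  have := hn z hz
  rw [id_eq, dist_comm, dist_eq_norm] at this
  linarith [hM z hz, norm_sub_norm_le (h n z) z]

lemma frontier_connectedComponentIn_compl_subset {X : Type*} [TopologicalSpace X]
    [LocallyConnectedSpace X] {K : Set X} (hK : IsClosed K) (x : X) :
    frontier (connectedComponentIn Kᶜ x) ⊆ K := by
  have hopen : ∀ y, IsOpen (connectedComponentIn Kᶜ y) := fun _ =>
    hK.isOpen_compl.connectedComponentIn
  intro y hy
  by_contra hyK
  rw [(hopen x).frontier_eq] at hy
  have hyy : y ∈ connectedComponentIn Kᶜ y := mem_connectedComponentIn hyK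
  obtain ⟨w, hwy, hwx⟩ := mem_closure_iff.1 hy.1 _ (hopen y) hyy
  rw [connectedComponentIn_eq hwy, ← connectedComponentIn_eq hwx] at hyy
  exact hy.2 hyy

lemma tendstoKernel_connectedComponentIn (hΩ : IsOpen Ω)
    (hh : TendstoUniformlyOn h id l (frontier Ω)) :
    TendstoKernel (fun n => connectedComponentIn (h n '' frontier Ω)ᶜ z₀) l Ω z₀ where
  eventually_subset K hKΩ hK hKconn hz₀K := by
    have hdisj : Disjoint K (frontier Ω) :=
      (disjoint_frontier_iff_isOpen.2 hΩ).symm.mono_left hKΩ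
    obtain ⟨d, hd, hdK⟩ := hdisj.exists_thickenings hK isClosed_frontier
    filter_upwards [Metric.tendstoUniformlyOn_iff.1 hh d hd] with n hn
    refine hKconn.isPreconnected.subset_connectedComponentIn hz₀K ?_
    rintro _ hx ⟨z, hz, rfl⟩
    exact disjoint_left.1 hdK (self_subset_thickening hd K hx)
      (mem_thickening_iff.2 ⟨z, hz, (dist_comm _ _).trans_lt (hn z hz)⟩)
  exists_tendsto_notMem p hp :=
    ⟨(h · p), hh.tendsto_at hp, .of_forall fun _ hn =>
      connectedComponentIn_subset _ _ hn (mem_image_of_mem _ hp)⟩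

end Perturbation

open MeasureTheory in
lemma eventuallyEquicontinuousWithinAt_of_mem_sphere {ι : Type*} {l : Filter ι} {F : ι → ℂ → ℂ}
    {K : ι → Set ℂ} {M d : ℝ} {ζ : ℂ} (hF : ∀ n, IsUnivalentOn (F n) (ball 0 1))
    (hFc : ∀ n, ContinuousOn (F n) (closedBall 0 1)) (hK : ∀ n, IsClosed (K n))
    (hFK : ∀ n, MapsTo (F n) (sphere 0 1) (K n)) (hKd : ∀ n, Disjoint (K n) (F n '' ball 0 1))
    (hKc : ∀ ε > 0, ∃ η > 0, ∀ᶠ n in l, ConnectsWithin (K n) η ε) (hd : 0 < d)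
    (hdK : ∀ᶠ n in l, ∀ x ∈ K n, d < dist (F n 0) x)
    (hM : ∀ᶠ n in l, ∀ z ∈ ball 0 1, ‖F n z‖ ≤ M) (hζ : ζ ∈ sphere 0 1) :
    EventuallyEquicontinuousWithinAt F l (closedBall 0 1) ζ := by
  intro ε hε
  set ε' := min (ε / 3) d
  have hε' : 0 < ε' := lt_min (by positivity) hd
  obtain ⟨η, hη, hKη⟩ := hKc ε' hε'
  obtain ⟨δ, ⟨hδ, hδ1⟩, hvol⟩ := exists_lt_ofReal_mul_log_div
    (measure_closedBall_lt_top (μ := volume) (x := (0 : ℂ)) (r := M)).ne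
    (show 0 < min η ε' ^ 2 / (2 * Real.pi) by positivity) one_pos
  have hnear : ∀ᶠ z in 𝓝[closedBall 0 1] ζ, z ∈ closedBall 0 1 ∧ dist z ζ ≤ δ :=
    eventually_mem_nhdsWithin.and (nhdsWithin_le_nhds (closedBall_mem_nhds ζ hδ))
  filter_upwards [(hKη.and (hdK.and hM)).prod_mk hnear] with ⟨n, z⟩ ⟨⟨hKn, hdn, hMn⟩, hz, hzζ⟩
  have hsub : F n '' ball 0 1 ⊆ closedBall 0 M :=
    image_subset_iff.2 fun w hw => mem_closedBall_zero_iff.2 (hMn w hw)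
  calc dist (F n z) (F n ζ)
      ≤ 2 * ε' := (hF n).dist_le_of_connectsWithin (hFc n) (hK n) (hFK n) (hKd n) hKn hη.le hε'.le
        (fun x hx => (min_le_right _ _).trans_lt (hdn x hx)) hδ hδ1.le
        ((measure_mono hsub).trans_lt hvol) hζ hz hzζ
    _ < ε := by linarith [min_le_left (ε / 3) d]

lemma IsRiemannMap.mapsTo_sphere {K : Set ℂ} {z₀ : ℂ} {f : ℂ → ℂ}
    (hf : IsRiemannMap f (connectedComponentIn Kᶜ z₀) z₀) (hfc : ContinuousOn f (closedBall 0 1))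
    (hK : IsClosed K) : MapsTo f (sphere 0 1) K := fun _ hz =>
  frontier_connectedComponentIn_compl_subset hK z₀ (hf.image_sphere hfc ▸ mem_image_of_mem f hz)

lemma IsRiemannMap.disjoint_image_ball {K : Set ℂ} {z₀ : ℂ} {f : ℂ → ℂ}
    (hf : IsRiemannMap f (connectedComponentIn Kᶜ z₀) z₀) : Disjoint K (f '' ball 0 1) :=
  hf.image_ball ▸ (disjoint_compl_left.mono_left (connectedComponentIn_subset _ _)).symm

theorem riemann_maps_uniform_convergence_general {ι : Type*} {l : Filter ι} {Ω : Set ℂ} {z₀ : ℂ}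
    {h : ι → ℂ → ℂ} {φ : ℂ → ℂ} {φn : ι → ℂ → ℂ} (hcont : ∀ n, ContinuousOn (h n) (frontier Ω))
    (hh : TendstoUniformlyOn h id l (frontier Ω)) (hφ : IsRiemannMap φ Ω z₀)
    (hφc : ContinuousOn φ (closedBall 0 1))
    (hφn : ∀ n, IsRiemannMap (φn n) (connectedComponentIn (h n '' frontier Ω)ᶜ z₀) z₀)
    (hφnc : ∀ n, ContinuousOn (φn n) (closedBall 0 1)) :
    TendstoUniformlyOn φn φ l (closedBall 0 1) := by
  have hγ : φ '' sphere 0 1 = frontier Ω := hφ.image_sphere hφc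
  have hφs := hφc.mono (sphere_subset_closedBall (x := (0 : ℂ)))
  have hγc : IsCompact (frontier Ω) := hγ ▸ (isCompact_sphere 0 1).image_of_continuousOn hφs
  have : LocallyConnectedSpace (frontier Ω) :=
    hγ ▸ locallyConnectedSpace_image_of_isCompact (isCompact_sphere 0 1) hφs
  have hK := fun n => (hγc.image_of_continuousOn (hcont n)).isClosed
  have hz₀ : z₀ ∉ frontier Ω :=
    disjoint_right.1 (disjoint_frontier_iff_isOpen.2 hφ.isOpen) hφ.mem
  have hmaps := fun n => (hφn n).mapsTo_sphere (hφnc n) (hK n)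
  obtain ⟨d, hd, hdK⟩ := exists_eventually_lt_dist_image hγc.isClosed hh hz₀
  obtain ⟨M, hM⟩ := exists_eventually_norm_image_le hγc.isBounded hh
  have hM' : ∀ᶠ n in l, ∀ z ∈ ball 0 1, ‖φn n z‖ ≤ M := hM.mono fun n hn z hz =>
    Complex.norm_le_of_forall_mem_frontier_norm_le isBounded_ball
      ⟨(hφn n).differentiableOn, closure_ball (0 : ℂ) one_ne_zero ▸ hφnc n⟩
      (fun w hw => hn _ (hmaps n (frontier_ball_subset_sphere hw))) (subset_closure hz)
  have hequi : ∀ x ∈ closedBall 0 1, EventuallyEquicontinuousWithinAt φn l (closedBall 0 1) x := by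
    intro x hx
    rw [← ball_union_sphere] at hx
    rcases hx with hx | hx
    · exact eventuallyEquicontinuousWithinAt_of_norm_le isOpen_ball
        (.of_forall fun n => (hφn n).differentiableOn) hM' hx _
    · exact eventuallyEquicontinuousWithinAt_of_mem_sphere (fun n => (hφn n).toIsUnivalentOn) hφnc
        hK hmaps (fun n => (hφn n).disjoint_image_ball) (fun ε =>
          eventually_connectsWithin_image hγc hcont hh) hd
        (hdK.mono fun n hn => (hφn n).apply_zero.symm ▸ hn) hM' hx
  have hloc : TendstoLocallyUniformlyOn φn φ l (ball 0 1) :=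
    hφ.tendstoLocallyUniformlyOn hφn (tendstoKernel_connectedComponentIn hφ.isOpen hh) hM'
  refine (tendstoLocallyUniformlyOn_iff_tendstoUniformlyOn_of_compact
    (isCompact_closedBall 0 1)).1 ?_
  exact tendstoLocallyUniformlyOn_of_eventuallyEquicontinuousWithinAt hequi hφc
    ball_subset_closedBall (closure_ball (0 : ℂ) one_ne_zero).ge fun z hz => hloc.tendsto_at hz

/-- Carathéodory-type continuity of Riemann maps for perturbed lemniscate domains:
if `h_n` are `δ_n`-displacements of `γ = ∂Ω` with `δ_n → 0`, then the normalized
Riemann maps of the components `Ω_n` of the complements of `h_n(γ)` containing `z₀`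
converge uniformly on the closed disc to the normalized Riemann map of `Ω`. -/
theorem riemann_maps_uniform_convergence
    (Ω : Set ℂ) (hΩ : IsLemniscateDomain Ω) (hbdd : Bornology.IsBounded Ω)
    (z₀ : ℂ) (hz₀ : z₀ ∈ Ω)
    (δ : ℕ → ℝ) (hδpos : ∀ n, 0 < δ n) (hδ : Tendsto δ atTop (𝓝 0))
    (h : ℕ → ℂ → ℂ)
    (hcont : ∀ n, ContinuousOn (h n) (frontier Ω))
    (hinj : ∀ n, Set.InjOn (h n) (frontier Ω))
    (hclose : ∀ n, ∀ z ∈ frontier Ω, dist (h n z) z < δ n)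
    (hz₀n : ∀ n, z₀ ∉ h n '' frontier Ω)
    (φ : ℂ → ℂ) (φn : ℕ → ℂ → ℂ)
    (hφc : ContinuousOn φ (closure (ball (0 : ℂ) 1)))
    (hφd : DifferentiableOn ℂ φ (ball (0 : ℂ) 1))
    (hφi : Set.InjOn φ (ball (0 : ℂ) 1))
    (hφim : φ '' ball (0 : ℂ) 1 = Ω)
    (hφ0 : φ 0 = z₀)
    (hφ' : ∃ a : ℝ, 0 < a ∧ deriv φ 0 = (a : ℂ))
    (hφnc : ∀ n, ContinuousOn (φn n) (closure (ball (0 : ℂ) 1)))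
    (hφnd : ∀ n, DifferentiableOn ℂ (φn n) (ball (0 : ℂ) 1))
    (hφni : ∀ n, Set.InjOn (φn n) (ball (0 : ℂ) 1))
    (hφnim : ∀ n, φn n '' ball (0 : ℂ) 1 = connectedComponentIn (h n '' frontier Ω)ᶜ z₀)
    (hφn0 : ∀ n, φn n 0 = z₀)
    (hφn' : ∀ n, ∃ a : ℝ, 0 < a ∧ deriv (φn n) 0 = (a : ℂ)) :
    TendstoUniformlyOn φn φ atTop (closure (ball (0 : ℂ) 1)) := by
  rw [closure_ball (0 : ℂ) one_ne_zero] at hφc hφnc ⊢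
  have hh : TendstoUniformlyOn h id atTop (frontier Ω) :=
    Metric.tendstoUniformlyOn_iff.2 fun ε hε => (hδ.eventually_lt_const hε).mono fun n hn z hz =>
      (dist_comm _ _).trans_lt ((hclose n z hz).trans hn)
  exact riemann_maps_uniform_convergence_general hcont hh ⟨⟨hφd, hφi⟩, hφim, hφ0, hφ'⟩ hφc
    (fun n => ⟨⟨hφnd n, hφni n⟩, hφnim n, hφn0 n, hφn' n⟩) hφnc

end
end
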